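/- There exists a universal constant C such that the following holds. Let (g_υ)_{υ∈ℝ^I} be a nice distribution of polynomials of degree at most d on ℝ^n that is (k,S,1)-attenuated on average for some 1 ≤ k ≤ d. Fix parameters R' ≥ 1, 0 < β' < 1, 0 < ε' ≤ 1, and assume S ≥ C·k·log(3/β')/β' and 0 ≤ λ ≤ ε'·β'^5/(C·R'²·k³·d). Then for x ∼ N(0,1)^n, except with probability at most β', the family ((g_υ)_{λ|x})_υ is (⌊k/2⌋, R', ε')-attenuated on average; i.e., E_υ[HyperVar_{R'}[((g_υ)_{λ|x})^{>⌊k/2⌋}]] ≤ ε'·E_υ[‖(g_υ)_{λ|x}‖₂²]. -/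

import Mathlib

open MeasureTheory ProbabilityTheory MvPolynomial

/-- The standard Gaussian measure `N(0,1)^n` on `ℝ^n`. -/
noncomputable def gaussianN (n : ℕ) : Measure (Fin n → ℝ) :=
  Measure.pi fun _ => gaussianReal 0 1

/-- The normalized probabilists' Hermite polynomial `h_k = H_k / √(k!)`. -/
noncomputable def hermiteFn (k : ℕ) (t : ℝ) : ℝ :=
  ((Polynomial.hermite k).map (Int.castRingHom ℝ)).eval t / Real.sqrt (Nat.factorial k)

/-- The multivariate Hermite polynomial `h_α(x) = ∏ i, h_{α i}(x i)`. -/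
noncomputable def hermiteMv {n : ℕ} (α : Fin n → ℕ) (x : Fin n → ℝ) : ℝ :=
  ∏ i, hermiteFn (α i) (x i)

/-- Hermite coefficient `f̂(α) = E_{x ∼ N(0,1)^n}[f(x)·h_α(x)]` of a function. -/
noncomputable def hermiteCoeffF {n : ℕ} (f : (Fin n → ℝ) → ℝ) (α : Fin n → ℕ) : ℝ :=
  ∫ x, f x * hermiteMv α x ∂(gaussianN n)

/-- Hermite coefficient `ĝ(α)` of a polynomial. -/
noncomputable def hermiteCoeff {n : ℕ} (g : MvPolynomial (Fin n) ℝ) (α : Fin n → ℕ) : ℝ :=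
  hermiteCoeffF (fun x => eval x g) α

/-- The squared Gaussian 2-norm `‖g‖₂² = E_{x ∼ N(0,1)^n}[g(x)²]`. -/
noncomputable def norm2sq {n : ℕ} (g : MvPolynomial (Fin n) ℝ) : ℝ :=
  ∫ x, (eval x g) ^ 2 ∂(gaussianN n)

/-- The `λ`-zoom of `g` at `x`: `g_{λ|x}(y) = g(√(1-λ)·x + √λ·y)`, as a polynomial in `y`. -/
noncomputable def zoom {n : ℕ} (g : MvPolynomial (Fin n) ℝ) (lam : ℝ) (x : Fin n → ℝ) :
    MvPolynomial (Fin n) ℝ :=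
  aeval (fun i => C (Real.sqrt (1 - lam) * x i) + C (Real.sqrt lam) * X i) g

/-- `HyperVar_R[g^{≥m}] = Σ_{|α| ≥ m} R^{2|α|}·ĝ(α)²`. -/
noncomputable def hyperVarGE {n : ℕ} (R : ℝ) (m : ℕ) (g : MvPolynomial (Fin n) ℝ) : ℝ :=
  ∑' α : Fin n → ℕ, if m ≤ ∑ i, α i then R ^ (2 * ∑ i, α i) * hermiteCoeff g α ^ 2 else 0

/-- `HyperVar_R[g] = Σ_{α ≠ 0} R^{2|α|}·ĝ(α)²`. -/
noncomputable def hyperVar {n : ℕ} (R : ℝ) (g : MvPolynomial (Fin n) ℝ) : ℝ :=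
  hyperVarGE R 1 g

/-- A nice distribution of polynomials of degree at most `d` on `ℝ^n`, indexed by
`υ ∈ ℝ^I`: each `g υ` has degree at most `d` and each coefficient of `g υ` is a
polynomial of degree at most `d` in `υ`. -/
def NiceFamily (n I d : ℕ) (g : (Fin I → ℝ) → MvPolynomial (Fin n) ℝ) : Prop :=
  (∀ υ, (g υ).totalDegree ≤ d) ∧
  ∀ m : Fin n →₀ ℕ, ∃ P : MvPolynomial (Fin I) ℝ,
    P.totalDegree ≤ d ∧ ∀ υ, coeff m (g υ) = eval υ P

/-!
The mean over `υ` of the hyper-variance of the zooms at `x` is itself a polynomial in `x`, whose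
Gaussian expectation is read off from the Hermite expansion of a zoom: on average over `x`, a zoom
redistributes the weight of level `j` binomially, keeping each of the `j` factors with probability
`λ`. Markov's inequality thus bounds the hyper-variance above level `k / 2`, in terms of the weight
of `g` at the levels up to `k` and the small weight above `k`. For the denominator it suffices to
bound the mean square of the zooms' expectations from below. Up to the small contribution of levels
above `k`, it is a polynomial in `x` of degree `2 k`, and such a polynomial is rarely much smaller
than its mean.

This anticoncentration is reached by differentiating. Following Kane, the logarithmic derivative of
a polynomial of degree `D` is of order `D` on most of a circle, and the Gaussian measure is
invariant under the rotations tracing such circles; so a polynomial is rarely much smaller than its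
gradient. After `j` steps, where `j` is a level at which the Hermite weight, suitably scaled, is
largest, the tensor of derivatives has its mass at level zero, and hypercontractivity concentrates
it around its nonzero mean.
-/

/-! ### Hermite polynomials on Gaussian space -/

section GaussianLine

variable {𝕜 : Type*} [RCLike 𝕜]

lemma integrable_pow_gaussianReal (k : ℕ) :
    Integrable (fun t : ℝ => t ^ k) (gaussianReal 0 1) :=
  (((memLp_id_gaussianReal (μ := 0) (v := 1) k).integrable_norm_pow' (p := k)).mono
    (by fun_prop) (.of_forall fun t => by simp))

lemma integrable_polynomial_eval_gaussianReal (p : Polynomial 𝕜) :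
    Integrable (fun t : ℝ => p.eval (t : 𝕜)) (gaussianReal 0 1) := by
  simp_rw [Polynomial.eval_eq_sum_range]
  refine integrable_finsetSum _ fun k _ => Integrable.const_mul ?_ _
  simpa using (integrable_pow_gaussianReal k).ofReal (𝕜 := 𝕜)

lemma integrable_gaussianPDFReal_smul {f : ℝ → 𝕜} (hf : Integrable f (gaussianReal 0 1)) :
    Integrable fun t => gaussianPDFReal 0 1 t • f t := by
  rw [gaussianReal_of_var_ne_zero _ one_ne_zero,
    integrable_withDensity_iff_integrable_smul' (measurable_gaussianPDF 0 1)
      (.of_forall fun _ => gaussianPDF_lt_top)] at hf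
  simpa [toReal_gaussianPDF] using hf

lemma hasDerivAt_gaussianPDFReal (t : ℝ) :
    HasDerivAt (gaussianPDFReal 0 1) (-t * gaussianPDFReal 0 1 t) t := by
  have hexp : HasDerivAt (fun t : ℝ => -(t - 0) ^ 2 / (2 * ((1 : NNReal) : ℝ))) (-t) t := by
    convert! (((hasDerivAt_id t).sub_const 0).pow 2).neg.div_const (2 * ((1 : NNReal) : ℝ)) using 1
    simp only [NNReal.coe_one, sub_zero, id_eq]
    ring
  rw [gaussianPDFReal_def]
  convert! hexp.exp.const_mul (√(2 * Real.pi * ((1 : NNReal) : ℝ)))⁻¹ using 1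
  ring

lemma integral_mul_eval_gaussianReal (p : Polynomial 𝕜) :
    ∫ t : ℝ, (t : 𝕜) * p.eval (t : 𝕜) ∂(gaussianReal 0 1) =
      ∫ t : ℝ, p.derivative.eval (t : 𝕜) ∂(gaussianReal 0 1) := by
  have hcast (t : ℝ) : HasDerivAt (fun t : ℝ => (t : 𝕜)) 1 t := by
    simpa using (RCLike.ofRealCLM (K := 𝕜)).hasDerivAt (x := t)
  have hpdf (t : ℝ) : HasDerivAt (fun t => -(gaussianPDFReal 0 1 t : 𝕜))
      ((t * gaussianPDFReal 0 1 t : ℝ) : 𝕜) t := by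
    simpa using! ((RCLike.ofRealCLM (K := 𝕜)).hasFDerivAt.comp_hasDerivAt t
      (hasDerivAt_gaussianPDFReal t)).neg
  have hp (t : ℝ) : HasDerivAt (fun t : ℝ => p.eval (t : 𝕜)) (p.derivative.eval (t : 𝕜)) t := by
    simpa using! (p.hasDerivAt (t : 𝕜)).scomp t (hcast t)
  have hint (q : Polynomial 𝕜) :=
    integrable_gaussianPDFReal_smul (integrable_polynomial_eval_gaussianReal q)
  have hparts := integral_mul_deriv_eq_deriv_mul_of_integrable
    (fun t _ => hp t) (fun t _ => hpdf t)
    ((hint (Polynomial.X * p)).congr (.of_forall fun t => by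
      simp only [Pi.mul_apply, Polynomial.eval_mul, Polynomial.eval_X,
        RCLike.real_smul_eq_coe_mul, RCLike.ofReal_mul]
      ring))
    ((hint p.derivative).neg.congr (.of_forall fun t => by
      simp only [Pi.mul_apply, Pi.neg_apply, RCLike.real_smul_eq_coe_mul]
      ring))
    ((hint p).neg.congr (.of_forall fun t => by
      simp only [Pi.mul_apply, Pi.neg_apply, RCLike.real_smul_eq_coe_mul]
      ring))
  rw [integral_gaussianReal_eq_integral_smul one_ne_zero,
    integral_gaussianReal_eq_integral_smul one_ne_zero]
  simp only [mul_neg, integral_neg, neg_neg, RCLike.ofReal_mul] at hparts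
  simp only [RCLike.real_smul_eq_coe_mul]
  convert! hparts using 3 <;> ring

end GaussianLine

section HermiteLine

/-- The polynomial `h_k` whose evaluation is `hermiteFn k`. -/
noncomputable def hermitePoly (k : ℕ) : Polynomial ℝ :=
  (√(k.factorial : ℝ))⁻¹ • (Polynomial.hermite k).map (Int.castRingHom ℝ)

lemma eval_hermitePoly (k : ℕ) (t : ℝ) : (hermitePoly k).eval t = hermiteFn k t := by
  simp [hermitePoly, hermiteFn, Polynomial.eval_smul, div_eq_inv_mul]

lemma hermitePoly_zero : hermitePoly 0 = 1 := by simp [hermitePoly]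

lemma derivative_hermite_succ (k : ℕ) :
    Polynomial.derivative (Polynomial.hermite (k + 1)) = (k + 1) * Polynomial.hermite k := by
  induction k with
  | zero => simp
  | succ k ih =>
    rw [Polynomial.hermite_succ (k + 1), Polynomial.derivative_sub, Polynomial.derivative_mul, ih,
      Polynomial.derivative_mul, Polynomial.hermite_succ k]
    simp
    ring

lemma sqrt_factorial_succ (k : ℕ) :
    √((k + 1).factorial : ℝ) = √(k + 1 : ℝ) * √(k.factorial : ℝ) := by
  rw [Nat.factorial_succ, ← Real.sqrt_mul (by positivity)]
  push_cast
  rfl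

lemma derivative_hermitePoly (k : ℕ) :
    Polynomial.derivative (hermitePoly k) = √(k : ℝ) • hermitePoly (k - 1) := by
  rcases k with _ | k
  · simp [hermitePoly_zero]
  have hsq : √(k + 1 : ℝ) * √(k + 1 : ℝ) = k + 1 := Real.mul_self_sqrt (by positivity)
  have hne : √(k + 1 : ℝ) ≠ 0 := by positivity
  have hmap : ((k + 1) * Polynomial.hermite k).map (Int.castRingHom ℝ) =
      (k + 1 : ℝ) • (Polynomial.hermite k).map (Int.castRingHom ℝ) := by
    simp [Polynomial.smul_eq_C_mul]
  rw [hermitePoly, hermitePoly, Polynomial.derivative_smul, Polynomial.derivative_map,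
    derivative_hermite_succ, sqrt_factorial_succ, hmap, smul_smul, smul_smul, ← hsq]
  congr 1
  push_cast
  field_simp
  simp

lemma X_mul_hermitePoly (k : ℕ) :
    Polynomial.X * hermitePoly k =
      √(k + 1 : ℝ) • hermitePoly (k + 1) + √(k : ℝ) • hermitePoly (k - 1) := by
  have hne : √(k + 1 : ℝ) ≠ 0 := by positivity
  rw [← derivative_hermitePoly, hermitePoly, hermitePoly, Polynomial.derivative_smul,
    Polynomial.derivative_map, sqrt_factorial_succ, smul_smul, Polynomial.hermite_succ,
    Polynomial.map_sub, smul_sub, mul_inv, mul_inv_cancel_left₀ hne]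
  simp

lemma sqrt_mul_integral_hermitePoly_succ_mul (k : ℕ) (p : Polynomial ℝ) :
    √(k + 1 : ℝ) * ∫ t, (hermitePoly (k + 1) * p).eval t ∂(gaussianReal 0 1) =
      ∫ t, (hermitePoly k * p.derivative).eval t ∂(gaussianReal 0 1) := by
  have hint (q : Polynomial ℝ) := integrable_polynomial_eval_gaussianReal q
  have hrec : √(k + 1 : ℝ) • (hermitePoly (k + 1) * p) =
      Polynomial.X * (hermitePoly k * p) - (hermitePoly k).derivative * p := by
    rw [← mul_assoc, X_mul_hermitePoly, derivative_hermitePoly, ← sub_mul, add_sub_cancel_right,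
      smul_mul_assoc]
  have hstein := integral_mul_eval_gaussianReal (hermitePoly k * p)
  simp only [RCLike.ofReal_real_eq_id, id_eq] at hstein hint
  calc _ = ∫ t, (Polynomial.X * (hermitePoly k * p)).eval t -
          ((hermitePoly k).derivative * p).eval t ∂(gaussianReal 0 1) := by
        simp_rw [← Polynomial.eval_sub, ← hrec, Polynomial.eval_smul, smul_eq_mul,
          integral_const_mul]
    _ = ∫ t, (hermitePoly k * p).derivative.eval t -
          ((hermitePoly k).derivative * p).eval t ∂(gaussianReal 0 1) := by
        rw [integral_sub (hint _) (hint _), integral_sub (hint _) (hint _), ← hstein]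
        simp only [Polynomial.eval_mul, Polynomial.eval_X]
    _ = _ := by simp

lemma integral_hermitePoly_mul (j k : ℕ) :
    ∫ t, (hermitePoly j * hermitePoly k).eval t ∂(gaussianReal 0 1) = if j = k then 1 else 0 := by
  have hne (m : ℕ) : √(m + 1 : ℝ) ≠ 0 := by positivity
  induction j generalizing k with
  | zero =>
    rcases k with _ | k
    · simp [hermitePoly_zero]
    · have h := sqrt_mul_integral_hermitePoly_succ_mul k (hermitePoly 0)
      simpa [derivative_hermitePoly, hne, mul_comm] using h
  | succ j ih =>
    refine mul_left_cancel₀ (hne j) ?_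
    rw [sqrt_mul_integral_hermitePoly_succ_mul, derivative_hermitePoly, mul_smul_comm]
    simp_rw [Polynomial.eval_smul, smul_eq_mul, integral_const_mul, ih]
    rcases k with _ | k
    · simp
    · by_cases h : j = k <;> simp [h]

end HermiteLine

section GaussianExpectation

variable {ι : Type*} [Fintype ι]

/-- The standard Gaussian measure on `ℝ^ι`. -/
noncomputable abbrev gaussianPi (ι : Type*) [Fintype ι] : Measure (ι → ℝ) :=
  Measure.pi fun _ => gaussianReal 0 1

lemma integrable_eval_gaussianPi (p : MvPolynomial ι ℝ) :
    Integrable (fun x => eval x p) (gaussianPi ι) := by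
  simp_rw [eval_eq']
  exact integrable_finsetSum _ fun a _ =>
    (Integrable.fintype_prod fun i => integrable_pow_gaussianReal (a i)).const_mul _

/-- The expectation of a polynomial under the standard Gaussian measure. -/
noncomputable def gaussianExp : MvPolynomial ι ℝ →ₗ[ℝ] ℝ where
  toFun p := ∫ x, eval x p ∂(gaussianPi ι)
  map_add' p q := by
    simp [integral_add (integrable_eval_gaussianPi p) (integrable_eval_gaussianPi q)]
  map_smul' c p := by simp [smul_eval, integral_const_mul]

lemma gaussianExp_apply (p : MvPolynomial ι ℝ) :
    gaussianExp p = ∫ x, eval x p ∂(gaussianPi ι) := rfl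

lemma gaussianExp_nonneg {p : MvPolynomial ι ℝ} (hp : ∀ x, 0 ≤ eval x p) : 0 ≤ gaussianExp p :=
  integral_nonneg hp

end GaussianExpectation

section MultiIndex

variable {ι : Type*} [DecidableEq ι]

lemma add_single_one_eq_update (i : ι) (α : ι → ℕ) :
    α + Pi.single i 1 = Function.update α i (α i + 1) := by
  ext j
  by_cases hj : j = i
  · subst hj; simp
  · simp [hj]

lemma sub_single_one_eq_update (i : ι) (α : ι → ℕ) :
    α - Pi.single i 1 = Function.update α i (α i - 1) := by
  ext j
  by_cases hj : j = i
  · subst hj; simp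
  · simp [hj]

lemma exists_eq_add_single_one {i : ι} {α : ι → ℕ} (h : α i ≠ 0) :
    ∃ β : ι → ℕ, α = β + Pi.single i 1 := by
  refine ⟨α - Pi.single i 1, (tsub_add_cancel_of_le fun j => ?_).symm⟩
  by_cases hj : j = i
  · subst hj; simpa [Nat.one_le_iff_ne_zero] using h
  · simp [hj]

end MultiIndex

section HermiteExpansion

lemma eval_polynomial_aeval {ι : Type*} (f : MvPolynomial ι ℝ) (p : Polynomial ℝ) (x : ι → ℝ) :
    eval x (Polynomial.aeval f p) = p.eval (eval x f) := by
  simpa using (Polynomial.aeval_algHom_apply (MvPolynomial.aeval (R := ℝ) x) f p).symm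

lemma pderiv_polynomial_aeval_X_of_ne {ι : Type*} {i j : ι} (h : j ≠ i) (p : Polynomial ℝ) :
    pderiv i (Polynomial.aeval (X j) p : MvPolynomial ι ℝ) = 0 := by
  rw [Derivation.map_aeval, pderiv_X_of_ne h, smul_zero]

variable {ι : Type*} [Fintype ι]

/-- The multivariate Hermite polynomial `h_α`, whose evaluation is `∏ i, hermiteFn (α i) (x i)`. -/
noncomputable def mvHermite (α : ι → ℕ) : MvPolynomial ι ℝ :=
  ∏ i, Polynomial.aeval (X i) (hermitePoly (α i))

lemma eval_mvHermite (α : ι → ℕ) (x : ι → ℝ) :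
    eval x (mvHermite α) = ∏ i, hermiteFn (α i) (x i) := by
  simp [mvHermite, eval_polynomial_aeval, eval_hermitePoly, map_prod]

lemma mvHermite_zero : mvHermite (0 : ι → ℕ) = 1 := by
  simp [mvHermite, hermitePoly_zero]

lemma mvHermite_update [DecidableEq ι] (i : ι) (α : ι → ℕ) (k : ℕ) :
    mvHermite (Function.update α i k) = Polynomial.aeval (X i) (hermitePoly k) *
      ∏ j ∈ Finset.univ.erase i, Polynomial.aeval (X j) (hermitePoly (α j)) := by
  rw [mvHermite, ← Finset.mul_prod_erase _ _ (Finset.mem_univ i), Function.update_self]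
  congr 1
  exact Finset.prod_congr rfl fun j hj => by rw [Function.update_of_ne (Finset.ne_of_mem_erase hj)]

/-- The Hermite coefficient `f̂(α)`, as a linear functional of the polynomial `f`. -/
noncomputable def mvHermiteCoeff (α : ι → ℕ) : MvPolynomial ι ℝ →ₗ[ℝ] ℝ :=
  gaussianExp ∘ₗ LinearMap.mulRight ℝ (mvHermite α)

lemma mvHermiteCoeff_apply (α : ι → ℕ) (f : MvPolynomial ι ℝ) :
    mvHermiteCoeff α f = gaussianExp (f * mvHermite α) := rfl

lemma mvHermite_eq_mul_prod_erase [DecidableEq ι] (i : ι) (α : ι → ℕ) :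
    mvHermite α = Polynomial.aeval (X i) (hermitePoly (α i)) *
      ∏ j ∈ Finset.univ.erase i, Polynomial.aeval (X j) (hermitePoly (α j)) := by
  rw [← mvHermite_update, Function.update_eq_self]

lemma X_mul_mvHermite [DecidableEq ι] (i : ι) (α : ι → ℕ) :
    X i * mvHermite α = √(α i + 1 : ℝ) • mvHermite (α + Pi.single i 1) +
      √(α i : ℝ) • mvHermite (α - Pi.single i 1) := by
  rw [add_single_one_eq_update, sub_single_one_eq_update, mvHermite_update, mvHermite_update,
    mvHermite_eq_mul_prod_erase i α, ← mul_assoc, ← smul_mul_assoc, ← smul_mul_assoc, ← add_mul]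
  congr 1
  simpa using congrArg (Polynomial.aeval (X i : MvPolynomial ι ℝ)) (X_mul_hermitePoly (α i))

lemma pderiv_prod_erase_aeval_X [DecidableEq ι] (i : ι) (p : ι → Polynomial ℝ) :
    pderiv i (∏ j ∈ Finset.univ.erase i, Polynomial.aeval (X j) (p j) : MvPolynomial ι ℝ) = 0 :=
  Finset.prod_induction _ (fun q : MvPolynomial ι ℝ => pderiv i q = 0)
    (fun a b ha hb => by simp [Derivation.leibniz, ha, hb]) pderiv_one fun j hj =>
      pderiv_polynomial_aeval_X_of_ne (Finset.ne_of_mem_erase hj) _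

lemma pderiv_mvHermite [DecidableEq ι] (i : ι) (α : ι → ℕ) :
    pderiv i (mvHermite α) = √(α i : ℝ) • mvHermite (α - Pi.single i 1) := by
  rw [sub_single_one_eq_update, mvHermite_update, mvHermite_eq_mul_prod_erase i α,
    Derivation.leibniz, pderiv_prod_erase_aeval_X, Derivation.map_aeval, derivative_hermitePoly]
  simp [mul_comm]

lemma mvHermiteCoeff_mvHermite (α β : ι → ℕ) :
    mvHermiteCoeff α (mvHermite β) = if β = α then 1 else 0 := by
  have hprod (x : ι → ℝ) : eval x (mvHermite β * mvHermite α) =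
      ∏ i, (hermitePoly (β i) * hermitePoly (α i)).eval (x i) := by
    simp [mvHermite, eval_polynomial_aeval, Finset.prod_mul_distrib]
  simp_rw [mvHermiteCoeff_apply, gaussianExp_apply, hprod]
  rw [integral_fintype_prod_eq_prod (fun i t => (hermitePoly (β i) * hermitePoly (α i)).eval t)]
  simp_rw [integral_hermitePoly_mul, Finset.prod_ite_zero, Finset.prod_const_one, funext_iff]
  simp

lemma span_range_mvHermite : Submodule.span ℝ (Set.range (mvHermite (ι := ι))) = ⊤ := by
  classical
  refine eq_top_iff.2 fun f _ => ?_
  induction f using MvPolynomial.induction_on with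
  | C a =>
    rw [← mul_one (C a), ← smul_eq_C_mul, ← mvHermite_zero]
    exact Submodule.smul_mem _ _ (Submodule.subset_span ⟨0, rfl⟩)
  | add p q hp hq => exact Submodule.add_mem _ (hp trivial) (hq trivial)
  | mul_X p i hp =>
    have hle : Submodule.span ℝ (Set.range (mvHermite (ι := ι))) ≤
        (Submodule.span ℝ (Set.range mvHermite)).comap (LinearMap.mulLeft ℝ (X i)) := by
      rw [Submodule.span_le]
      rintro _ ⟨α, rfl⟩
      rw [SetLike.mem_coe, Submodule.mem_comap, LinearMap.mulLeft_apply, X_mul_mvHermite]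
      exact Submodule.add_mem _ (Submodule.smul_mem _ _ (Submodule.subset_span ⟨_, rfl⟩))
        (Submodule.smul_mem _ _ (Submodule.subset_span ⟨_, rfl⟩))
    rw [mul_comm]
    exact hle (hp trivial)

lemma mvHermiteCoeff_pderiv [DecidableEq ι] (i : ι) (α : ι → ℕ) (f : MvPolynomial ι ℝ) :
    mvHermiteCoeff α (pderiv i f) = √(α i + 1 : ℝ) * mvHermiteCoeff (α + Pi.single i 1) f := by
  suffices h : mvHermiteCoeff α ∘ₗ (pderiv i).toLinearMap =
      √(α i + 1 : ℝ) • mvHermiteCoeff (α + Pi.single i 1) from LinearMap.congr_fun h f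
  refine LinearMap.ext_on_range span_range_mvHermite fun β => ?_
  simp only [LinearMap.comp_apply, Derivation.coeFn_coe, LinearMap.smul_apply, smul_eq_mul,
    pderiv_mvHermite, map_smul, mvHermiteCoeff_mvHermite]
  by_cases hβ : β i = 0
  · have hne : β ≠ α + Pi.single i 1 := by rintro rfl; simp at hβ
    simp [hβ, hne]
  · obtain ⟨γ, rfl⟩ := exists_eq_add_single_one hβ
    by_cases h : γ = α <;> simp [h]

lemma mvHermiteCoeff_monomial_eq_zero {α : ι → ℕ} {a : ι →₀ ℕ} (h : a.degree < ∑ i, α i) (c : ℝ) :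
    mvHermiteCoeff α (monomial a c) = 0 := by
  classical
  induction hk : ∑ i, α i generalizing α a c with
  | zero => omega
  | succ k ih =>
    obtain ⟨i, hi⟩ : ∃ i, α i ≠ 0 := by
      by_contra! hα
      simp [hα] at hk
    obtain ⟨β, rfl⟩ := exists_eq_add_single_one hi
    have hne : √(β i + 1 : ℝ) ≠ 0 := by positivity
    have hβ : ∑ j, β j = k := by simpa [Finset.sum_add_distrib] using hk
    refine mul_left_cancel₀ hne ?_
    rw [← mvHermiteCoeff_pderiv, pderiv_monomial, mul_zero]
    by_cases hai : a i = 0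
    · simp [hai]
    · have ha : (a - Finsupp.single i 1).degree + 1 = a.degree := by
        have hsingle : Finsupp.single i 1 ≤ a :=
          Finsupp.single_le_iff.2 (Nat.one_le_iff_ne_zero.2 hai)
        simpa using congrArg Finsupp.degree (tsub_add_cancel_of_le hsingle)
      exact ih (by omega) _ hβ

lemma mvHermiteCoeff_eq_zero_of_totalDegree_lt {α : ι → ℕ} {f : MvPolynomial ι ℝ}
    (h : f.totalDegree < ∑ i, α i) : mvHermiteCoeff α f = 0 := by
  rw [f.as_sum, map_sum]
  exact Finset.sum_eq_zero fun a ha =>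
    mvHermiteCoeff_monomial_eq_zero ((le_totalDegree ha).trans_lt h) _

/-- The multi-indices `α` with `|α| ≤ D`. -/
def multiIndicesLE (ι : Type*) [Fintype ι] [DecidableEq ι] (D : ℕ) : Finset (ι → ℕ) :=
  {α ∈ Fintype.piFinset fun _ => Finset.range (D + 1) | ∑ i, α i ≤ D}

lemma mem_multiIndicesLE [DecidableEq ι] {D : ℕ} {α : ι → ℕ} :
    α ∈ multiIndicesLE ι D ↔ ∑ i, α i ≤ D := by
  simp only [multiIndicesLE, Finset.mem_filter, Fintype.mem_piFinset, Finset.mem_range,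
    Nat.lt_succ_iff, and_iff_right_iff_imp]
  exact fun h i => (Finset.single_le_sum (fun _ _ => Nat.zero_le _) (Finset.mem_univ i)).trans h

lemma eq_sum_mvHermite [DecidableEq ι] {D : ℕ} {f : MvPolynomial ι ℝ} (hf : f.totalDegree ≤ D) :
    f = ∑ α ∈ multiIndicesLE ι D, mvHermiteCoeff α f • mvHermite α := by
  have hmem : f ∈ Submodule.span ℝ (Set.range (mvHermite (ι := ι))) := by
    rw [span_range_mvHermite]
    trivial
  obtain ⟨c, rfl⟩ := Finsupp.mem_span_range_iff_exists_finsupp.1 hmem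
  have hcoeff (α : ι → ℕ) : mvHermiteCoeff α (c.sum fun β b => b • mvHermite β) = c α := by
    simp +contextual [mvHermiteCoeff_mvHermite, Finsupp.sum]
  have hsub : c.support ⊆ multiIndicesLE ι D := fun α hα => mem_multiIndicesLE.2 <| by
    by_contra! hlt
    exact Finsupp.mem_support_iff.1 hα
      (hcoeff α ▸ mvHermiteCoeff_eq_zero_of_totalDegree_lt (hf.trans_lt hlt))
  simp_rw [hcoeff]
  exact Finsupp.sum_of_support_subset _ hsub _ (by simp)

lemma gaussianExp_sq_eq_sum [DecidableEq ι] {D : ℕ} {f : MvPolynomial ι ℝ}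
    (hf : f.totalDegree ≤ D) :
    gaussianExp (f ^ 2) = ∑ α ∈ multiIndicesLE ι D, mvHermiteCoeff α f ^ 2 := by
  have hsq : f ^ 2 = ∑ α ∈ multiIndicesLE ι D, mvHermiteCoeff α f • (f * mvHermite α) := by
    conv_lhs => rw [sq]; arg 2; rw [eq_sum_mvHermite hf]
    simp only [Finset.mul_sum, mul_smul_comm]
  simp_rw [hsq, map_sum, map_smul, smul_eq_mul, ← mvHermiteCoeff_apply, sq]

lemma hermiteCoeff_eq_mvHermiteCoeff {n : ℕ} (g : MvPolynomial (Fin n) ℝ) (α : Fin n → ℕ) :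
    hermiteCoeff g α = mvHermiteCoeff α g := by
  simp [hermiteCoeff, hermiteCoeffF, mvHermiteCoeff_apply, gaussianExp_apply, eval_mvHermite,
    hermiteMv, gaussianN]

lemma norm2sq_eq_gaussianExp {n : ℕ} (g : MvPolynomial (Fin n) ℝ) :
    norm2sq g = gaussianExp (g ^ 2) := by
  simp [norm2sq, gaussianExp_apply, gaussianN]

lemma hyperVarGE_eq_sum {n : ℕ} (R : ℝ) (m : ℕ) {D : ℕ} {g : MvPolynomial (Fin n) ℝ}
    (hg : g.totalDegree ≤ D) : hyperVarGE R m g = ∑ α ∈ multiIndicesLE (Fin n) D,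
      if m ≤ ∑ i, α i then R ^ (2 * ∑ i, α i) * mvHermiteCoeff α g ^ 2 else 0 := by
  simp_rw [hyperVarGE, hermiteCoeff_eq_mvHermiteCoeff]
  refine tsum_eq_sum fun α hα => ?_
  rw [mem_multiIndicesLE, not_le] at hα
  simp [mvHermiteCoeff_eq_zero_of_totalDegree_lt (hg.trans_lt hα)]

end HermiteExpansion

/-! ### Hypercontractivity through the Segal–Bargmann transform -/

section ComplexGaussian

open scoped ComplexConjugate

/-- The law of `x + i y` for independent standard Gaussians `x` and `y`. -/
noncomputable def complexGaussian : Measure ℂ :=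
  ((gaussianReal 0 1).prod (gaussianReal 0 1)).map Complex.equivRealProdCLM.symm

instance : IsGaussian complexGaussian := isGaussian_map_equiv _

lemma integral_complexGaussian {E : Type*} [NormedAddCommGroup E] [NormedSpace ℝ E] (F : ℂ → E) :
    ∫ z, F z ∂complexGaussian = ∫ w : ℝ × ℝ, F (w.1 + w.2 * Complex.I)
      ∂(gaussianReal 0 1).prod (gaussianReal 0 1) := by
  simp_rw [← Complex.mk_eq_add_mul_I]
  exact integral_map_equiv Complex.measurableEquivRealProd.symm F

lemma integrable_complexGaussian {F : ℂ → ℂ} (hF : Continuous F) {n : ℕ}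
    (h : ∀ z, ‖F z‖ ≤ ‖z‖ ^ n) : Integrable F complexGaussian :=
  ((IsGaussian.memLp_id complexGaussian n (by simp)).integrable_norm_pow' (p := n)).mono
    hF.aestronglyMeasurable (.of_forall fun z => by simpa using h z)

lemma integrable_prod_gaussianReal {F : ℂ → ℂ} (hF : Integrable F complexGaussian) :
    Integrable (fun w : ℝ × ℝ => F (w.1 + w.2 * Complex.I))
      ((gaussianReal 0 1).prod (gaussianReal 0 1)) := by
  simpa [Function.comp_def, Complex.mk_eq_add_mul_I] using
    (integrable_map_equiv Complex.measurableEquivRealProd.symm F).1 hF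

lemma integral_complexGaussian_eq_left {F : ℂ → ℂ} (hF : Integrable F complexGaussian) :
    ∫ z, F z ∂complexGaussian =
      ∫ x : ℝ, ∫ y : ℝ, F (x + y * Complex.I) ∂gaussianReal 0 1 ∂gaussianReal 0 1 := by
  have h := integral_prod _ (integrable_prod_gaussianReal hF)
  rw [← h, integral_complexGaussian]

lemma integral_complexGaussian_eq_right {F : ℂ → ℂ} (hF : Integrable F complexGaussian) :
    ∫ z, F z ∂complexGaussian =
      ∫ y : ℝ, ∫ x : ℝ, F (x + y * Complex.I) ∂gaussianReal 0 1 ∂gaussianReal 0 1 := by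
  have h := integral_prod_symm _ (integrable_prod_gaussianReal hF)
  rw [← h, integral_complexGaussian]

lemma integrable_pow_mul_conj_pow (a b : ℕ) :
    Integrable (fun z : ℂ => z ^ a * conj z ^ b) complexGaussian :=
  integrable_complexGaussian (by fun_prop) (n := a + b) fun z => by simp [pow_add]

lemma integrable_ofReal_mul_pow_mul_conj_pow {L : ℂ → ℝ} (hL : Continuous L)
    (h : ∀ z, |L z| ≤ ‖z‖) (a b : ℕ) :
    Integrable (fun z : ℂ => L z * (z ^ a * conj z ^ b)) complexGaussian :=
  integrable_complexGaussian (by fun_prop) (n := 1 + (a + b)) fun z => by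
    simpa [pow_add] using mul_le_mul_of_nonneg_right (h z)
      (mul_nonneg (pow_nonneg (norm_nonneg z) a) (pow_nonneg (norm_nonneg z) b))

lemma integral_re_mul_pow_mul_conj_pow (a b : ℕ) :
    ∫ z : ℂ, z.re * (z ^ a * conj z ^ b) ∂complexGaussian =
      a * ∫ z : ℂ, z ^ (a - 1) * conj z ^ b ∂complexGaussian +
        b * ∫ z : ℂ, z ^ a * conj z ^ (b - 1) ∂complexGaussian := by
  have hint₁ := (integrable_pow_mul_conj_pow (a - 1) b).const_mul (a : ℂ)
  have hint₂ := (integrable_pow_mul_conj_pow a (b - 1)).const_mul (b : ℂ)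
  have hint : Integrable (fun z : ℂ => a * (z ^ (a - 1) * conj z ^ b) +
      b * (z ^ a * conj z ^ (b - 1))) complexGaussian := hint₁.add hint₂
  rw [← integral_const_mul, ← integral_const_mul, ← integral_add hint₁ hint₂,
    integral_complexGaussian_eq_right hint, integral_complexGaussian_eq_right
      (integrable_ofReal_mul_pow_mul_conj_pow Complex.continuous_re Complex.abs_re_le_norm a b)]
  congr 1 with y
  have hstein := integral_mul_eval_gaussianReal (𝕜 := ℂ)
    ((.X + .C (y * Complex.I)) ^ a * (.X - .C (y * Complex.I)) ^ b)
  convert! hstein using 3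
  · simp [← sub_eq_add_neg]
  · simp [Polynomial.derivative_pow, ← sub_eq_add_neg]
    ring

lemma integral_im_mul_pow_mul_conj_pow (a b : ℕ) :
    ∫ z : ℂ, z.im * (z ^ a * conj z ^ b) ∂complexGaussian =
      Complex.I * (a * ∫ z : ℂ, z ^ (a - 1) * conj z ^ b ∂complexGaussian -
        b * ∫ z : ℂ, z ^ a * conj z ^ (b - 1) ∂complexGaussian) := by
  have hint₁ := (integrable_pow_mul_conj_pow (a - 1) b).const_mul (a : ℂ)
  have hint₂ := (integrable_pow_mul_conj_pow a (b - 1)).const_mul (b : ℂ)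
  have hint : Integrable (fun z : ℂ => Complex.I * (a * (z ^ (a - 1) * conj z ^ b) -
      b * (z ^ a * conj z ^ (b - 1)))) complexGaussian := (hint₁.sub hint₂).const_mul _
  rw [← integral_const_mul, ← integral_const_mul, ← integral_sub hint₁ hint₂,
    ← integral_const_mul, integral_complexGaussian_eq_left hint,
    integral_complexGaussian_eq_left
      (integrable_ofReal_mul_pow_mul_conj_pow Complex.continuous_im Complex.abs_im_le_norm a b)]
  congr 1 with x
  have hstein := integral_mul_eval_gaussianReal (𝕜 := ℂ)
    ((.C (x : ℂ) + .X * .C Complex.I) ^ a * (.C (x : ℂ) - .X * .C Complex.I) ^ b)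
  convert! hstein using 3
  · simp [← sub_eq_add_neg, mul_comm Complex.I]
  · simp [Polynomial.derivative_pow, ← sub_eq_add_neg]
    ring

lemma integral_pow_succ_mul_conj_pow (a b : ℕ) :
    ∫ z : ℂ, z ^ (a + 1) * conj z ^ b ∂complexGaussian =
      2 * b * ∫ z : ℂ, z ^ a * conj z ^ (b - 1) ∂complexGaussian := by
  have hre := integrable_ofReal_mul_pow_mul_conj_pow Complex.continuous_re
    Complex.abs_re_le_norm a b
  have him := integrable_ofReal_mul_pow_mul_conj_pow Complex.continuous_im
    Complex.abs_im_le_norm a b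
  have hsplit (z : ℂ) : z ^ (a + 1) * conj z ^ b = z.re * (z ^ a * conj z ^ b) +
      Complex.I * (z.im * (z ^ a * conj z ^ b)) := by
    rw [pow_succ]
    linear_combination -(z ^ a * conj z ^ b) * Complex.re_add_im z
  simp_rw [hsplit]
  rw [integral_add hre (him.const_mul _), integral_const_mul, integral_re_mul_pow_mul_conj_pow,
    integral_im_mul_pow_mul_conj_pow]
  linear_combination (a * ∫ z : ℂ, z ^ (a - 1) * conj z ^ b ∂complexGaussian -
    b * ∫ z : ℂ, z ^ a * conj z ^ (b - 1) ∂complexGaussian) * Complex.I_mul_I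

lemma integral_pow_mul_conj_pow (a b : ℕ) :
    ∫ z : ℂ, z ^ a * conj z ^ b ∂complexGaussian =
      if a = b then 2 ^ a * (a.factorial : ℂ) else 0 := by
  induction a generalizing b with
  | zero =>
    rcases b with _ | b
    · simp
    · have h := integral_pow_succ_mul_conj_pow b 0
      have hconj := integral_conj (μ := complexGaussian) (f := fun z : ℂ => z ^ (b + 1))
      simp_all
  | succ a ih =>
    rw [integral_pow_succ_mul_conj_pow, ih]
    rcases b with _ | b
    · simp
    · by_cases h : a = b
      · subst h
        simp [Nat.factorial_succ]
        ring
      · simp [h]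

end ComplexGaussian

section FockSpace

open Finset.HasAntidiagonal
open scoped ComplexConjugate

variable {ι : Type*} [Fintype ι]

/-- The squared norm `∑ c ^ |a| * a! * (coeff a P) ^ 2` of Fock space with scale `c`. -/
noncomputable def fockNormSq (c : ℝ) (P : MvPolynomial ι ℝ) : ℝ :=
  ∑ a ∈ P.support, c ^ a.degree * (∏ i, ((a i).factorial : ℝ)) * P.coeff a ^ 2

lemma fockNormSq_nonneg {c : ℝ} (hc : 0 ≤ c) (P : MvPolynomial ι ℝ) : 0 ≤ fockNormSq c P :=
  Finset.sum_nonneg fun _ _ => by positivity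

lemma fockNormSq_eq_sum {c : ℝ} {P : MvPolynomial ι ℝ} {s : Finset (ι →₀ ℕ)}
    (hs : P.support ⊆ s) : fockNormSq c P =
      ∑ a ∈ s, c ^ a.degree * (∏ i, ((a i).factorial : ℝ)) * P.coeff a ^ 2 :=
  Finset.sum_subset hs fun a _ ha => by simp [notMem_support_iff.1 ha]

lemma integrable_prod_pow_mul_conj_pow (a b : ι →₀ ℕ) :
    Integrable (fun z : ι → ℂ => ∏ i, (z i ^ a i * conj (z i) ^ b i))
      (Measure.pi fun _ => complexGaussian) :=
  Integrable.fintype_prod (f := fun i (z : ℂ) => z ^ a i * conj z ^ b i)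
    fun i => integrable_pow_mul_conj_pow (a i) (b i)

lemma integral_prod_pow_mul_conj_pow (a b : ι →₀ ℕ) :
    ∫ z : ι → ℂ, ∏ i, (z i ^ a i * conj (z i) ^ b i) ∂(Measure.pi fun _ => complexGaussian) =
      if a = b then 2 ^ a.degree * (∏ i, ((a i).factorial : ℂ)) else 0 := by
  rw [integral_fintype_prod_eq_prod (fun i (z : ℂ) => z ^ a i * conj z ^ b i)]
  simp_rw [integral_pow_mul_conj_pow, Finset.prod_ite_zero, Finset.mem_univ, true_imp_iff,
    ← DFunLike.ext_iff, Finset.prod_mul_distrib, Finset.prod_pow_eq_pow_sum,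
    Finsupp.degree_eq_sum]

lemma norm_aeval_sq_eq_sum (P : MvPolynomial ι ℝ) (z : ι → ℂ) :
    ((‖aeval z P‖ ^ 2 : ℝ) : ℂ) = ∑ a ∈ P.support, ∑ b ∈ P.support,
      (P.coeff a * P.coeff b : ℂ) * ∏ i, (z i ^ a i * conj (z i) ^ b i) := by
  have haeval : aeval z P = ∑ a ∈ P.support, ((P.coeff a : ℝ) : ℂ) * ∏ i, z i ^ a i := by
    simp [aeval_def, eval₂_eq']
  push_cast
  rw [← Complex.mul_conj', haeval, map_sum, Finset.sum_mul_sum]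
  refine Finset.sum_congr rfl fun a _ => Finset.sum_congr rfl fun b _ => ?_
  simp only [map_mul, map_prod, map_pow, Complex.conj_ofReal, Finset.prod_mul_distrib]
  ring

lemma integrable_norm_aeval_sq (P : MvPolynomial ι ℝ) :
    Integrable (fun z : ι → ℂ => ‖aeval z P‖ ^ 2) (Measure.pi fun _ => complexGaussian) := by
  have h : Integrable (fun z : ι → ℂ => ((‖aeval z P‖ ^ 2 : ℝ) : ℂ))
      (Measure.pi fun _ => complexGaussian) := by
    simp_rw [norm_aeval_sq_eq_sum]
    exact integrable_finsetSum _ fun a _ => integrable_finsetSum _ fun b _ =>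
      (integrable_prod_pow_mul_conj_pow a b).const_mul _
  simpa only [Complex.ofReal_re] using! h.re

lemma integral_norm_aeval_sq (P : MvPolynomial ι ℝ) :
    ∫ z : ι → ℂ, ‖aeval z P‖ ^ 2 ∂(Measure.pi fun _ => complexGaussian) = fockNormSq 2 P := by
  have hint (a b : ι →₀ ℕ) := (integrable_prod_pow_mul_conj_pow a b).const_mul
    (P.coeff a * P.coeff b : ℂ)
  refine Complex.ofReal_injective ?_
  rw [← integral_complex_ofReal]
  simp_rw [norm_aeval_sq_eq_sum]
  rw [integral_finsetSum _ fun a _ => integrable_finsetSum _ fun b _ => hint a b]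
  simp_rw [integral_finsetSum _ fun b _ => hint _ b, integral_const_mul,
    integral_prod_pow_mul_conj_pow, mul_ite, mul_zero, Finset.sum_ite_eq]
  simp only [fockNormSq]
  push_cast
  exact Finset.sum_congr rfl fun a ha => by rw [if_pos ha]; ring

lemma sum_antidiagonal_inv_prod_factorial_le [DecidableEq ι] (b : ι →₀ ℕ) :
    (∏ i, ((b i).factorial : ℝ)) * ∑ x ∈ antidiagonal b,
      ((∏ i, ((x.1 i).factorial : ℝ)) * ∏ i, ((x.2 i).factorial : ℝ))⁻¹ ≤ 2 ^ b.degree := by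
  have hchoose : ∀ x ∈ antidiagonal b, (∏ i, ((b i).factorial : ℝ)) *
      ((∏ i, ((x.1 i).factorial : ℝ)) * ∏ i, ((x.2 i).factorial : ℝ))⁻¹ =
      ∏ i, ((b i).choose (x.1 i) : ℝ) := by
    intro x hx
    rw [mem_antidiagonal] at hx
    rw [← Finset.prod_mul_distrib, ← div_eq_mul_inv, ← Finset.prod_div_distrib]
    refine Finset.prod_congr rfl fun i _ => ?_
    rw [← hx, Finsupp.add_apply, Nat.cast_add_choose]
  have hinj : Set.InjOn (fun (x : (ι →₀ ℕ) × (ι →₀ ℕ)) i => x.1 i)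
      (antidiagonal b) := by
    intro x hx y hy hxy
    have hfst : x.1 = y.1 := DFunLike.coe_injective hxy
    refine Prod.ext hfst (add_left_cancel (a := x.1) ?_)
    rw [mem_antidiagonal.1 hx, hfst, mem_antidiagonal.1 hy]
  have hpow : (2 : ℝ) ^ b.degree = ∑ a ∈ Fintype.piFinset (fun i => Finset.range (b i + 1)),
      ∏ i, ((b i).choose (a i) : ℝ) := by
    rw [← Finset.prod_univ_sum (fun i => Finset.range (b i + 1))
      (fun i j => ((b i).choose j : ℝ)), Finsupp.degree_eq_sum, ← Finset.prod_pow_eq_pow_sum]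
    exact Finset.prod_congr rfl fun i _ => by exact_mod_cast (Nat.sum_range_choose (b i)).symm
  rw [Finset.mul_sum, Finset.sum_congr rfl hchoose, hpow,
    ← Finset.sum_image (f := fun a : ι → ℕ => ∏ i, ((b i).choose (a i) : ℝ)) hinj]
  refine Finset.sum_le_sum_of_subset_of_nonneg (Finset.image_subset_iff.2 fun x hx => ?_)
    fun _ _ _ => by positivity
  rw [Fintype.mem_piFinset]
  intro i
  simpa [Nat.lt_succ_iff] using antidiagonal.fst_le hx i

lemma prod_factorial_mul_coeff_mul_sq_le [DecidableEq ι] (P Q : MvPolynomial ι ℝ) (b : ι →₀ ℕ) :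
    (∏ i, ((b i).factorial : ℝ)) * (P * Q).coeff b ^ 2 ≤ 2 ^ b.degree *
      ∑ x ∈ antidiagonal b, ((∏ i, ((x.1 i).factorial : ℝ)) * P.coeff x.1 ^ 2) *
        ((∏ i, ((x.2 i).factorial : ℝ)) * Q.coeff x.2 ^ 2) := by
  set w : (ι →₀ ℕ) → ℝ := fun a => ∏ i, ((a i).factorial : ℝ)
  have hwpos (a : ι →₀ ℕ) : 0 < w a := by positivity
  have hnonneg : 0 ≤ ∑ x ∈ antidiagonal b, (w x.1 * P.coeff x.1 ^ 2) * (w x.2 * Q.coeff x.2 ^ 2) :=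
    Finset.sum_nonneg fun x _ => by have := hwpos x.1; have := hwpos x.2; positivity
  have hcs : (P * Q).coeff b ^ 2 ≤ (∑ x ∈ antidiagonal b, (w x.1 * w x.2)⁻¹) *
      ∑ x ∈ antidiagonal b, (w x.1 * P.coeff x.1 ^ 2) * (w x.2 * Q.coeff x.2 ^ 2) := by
    rw [coeff_mul]
    refine Finset.sum_sq_le_sum_mul_sum_of_sq_le_mul _ (fun x _ => ?_) (fun x _ => ?_)
      fun x _ => le_of_eq ?_ <;> have h₁ := hwpos x.1 <;> have h₂ := hwpos x.2
    · positivity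
    · positivity
    · field_simp
  calc w b * (P * Q).coeff b ^ 2
      ≤ w b * ((∑ x ∈ antidiagonal b, (w x.1 * w x.2)⁻¹) * _) :=
        mul_le_mul_of_nonneg_left hcs (hwpos b).le
    _ ≤ _ := by
        rw [← mul_assoc]
        exact mul_le_mul_of_nonneg_right (sum_antidiagonal_inv_prod_factorial_le b) hnonneg

lemma fockNormSq_mul_le {c : ℝ} (hc : 0 ≤ c) (P Q : MvPolynomial ι ℝ) :
    fockNormSq c (P * Q) ≤ fockNormSq (2 * c) P * fockNormSq (2 * c) Q := by
  classical
  set term : MvPolynomial ι ℝ → (ι →₀ ℕ) → ℝ := fun P a =>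
    (2 * c) ^ a.degree * (∏ i, ((a i).factorial : ℝ)) * P.coeff a ^ 2 with hterm
  have hterm_nonneg (P : MvPolynomial ι ℝ) (a : ι →₀ ℕ) : 0 ≤ term P a := by positivity
  have hterm_zero {P : MvPolynomial ι ℝ} {a : ι →₀ ℕ} (ha : a ∉ P.support) : term P a = 0 := by
    simp [hterm, notMem_support_iff.1 ha]
  have hcoeff (b : ι →₀ ℕ) :
      c ^ b.degree * (∏ i, ((b i).factorial : ℝ)) * (P * Q).coeff b ^ 2 ≤
        ∑ x ∈ antidiagonal b, term P x.1 * term Q x.2 := by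
    rw [mul_assoc]
    refine (mul_le_mul_of_nonneg_left (prod_factorial_mul_coeff_mul_sq_le P Q b)
      (by positivity)).trans_eq ?_
    rw [← mul_assoc, Finset.mul_sum]
    refine Finset.sum_congr rfl fun x hx => ?_
    rw [← mem_antidiagonal.1 hx, map_add]
    ring
  have hfiber (b : ι →₀ ℕ) : ∑ x ∈ antidiagonal b, term P x.1 * term Q x.2 =
      ∑ x ∈ P.support ×ˢ Q.support with x.1 + x.2 = b, term P x.1 * term Q x.2 := by
    refine (Finset.sum_subset (fun x hx => mem_antidiagonal.2 (Finset.mem_filter.1 hx).2)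
      fun x hx hx' => ?_).symm
    by_contra! hne
    exact hx' (Finset.mem_filter.2 ⟨Finset.mem_product.2
      ⟨not_imp_comm.1 hterm_zero (left_ne_zero_of_mul hne),
        not_imp_comm.1 hterm_zero (right_ne_zero_of_mul hne)⟩, mem_antidiagonal.1 hx⟩)
  calc fockNormSq c (P * Q)
      ≤ ∑ b ∈ (P * Q).support, ∑ x ∈ P.support ×ˢ Q.support with x.1 + x.2 = b,
          term P x.1 * term Q x.2 :=
        Finset.sum_le_sum fun b _ => (hcoeff b).trans_eq (hfiber b)
    _ ≤ ∑ x ∈ P.support ×ˢ Q.support, term P x.1 * term Q x.2 :=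
        Finset.sum_fiberwise_le_sum_of_sum_fiber_nonneg fun b _ =>
          Finset.sum_nonneg fun x _ => mul_nonneg (hterm_nonneg _ _) (hterm_nonneg _ _)
    _ = _ := by rw [Finset.sum_product, ← Finset.sum_mul_sum, fockNormSq, fockNormSq]

lemma fockNormSq_pow_le {c : ℝ} (hc : 0 ≤ c) (P : MvPolynomial ι ℝ) (s : ℕ) :
    fockNormSq c (P ^ 2 ^ s) ≤ fockNormSq (2 ^ s * c) P ^ 2 ^ s := by
  induction s generalizing c with
  | zero => simp
  | succ s ih =>
    calc fockNormSq c (P ^ 2 ^ (s + 1)) = fockNormSq c (P ^ 2 ^ s * P ^ 2 ^ s) := by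
          rw [← pow_add, pow_succ, mul_two]
      _ ≤ fockNormSq (2 * c) (P ^ 2 ^ s) ^ 2 := by
          rw [sq]
          exact fockNormSq_mul_le hc _ _
      _ ≤ (fockNormSq (2 ^ s * (2 * c)) P ^ 2 ^ s) ^ 2 :=
          pow_le_pow_left₀ (fockNormSq_nonneg (by positivity) _) (ih (by positivity)) 2
      _ = _ := by rw [← pow_mul, ← mul_assoc, ← pow_succ, ← pow_succ]

end FockSpace

section Wick

lemma integrable_add_mul_I_pow (x : ℝ) (k : ℕ) :
    Integrable (fun y : ℝ => (x + y * Complex.I) ^ k) (gaussianReal 0 1) := by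
  simpa [mul_comm Complex.I] using integrable_polynomial_eval_gaussianReal
    ((.C (x : ℂ) + .X * .C Complex.I : Polynomial ℂ) ^ k)

lemma integral_add_mul_I_pow_add_two (x : ℝ) (k : ℕ) :
    ∫ y : ℝ, (x + y * Complex.I) ^ (k + 2) ∂(gaussianReal 0 1) =
      x * ∫ y : ℝ, (x + y * Complex.I) ^ (k + 1) ∂(gaussianReal 0 1) -
        (k + 1) * ∫ y : ℝ, (x + y * Complex.I) ^ k ∂(gaussianReal 0 1) := by
  have hstein : ∫ y : ℝ, y * (x + y * Complex.I) ^ (k + 1) ∂(gaussianReal 0 1) =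
      (k + 1) * Complex.I * ∫ y : ℝ, (x + y * Complex.I) ^ k ∂(gaussianReal 0 1) := by
    have h := integral_mul_eval_gaussianReal
      ((.C (x : ℂ) + .X * .C Complex.I : Polynomial ℂ) ^ (k + 1))
    rw [← integral_const_mul]
    simp only [Polynomial.derivative_pow_succ, Polynomial.derivative_add, Polynomial.derivative_C,
      Polynomial.derivative_mul, Polynomial.derivative_X] at h
    simpa [mul_comm Complex.I, mul_right_comm] using h
  have hint : Integrable (fun y : ℝ => y * (x + y * Complex.I) ^ (k + 1)) (gaussianReal 0 1) := by
    simpa [mul_comm Complex.I] using integrable_polynomial_eval_gaussianReal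
      (.X * (.C (x : ℂ) + .X * .C Complex.I) ^ (k + 1) : Polynomial ℂ)
  calc ∫ y : ℝ, (x + y * Complex.I) ^ (k + 2) ∂(gaussianReal 0 1)
      = ∫ y : ℝ, x * (x + y * Complex.I) ^ (k + 1) +
          Complex.I * (y * (x + y * Complex.I) ^ (k + 1)) ∂(gaussianReal 0 1) := by
        congr 1 with y
        ring
    _ = _ := by
        rw [integral_add ((integrable_add_mul_I_pow x _).const_mul _) (hint.const_mul _),
          integral_const_mul, integral_const_mul, hstein]
        linear_combination (k + 1) * (∫ y : ℝ, (x + y * Complex.I) ^ k ∂(gaussianReal 0 1)) *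
          Complex.I_mul_I

lemma integral_add_mul_I_pow (x : ℝ) (k : ℕ) :
    ∫ y : ℝ, (x + y * Complex.I) ^ k ∂(gaussianReal 0 1) =
      (√(k.factorial : ℝ) * hermiteFn k x : ℝ) := by
  have hH (k : ℕ) : √(k.factorial : ℝ) * hermiteFn k x =
      ((Polynomial.hermite k).map (Int.castRingHom ℝ)).eval x :=
    mul_div_cancel₀ _ (by positivity)
  rw [hH]
  induction k using Nat.twoStepInduction with
  | zero => simp
  | one =>
    have hid : Integrable (fun t : ℝ => (t : ℂ)) (gaussianReal 0 1) := by
      simpa using integrable_polynomial_eval_gaussianReal (𝕜 := ℂ) .X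
    have hzero : ∫ t : ℝ, (t : ℂ) ∂(gaussianReal 0 1) = 0 := by
      simpa using integral_mul_eval_gaussianReal (𝕜 := ℂ) 1
    simp_rw [pow_one]
    rw [integral_add (integrable_const _) (hid.mul_const _), integral_mul_const, hzero]
    simp
  | more k ih₀ ih₁ =>
    rw [integral_add_mul_I_pow_add_two, ih₀, ih₁, Polynomial.hermite_succ (k + 1),
      derivative_hermite_succ]
    simp

variable {ι : Type*} [Fintype ι]

lemma integrable_aeval_add_mul_I (P : MvPolynomial ι ℝ) (x : ι → ℝ) :
    Integrable (fun y => aeval (fun i => (x i + y i * Complex.I : ℂ)) P) (gaussianPi ι) := by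
  simp only [aeval_def, eval₂_eq']
  exact integrable_finsetSum _ fun a _ => (Integrable.fintype_prod
    (f := fun i (t : ℝ) => (x i + t * Complex.I : ℂ) ^ a i)
    fun i => integrable_add_mul_I_pow (x i) (a i)).const_mul _

/-- The monomial `z ^ α / √α!`, which the Segal–Bargmann transform associates with `h_α`. -/
noncomputable def fockMonomial (α : ι → ℕ) : MvPolynomial ι ℝ :=
  monomial (Finsupp.equivFunOnFinite.symm α) (∏ i, √((α i).factorial : ℝ))⁻¹

lemma integral_aeval_fockMonomial (α : ι → ℕ) (x : ι → ℝ) :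
    ∫ y, aeval (fun i => (x i + y i * Complex.I : ℂ)) (fockMonomial α) ∂(gaussianPi ι) =
      (eval x (mvHermite α) : ℝ) := by
  have hne : ∏ i, √((α i).factorial : ℝ) ≠ 0 := by positivity
  have hprod := integral_fintype_prod_eq_prod (μ := fun _ => gaussianReal 0 1)
    fun i (t : ℝ) => (x i + t * Complex.I : ℂ) ^ α i
  simp_rw [fockMonomial, aeval_monomial, Finsupp.prod_fintype _ _ fun _ => pow_zero _,
    integral_const_mul, Finsupp.coe_equivFunOnFinite_symm, hprod, integral_add_mul_I_pow,
    ← Complex.ofReal_prod, Finset.prod_mul_distrib, eval_mvHermite, Complex.coe_algebraMap,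
    ← Complex.ofReal_mul]
  rw [inv_mul_cancel_left₀ hne]

lemma measurePreserving_add_mul_I : MeasurePreserving
    (fun w : (ι → ℝ) × (ι → ℝ) => fun i => (w.1 i + w.2 i * Complex.I : ℂ))
    ((gaussianPi ι).prod (gaussianPi ι)) (Measure.pi fun _ => complexGaussian) := by
  have h₁ := (measurePreserving_arrowProdEquivProdArrow ℝ ℝ ι (fun _ => gaussianReal 0 1)
    fun _ => gaussianReal 0 1).symm
  have h₂ := measurePreserving_pi (fun _ : ι => (gaussianReal 0 1).prod (gaussianReal 0 1))
    (fun _ => complexGaussian)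
    fun _ => Complex.measurableEquivRealProd.symm.measurable.measurePreserving _
  convert! h₂.comp h₁ using 1
  funext w i
  exact (Complex.mk_eq_add_mul_I _ _).symm

end Wick

section Hypercontractivity

variable {ι : Type*} [Fintype ι]

lemma integral_integral_norm_aeval_sq (P : MvPolynomial ι ℝ) :
    ∫ x, ∫ y, ‖aeval (fun i => (x i + y i * Complex.I : ℂ)) P‖ ^ 2
      ∂(gaussianPi ι) ∂(gaussianPi ι) = fockNormSq 2 P := by
  have hmp := measurePreserving_add_mul_I (ι := ι)
  have hint := integrable_norm_aeval_sq P
  rw [← integral_norm_aeval_sq, ← hmp.map_eq, integral_map hmp.aemeasurable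
    (hmp.map_eq ▸ hint.aestronglyMeasurable)]
  exact (integral_prod _ (hmp.integrable_comp_of_integrable hint)).symm

lemma integrable_integral_norm_aeval_sq (P : MvPolynomial ι ℝ) :
    Integrable (fun x => ∫ y, ‖aeval (fun i => (x i + y i * Complex.I : ℂ)) P‖ ^ 2
      ∂(gaussianPi ι)) (gaussianPi ι) :=
  (measurePreserving_add_mul_I.integrable_comp_of_integrable
    (integrable_norm_aeval_sq P)).integral_prod_left

variable [DecidableEq ι]

/-- The Segal–Bargmann transform of a polynomial of degree at most `D`: its Hermite expansion with
each `h_α` replaced by `z ^ α / √α!`. -/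
noncomputable def segalBargmann (D : ℕ) (f : MvPolynomial ι ℝ) : MvPolynomial ι ℝ :=
  ∑ α ∈ multiIndicesLE ι D, mvHermiteCoeff α f • fockMonomial α

lemma integral_aeval_segalBargmann {D : ℕ} {f : MvPolynomial ι ℝ} (hf : f.totalDegree ≤ D)
    (x : ι → ℝ) :
    ∫ y, aeval (fun i => (x i + y i * Complex.I : ℂ)) (segalBargmann D f) ∂(gaussianPi ι) =
      (eval x f : ℝ) := by
  conv_rhs => rw [eq_sum_mvHermite hf]
  simp_rw [segalBargmann, map_sum, map_smul, smul_eval, Complex.ofReal_sum, Complex.ofReal_mul]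
  rw [integral_finsetSum _ fun α _ => by
    exact (integrable_aeval_add_mul_I (fockMonomial α) x).smul (mvHermiteCoeff α f)]
  simp_rw [integral_smul, integral_aeval_fockMonomial, Complex.real_smul]

lemma coeff_segalBargmann (D : ℕ) (f : MvPolynomial ι ℝ) (a : ι →₀ ℕ) :
    (segalBargmann D f).coeff a = if ⇑a ∈ multiIndicesLE ι D then
      mvHermiteCoeff a f * (∏ i, √((a i).factorial : ℝ))⁻¹ else 0 := by
  have heq (α : ι → ℕ) : Finsupp.equivFunOnFinite.symm α = a ↔ α = a :=
    Equiv.symm_apply_eq _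
  simp_rw [segalBargmann, coeff_sum, coeff_smul, fockMonomial, coeff_monomial, heq, smul_eq_mul,
    mul_ite, mul_zero, Finset.sum_ite_eq']

lemma fockNormSq_segalBargmann (c : ℝ) (D : ℕ) (f : MvPolynomial ι ℝ) :
    fockNormSq c (segalBargmann D f) =
      ∑ α ∈ multiIndicesLE ι D, c ^ (∑ i, α i) * mvHermiteCoeff α f ^ 2 := by
  have hsub : (segalBargmann D f).support ⊆
      (multiIndicesLE ι D).map Finsupp.equivFunOnFinite.symm.toEmbedding := fun a ha => by
    rw [mem_support_iff, coeff_segalBargmann, ite_ne_right_iff] at ha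
    exact Finset.mem_map.2 ⟨a, ha.1, Finsupp.equivFunOnFinite_symm_coe a⟩
  rw [fockNormSq_eq_sum hsub, Finset.sum_map]
  refine Finset.sum_congr rfl fun α hα => ?_
  have hsq : ∏ i, ((α i).factorial : ℝ) = (∏ i, √((α i).factorial : ℝ)) ^ 2 := by
    rw [← Finset.prod_pow]
    exact Finset.prod_congr rfl fun i _ => (Real.sq_sqrt (by positivity)).symm
  have hne : ∏ i, √((α i).factorial : ℝ) ≠ 0 := by positivity
  simp only [Equiv.coe_toEmbedding, coeff_segalBargmann, Finsupp.coe_equivFunOnFinite_symm, hα,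
    if_true, Finsupp.degree_eq_sum, hsq]
  field_simp

lemma eval_pow_le_integral_norm_segalBargmann {D : ℕ} {f : MvPolynomial ι ℝ}
    (hf : f.totalDegree ≤ D) (s : ℕ) (x : ι → ℝ) :
    eval x (f ^ (2 * 2 ^ s)) ≤ ∫ y,
      ‖aeval (fun i => (x i + y i * Complex.I : ℂ)) (segalBargmann D f ^ 2 ^ s)‖ ^ 2
        ∂(gaussianPi ι) := by
  have hpow (y : ι → ℝ) :
      ‖aeval (fun i => (x i + y i * Complex.I : ℂ)) (segalBargmann D f ^ 2 ^ s)‖ ^ 2 =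
        ‖aeval (fun i => (x i + y i * Complex.I : ℂ)) (segalBargmann D f)‖ ^ (2 * 2 ^ s) := by
    rw [map_pow, norm_pow, ← pow_mul, mul_comm]
  have hint := (integrable_aeval_add_mul_I (segalBargmann D f ^ (2 * 2 ^ s)) x).norm
  simp only [map_pow, norm_pow] at hint
  simp_rw [hpow]
  calc eval x (f ^ (2 * 2 ^ s))
      = ‖∫ y, aeval (fun i => (x i + y i * Complex.I : ℂ)) (segalBargmann D f)
          ∂(gaussianPi ι)‖ ^ (2 * 2 ^ s) := by
        rw [integral_aeval_segalBargmann hf, map_pow, Complex.norm_real, Real.norm_eq_abs,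
          Even.pow_abs ⟨2 ^ s, two_mul _⟩]
    _ ≤ (∫ y, ‖aeval (fun i => (x i + y i * Complex.I : ℂ)) (segalBargmann D f)‖
          ∂(gaussianPi ι)) ^ (2 * 2 ^ s) :=
        pow_le_pow_left₀ (norm_nonneg _) (norm_integral_le_integral_norm _) _
    _ ≤ _ := (convexOn_pow (𝕜 := ℝ) _).map_integral_le (by fun_prop) isClosed_Ici
        (.of_forall fun _ => norm_nonneg _) (integrable_aeval_add_mul_I _ x).norm hint

/-- Gaussian hypercontractivity, for exponents that are powers of two. -/
lemma gaussianExp_pow_le {D : ℕ} {f : MvPolynomial ι ℝ} (hf : f.totalDegree ≤ D) (s : ℕ) :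
    gaussianExp (f ^ (2 * 2 ^ s)) ≤ (∑ α ∈ multiIndicesLE ι D,
      (2 ^ (s + 1)) ^ (∑ i, α i) * mvHermiteCoeff α f ^ 2) ^ 2 ^ s :=
  calc gaussianExp (f ^ (2 * 2 ^ s)) ≤ fockNormSq 2 (segalBargmann D f ^ 2 ^ s) := by
        rw [← integral_integral_norm_aeval_sq]
        exact integral_mono (integrable_eval_gaussianPi _) (integrable_integral_norm_aeval_sq _)
          (eval_pow_le_integral_norm_segalBargmann hf s)
    _ ≤ fockNormSq (2 ^ s * 2) (segalBargmann D f) ^ 2 ^ s := fockNormSq_pow_le two_pos.le _ s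
    _ = _ := by rw [fockNormSq_segalBargmann, pow_succ]

end Hypercontractivity

/-! ### Logarithmic derivatives of polynomials -/

section Circle

open Polynomial (natDegree derivative)
open scoped ComplexConjugate

/-- The linear factor that does not vanish in the open unit disc and has the same modulus as `z - a`
on the unit circle. -/
noncomputable def outerFactor (a : ℂ) : Polynomial ℂ :=
  if 1 ≤ ‖a‖ then .X - .C a else 1 - .C (conj a) * .X

lemma natDegree_outerFactor_le (a : ℂ) : (outerFactor a).natDegree ≤ 1 := by
  unfold outerFactor
  split_ifs <;> compute_degree

lemma eval_outerFactor_ne_zero (a : ℂ) {z : ℂ} (hz : ‖z‖ < 1) : (outerFactor a).eval z ≠ 0 := by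
  unfold outerFactor
  split_ifs with ha
  · have hne : z ≠ a := by rintro rfl; linarith
    simpa [sub_eq_zero] using hne
  · have hlt : ‖conj a * z‖ < 1 := by
      rw [norm_mul, Complex.norm_conj]
      exact mul_lt_one_of_nonneg_of_lt_one_left (norm_nonneg a) (not_le.1 ha) hz.le
    have hne : 1 ≠ conj a * z := fun h => by simp [← h] at hlt
    simpa [sub_eq_zero] using hne

lemma norm_eval_outerFactor (a : ℂ) {z : ℂ} (hz : ‖z‖ = 1) :
    ‖(outerFactor a).eval z‖ = ‖z - a‖ := by
  unfold outerFactor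
  split_ifs with ha
  · simp
  · have hconj : z * conj (z - a) = 1 - conj a * z := by
      rw [map_sub, mul_sub, Complex.mul_conj', hz]
      norm_num [mul_comm]
    rw [Polynomial.eval_sub, Polynomial.eval_mul, Polynomial.eval_C, Polynomial.eval_X,
      Polynomial.eval_one, ← hconj, norm_mul, hz, one_mul, Complex.norm_conj]

/-- The polynomial analogue of the outer factor of `P` in the Hardy space of the disc. -/
lemma exists_outer_polynomial {P : Polynomial ℂ} (hP : P ≠ 0) :
    ∃ Q : Polynomial ℂ, Q.natDegree ≤ P.natDegree ∧ (∀ z, ‖z‖ < 1 → Q.eval z ≠ 0) ∧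
      ∀ z, ‖z‖ = 1 → ‖Q.eval z‖ = ‖P.eval z‖ := by
  refine ⟨.C P.leadingCoeff * (P.roots.map outerFactor).prod, ?_, fun z hz => ?_, fun z hz => ?_⟩
  · calc _ ≤ (P.roots.map outerFactor).prod.natDegree := Polynomial.natDegree_C_mul_le _ _
      _ ≤ ((P.roots.map outerFactor).map natDegree).sum := Polynomial.natDegree_multiset_prod_le _
      _ ≤ P.roots.card := by
        simpa using Multiset.sum_le_card_nsmul ((P.roots.map outerFactor).map natDegree) 1
          (by simpa using fun _ a _ _ h => h ▸ natDegree_outerFactor_le a)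
      _ ≤ P.natDegree := Polynomial.card_roots' P
  · simpa [Polynomial.eval_multiset_prod, hP, Multiset.prod_eq_zero_iff] using
      fun a _ => eval_outerFactor_ne_zero a hz
  · have hnorm (s : Multiset ℂ) : ‖s.prod‖ = (s.map norm).prod :=
      map_multiset_prod (normHom (α := ℂ)) s
    rw [(IsAlgClosed.splits P).eval_eq_prod_roots, Polynomial.eval_mul, Polynomial.eval_C,
      Polynomial.eval_multiset_prod, norm_mul, norm_mul, hnorm, hnorm]
    simp [norm_eval_outerFactor _ hz]

lemma re_div_sub_le_half {z a : ℂ} (h : ‖z‖ ≤ ‖a‖) : (z / (z - a)).re ≤ 1 / 2 := by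
  rcases eq_or_ne z a with rfl | hne
  · simp
  have hpos : 0 < Complex.normSq (z - a) := Complex.normSq_pos.2 (sub_ne_zero.2 hne)
  have hsq : Complex.normSq z ≤ Complex.normSq a := by
    simpa only [Complex.normSq_eq_norm_sq] using pow_le_pow_left₀ (norm_nonneg z) h 2
  rw [Complex.div_re, ← add_div, div_le_iff₀ hpos]
  simp only [Complex.normSq_apply, Complex.sub_re, Complex.sub_im] at hsq ⊢
  linarith

variable {Q : Polynomial ℂ}

lemma re_mul_derivative_div_le (hQ : ∀ z, ‖z‖ < 1 → Q.eval z ≠ 0) {z : ℂ} (hz : ‖z‖ ≤ 1)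
    (h0 : Q.eval z ≠ 0) : (z * Q.derivative.eval z / Q.eval z).re ≤ Q.natDegree / 2 := by
  have hroot : ∀ a ∈ Q.roots, ‖z‖ ≤ ‖a‖ := fun a ha =>
    hz.trans (not_lt.1 fun hlt => hQ a hlt (Polynomial.isRoot_of_mem_roots ha))
  have hsum : (z * Q.derivative.eval z / Q.eval z).re =
      (Q.roots.map fun a => (z / (z - a)).re).sum := by
    rw [mul_div_assoc, (IsAlgClosed.splits Q).eval_derivative_div_eval_of_ne_zero h0,
      ← Multiset.sum_map_mul_left, ← Complex.coe_reAddGroupHom, map_multiset_sum, Multiset.map_map]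
    simp only [Function.comp_def, mul_one_div]
  calc _ ≤ (Q.roots.map fun _ => (1 / 2 : ℝ)).sum := by
        rw [hsum]
        exact Multiset.sum_map_le_sum_map _ _ fun a ha => re_div_sub_le_half (hroot a ha)
    _ ≤ Q.natDegree / 2 := by
        have hcard : (Q.roots.card : ℝ) ≤ Q.natDegree := by exact_mod_cast Polynomial.card_roots' Q
        simp only [Multiset.map_const', Multiset.sum_replicate, nsmul_eq_mul]
        linarith

lemma im_mul_derivative_div {q : ℝ → ℝ} {q' θ : ℝ}
    (hq : ∀ θ, ‖Q.eval (circleMap 0 1 θ)‖ = |q θ|) (hq' : HasDerivAt q q' θ)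
    (h0 : Q.eval (circleMap 0 1 θ) ≠ 0) :
    (circleMap 0 1 θ * Q.derivative.eval (circleMap 0 1 θ) / Q.eval (circleMap 0 1 θ)).im =
      -(q' / q θ) := by
  set z := circleMap 0 1 θ
  have hq0 : q θ ≠ 0 := by rwa [← abs_pos, ← hq, norm_pos_iff]
  have hsq : (fun θ => ‖Q.eval (circleMap 0 1 θ)‖ ^ 2) = fun θ => q θ ^ 2 :=
    funext fun θ => by rw [hq, sq_abs]
  have hQ : HasDerivAt (fun θ : ℝ => Q.eval (circleMap 0 1 θ))
      (Q.derivative.eval z * (z * Complex.I)) θ :=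
    HasDerivAt.comp (h₂ := fun w => Q.eval w) θ (Q.hasDerivAt z) (hasDerivAt_circleMap 0 1 θ)
  have hnorm := hsq ▸ hQ.norm_sq
  have heq := hnorm.unique (hq'.pow 2)
  have hnormSq : Complex.normSq (Q.eval z) = q θ ^ 2 := by
    rw [Complex.normSq_eq_norm_sq, ← congrFun hsq]
  rw [Complex.inner] at heq
  rw [Complex.div_im, hnormSq]
  field_simp
  simp at heq ⊢
  linarith

/-- The polynomial `T` with `T / Q = 1 + Λ⁻¹ (N / 2 - z Q' / Q)`. On the circle the imaginary part
of `z Q' / Q` is the logarithmic derivative of `|Q|`, up to sign. -/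
noncomputable def logDerivPoly (N : ℕ) (Λ : ℝ) (Q : Polynomial ℂ) : Polynomial ℂ :=
  .C (1 + N / 2 / Λ : ℂ) * Q - .C (Λ⁻¹ : ℂ) * (.X * derivative Q)

lemma eval_logDerivPoly_div (N : ℕ) (Λ : ℝ) {z : ℂ} (h0 : Q.eval z ≠ 0) :
    (logDerivPoly N Λ Q).eval z / Q.eval z =
      1 + (Λ⁻¹ : ℝ) * ((N / 2 : ℝ) - z * Q.derivative.eval z / Q.eval z) := by
  simp only [logDerivPoly, Polynomial.eval_sub, Polynomial.eval_mul, Polynomial.eval_C,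
    Polynomial.eval_X]
  push_cast
  field_simp
  ring

variable {N : ℕ} {Λ : ℝ}

lemma one_le_re_eval_logDerivPoly_div (hΛ : 0 < Λ) (hQ : ∀ z, ‖z‖ < 1 → Q.eval z ≠ 0)
    (hN : Q.natDegree ≤ N) {z : ℂ} (hz : ‖z‖ ≤ 1) (h0 : Q.eval z ≠ 0) :
    1 ≤ ((logDerivPoly N Λ Q).eval z / Q.eval z).re := by
  have hcast : (Q.natDegree : ℝ) ≤ N := by exact_mod_cast hN
  rw [eval_logDerivPoly_div N Λ h0, Complex.add_re, Complex.re_ofReal_mul, Complex.sub_re,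
    Complex.ofReal_re, Complex.one_re, le_add_iff_nonneg_right]
  exact mul_nonneg (by positivity) (by linarith [re_mul_derivative_div_le hQ hz h0])

lemma eval_logDerivPoly_ne_zero (hΛ : 0 < Λ) (hQ : ∀ z, ‖z‖ < 1 → Q.eval z ≠ 0)
    (hN : Q.natDegree ≤ N) {z : ℂ} (hz : ‖z‖ ≤ 1) (h0 : Q.eval z ≠ 0) :
    (logDerivPoly N Λ Q).eval z ≠ 0 := fun h => by
  have hre := one_le_re_eval_logDerivPoly_div hΛ hQ hN hz h0
  norm_num [h] at hre

lemma log_one_add_logDeriv_sq_le (hΛ : 0 < Λ) (hQ : ∀ z, ‖z‖ < 1 → Q.eval z ≠ 0)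
    (hN : Q.natDegree ≤ N) {q : ℝ → ℝ} {q' θ : ℝ}
    (hq : ∀ θ, ‖Q.eval (circleMap 0 1 θ)‖ = |q θ|) (hq' : HasDerivAt q q' θ)
    (h0 : Q.eval (circleMap 0 1 θ) ≠ 0) :
    Real.log (1 + q' ^ 2 / (Λ * q θ) ^ 2) ≤
      2 * (Real.log ‖(logDerivPoly N Λ Q).eval (circleMap 0 1 θ)‖ -
        Real.log ‖Q.eval (circleMap 0 1 θ)‖) := by
  set z := circleMap 0 1 θ
  have hz : ‖z‖ ≤ 1 := by simp [z]
  have hT := eval_logDerivPoly_ne_zero hΛ hQ hN hz h0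
  set ρ := (logDerivPoly N Λ Q).eval z / Q.eval z with hρ
  have hre : 1 ≤ ρ.re := one_le_re_eval_logDerivPoly_div hΛ hQ hN hz h0
  have him : ρ.im = q' / (Λ * q θ) := by
    rw [hρ, eval_logDerivPoly_div N Λ h0, Complex.add_im, Complex.im_ofReal_mul, Complex.sub_im,
      Complex.ofReal_im, Complex.one_im, im_mul_derivative_div hq hq' h0]
    ring
  rw [← Real.log_div (norm_ne_zero_iff.2 hT) (norm_ne_zero_iff.2 h0), ← norm_div, ← hρ]
  have hle : 1 + q' ^ 2 / (Λ * q θ) ^ 2 ≤ ‖ρ‖ ^ 2 := by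
    rw [← Complex.normSq_eq_norm_sq, Complex.normSq_apply, him, ← div_pow, ← sq, ← sq]
    gcongr
    exact one_le_pow₀ hre
  simpa using Real.log_le_log (by positivity) hle

lemma logMahlerMeasure_eq_log_norm_eval_zero (hQ : ∀ z, ‖z‖ < 1 → Q.eval z ≠ 0) :
    Q.logMahlerMeasure = Real.log ‖Q.eval 0‖ := by
  have hQ0 : Q ≠ 0 := by rintro rfl; exact hQ 0 (by simp) (by simp)
  have hnorm (s : Multiset ℂ) : ‖s.prod‖ = (s.map norm).prod :=
    map_multiset_prod (normHom (α := ℂ)) s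
  rw [Polynomial.logMahlerMeasure_eq_log_MahlerMeasure,
    Polynomial.mahlerMeasure_eq_leadingCoeff_mul_prod_roots,
    (IsAlgClosed.splits Q).eval_eq_prod_roots, norm_mul, hnorm, Multiset.map_map]
  congr 3
  refine Multiset.map_congr rfl fun a ha => ?_
  have ha1 : 1 ≤ ‖a‖ := not_lt.1 fun hlt => hQ a hlt ((Polynomial.mem_roots hQ0).1 ha)
  simp [ha1]

lemma logMahlerMeasure_logDerivPoly (hΛ : 0 < Λ) (hQ : ∀ z, ‖z‖ < 1 → Q.eval z ≠ 0)
    (hN : Q.natDegree ≤ N) :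
    (logDerivPoly N Λ Q).logMahlerMeasure = Real.log (1 + N / 2 / Λ) + Q.logMahlerMeasure := by
  have hpos : 0 < 1 + N / 2 / Λ := by positivity
  have hzero : (logDerivPoly N Λ Q).eval 0 = (1 + N / 2 / Λ : ℝ) * Q.eval 0 := by
    simp [logDerivPoly]
  rw [logMahlerMeasure_eq_log_norm_eval_zero hQ, logMahlerMeasure_eq_log_norm_eval_zero fun z hz =>
      eval_logDerivPoly_ne_zero hΛ hQ hN hz.le (hQ z hz), hzero, norm_mul, Complex.norm_real,
    Real.norm_of_nonneg hpos.le, Real.log_mul hpos.ne' (norm_ne_zero_iff.2 (hQ 0 (by simp)))]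

lemma integral_log_norm_logDerivPoly_sub (hΛ : 0 < Λ) (hQ : ∀ z, ‖z‖ < 1 → Q.eval z ≠ 0)
    (hN : Q.natDegree ≤ N) :
    ∫ θ in (0)..(2 * Real.pi), (Real.log ‖(logDerivPoly N Λ Q).eval (circleMap 0 1 θ)‖ -
      Real.log ‖Q.eval (circleMap 0 1 θ)‖) = 2 * Real.pi * Real.log (1 + N / 2 / Λ) := by
  have h := logMahlerMeasure_logDerivPoly hΛ hQ hN
  simp only [Polynomial.logMahlerMeasure_def, Real.circleAverage_def, smul_eq_mul] at h
  rw [intervalIntegral.integral_sub (Polynomial.intervalIntegrable_mahlerMeasure _)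
    (Polynomial.intervalIntegrable_mahlerMeasure _)]
  have hpi : 2 * Real.pi ≠ 0 := by positivity
  have h' := congrArg (2 * Real.pi * ·) h
  simp only [mul_add, mul_inv_cancel_left₀ hpi] at h'
  linarith

lemma ae_eval_circleMap_ne_zero (hQ : Q ≠ 0) : ∀ᵐ θ, Q.eval (circleMap 0 1 θ) ≠ 0 := by
  have hcount : (circleMap 0 1 ⁻¹' (Q.roots.toFinset : Set ℂ)).Countable :=
    (Finset.countable_toSet _).preimage_circleMap 0 one_ne_zero
  filter_upwards [hcount.ae_notMem volume] with θ hθ h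
  exact hθ (by simpa [hQ] using h)

/-- Replacing `P` by an outer polynomial `Q` of the same modulus, `1 + q'² / (Λ q)²` is at most
`‖T / Q‖²` for a polynomial `T` that again has no zeros in the open disc, so that the mean value
property evaluates the integral of `log ‖T / Q‖` at the centre. -/
lemma lintegral_log_one_add_logDeriv_sq_le (hΛ : 0 < Λ) {P : Polynomial ℂ} (hP : P ≠ 0)
    (hN : P.natDegree ≤ N) {q q' : ℝ → ℝ} (hq : ∀ θ, ‖P.eval (circleMap 0 1 θ)‖ = |q θ|)
    (hq' : ∀ θ, HasDerivAt q (q' θ) θ) :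
    ∫⁻ θ in Set.Ioc 0 (2 * Real.pi), ENNReal.ofReal (Real.log (1 + q' θ ^ 2 / (Λ * q θ) ^ 2)) ≤
      ENNReal.ofReal (2 * Real.pi * (N / Λ)) := by
  obtain ⟨Q, hdeg, hQ, hnorm⟩ := exists_outer_polynomial hP
  have hQ0 : Q ≠ 0 := by rintro rfl; exact hQ 0 (by simp) (by simp)
  replace hq θ : ‖Q.eval (circleMap 0 1 θ)‖ = |q θ| := by rw [hnorm _ (by simp), hq]
  set b : ℝ → ℝ := fun θ => 2 * (Real.log ‖(logDerivPoly N Λ Q).eval (circleMap 0 1 θ)‖ -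
    Real.log ‖Q.eval (circleMap 0 1 θ)‖)
  have hle : ∀ᵐ θ, Real.log (1 + q' θ ^ 2 / (Λ * q θ) ^ 2) ≤ b θ := by
    filter_upwards [ae_eval_circleMap_ne_zero hQ0] with θ hθ
    exact log_one_add_logDeriv_sq_le hΛ hQ (hdeg.trans hN) hq (hq' θ) hθ
  have hb : IntervalIntegrable b volume 0 (2 * Real.pi) :=
    ((Polynomial.intervalIntegrable_mahlerMeasure _).sub
      (Polynomial.intervalIntegrable_mahlerMeasure _)).const_mul 2
  calc _ ≤ ∫⁻ θ in Set.Ioc 0 (2 * Real.pi), ENNReal.ofReal (b θ) :=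
        lintegral_mono_ae ((ae_restrict_of_ae hle).mono fun θ h => ENNReal.ofReal_le_ofReal h)
    _ = ENNReal.ofReal (∫ θ in (0)..(2 * Real.pi), b θ) := by
        rw [intervalIntegral.integral_of_le (by positivity),
          ofReal_integral_eq_lintegral_ofReal hb.1]
        refine ae_restrict_of_ae (hle.mono fun θ h => le_trans (Real.log_nonneg ?_) h)
        exact le_add_of_nonneg_right (by positivity)
    _ ≤ _ := by
        refine ENNReal.ofReal_le_ofReal ?_
        rw [intervalIntegral.integral_const_mul,
          integral_log_norm_logDerivPoly_sub hΛ hQ (hdeg.trans hN)]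
        have hlog : Real.log (1 + N / 2 / Λ) ≤ N / 2 / Λ := by
          linarith [Real.log_le_sub_one_of_pos (show 0 < 1 + N / 2 / Λ by positivity)]
        calc _ = 2 * Real.pi * (2 * Real.log (1 + N / 2 / Λ)) := by ring
          _ ≤ 2 * Real.pi * (2 * (N / 2 / Λ)) := by gcongr
          _ = _ := by ring

end Circle

section Rotation

variable {ι : Type*} [Fintype ι]

lemma gaussianPi_eq_map_stdGaussian :
    gaussianPi ι = (stdGaussian (EuclideanSpace ℝ ι)).map (EuclideanSpace.equiv ι ℝ) := by
  rw [← map_pi_eq_stdGaussian, Measure.map_map (by fun_prop) (by fun_prop)]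
  exact Measure.map_id.symm

instance isGaussian_gaussianPi : IsGaussian (gaussianPi ι) := by
  rw [gaussianPi_eq_map_stdGaussian]
  infer_instance

lemma integral_id_gaussianPi : ∫ x, x ∂(gaussianPi ι) = 0 := by
  rw [gaussianPi_eq_map_stdGaussian, integral_map (by fun_prop) (by fun_prop),
    ContinuousLinearEquiv.integral_comp_comm, integral_id_stdGaussian, map_zero]

lemma measurePreserving_rotation_gaussianPi (θ : ℝ) :
    MeasurePreserving (ContinuousLinearMap.rotation θ : (ι → ℝ) × (ι → ℝ) →L[ℝ] _)
      ((gaussianPi ι).prod (gaussianPi ι)) ((gaussianPi ι).prod (gaussianPi ι)) :=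
  ⟨by fun_prop, IsGaussian.map_rotation_eq_self integral_id_gaussianPi θ⟩

lemma lintegral_le_of_lintegral_rotation_le {F G : (ι → ℝ) × (ι → ℝ) → ENNReal}
    (hF : Measurable F) (hG : Measurable G)
    (h : ∀ p, ∫⁻ θ in Set.Ioc 0 (2 * Real.pi), F (ContinuousLinearMap.rotation θ p) ≤
      ENNReal.ofReal (2 * Real.pi) * G p) :
    ∫⁻ p, F p ∂((gaussianPi ι).prod (gaussianPi ι)) ≤
      ∫⁻ p, G p ∂((gaussianPi ι).prod (gaussianPi ι)) := by
  set μ := (gaussianPi ι).prod (gaussianPi ι)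
  have hrot : Measurable fun q : ℝ × (ι → ℝ) × (ι → ℝ) =>
      ContinuousLinearMap.rotation q.1 q.2 := by
    simp only [ContinuousLinearMap.rotation_apply]
    fun_prop
  have hpi : ENNReal.ofReal (2 * Real.pi) ≠ 0 := by simp [Real.pi_pos]
  refine (ENNReal.mul_le_mul_iff_right hpi ENNReal.ofReal_ne_top).1 ?_
  have hinv (θ : ℝ) : ∫⁻ p, F (ContinuousLinearMap.rotation θ p) ∂μ = ∫⁻ p, F p ∂μ :=
    (measurePreserving_rotation_gaussianPi θ).lintegral_comp hF
  calc ENNReal.ofReal (2 * Real.pi) * ∫⁻ p, F p ∂μ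
      = ∫⁻ θ in Set.Ioc 0 (2 * Real.pi), ∫⁻ p, F (ContinuousLinearMap.rotation θ p) ∂μ := by
        simp [hinv, mul_comm]
    _ = ∫⁻ p, (∫⁻ θ in Set.Ioc 0 (2 * Real.pi), F (ContinuousLinearMap.rotation θ p)) ∂μ :=
        lintegral_lintegral_swap (hF.comp hrot).aemeasurable
    _ ≤ ∫⁻ p, ENNReal.ofReal (2 * Real.pi) * G p ∂μ := lintegral_mono h
    _ = ENNReal.ofReal (2 * Real.pi) * ∫⁻ p, G p ∂μ := lintegral_const_mul _ hG

lemma identDistrib_dot_gaussianPi (v : ι → ℝ) :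
    IdentDistrib (fun ξ => ∑ i, ξ i * v i) (fun t => √(∑ i, v i ^ 2) * t) (gaussianPi ι)
      (gaussianReal 0 1) := by
  refine ⟨Measurable.aemeasurable (by fun_prop), by fun_prop, ?_⟩
  set L := innerSL ℝ (WithLp.toLp 2 v : EuclideanSpace ℝ ι)
  have hL : (fun ξ : ι → ℝ => ∑ i, ξ i * v i) = L ∘ WithLp.toLp 2 := by
    ext ξ
    simp [L, PiLp.inner_apply]
  rw [hL, ← Measure.map_map (by fun_prop) (by fun_prop), map_pi_eq_stdGaussian,
    IsGaussian.map_eq_gaussianReal L, integral_strongDual_stdGaussian, variance_dual_stdGaussian,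
    gaussianReal_map_const_mul]
  congr 1
  · simp
  · rw [innerSL_apply_norm, EuclideanSpace.norm_eq]
    ext
    simp [Real.sq_sqrt, Finset.sum_nonneg, sq_nonneg]

end Rotation

section Directional

variable {ι : Type*}

/-- The directional derivative `∑ i, y i • ∂ᵢ`. -/
noncomputable def directionalDeriv (y : ι → ℝ) :
    Derivation ℝ (MvPolynomial ι ℝ) (MvPolynomial ι ℝ) :=
  mkDerivation ℝ fun i => C (y i)

lemma hasDerivAt_eval_mvPolynomial {u : ℝ → ι → ℝ} {u' : ι → ℝ} {t : ℝ}
    (h : ∀ i, HasDerivAt (fun s => u s i) (u' i) t) (f : MvPolynomial ι ℝ) :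
    HasDerivAt (fun s => eval (u s) f) (eval (u t) (directionalDeriv u' f)) t := by
  unfold directionalDeriv
  induction f using MvPolynomial.induction_on with
  | C a => simpa using hasDerivAt_const t a
  | add p q hp hq =>
    convert! hp.add hq using 1
    · ext s
      simp
    · simp
  | mul_X p i hp =>
    convert! hp.mul (h i) using 1
    · ext s
      simp
    · simp only [Derivation.leibniz, mkDerivation_X, smul_eq_mul, map_add, map_mul, eval_X, eval_C]
      ring

lemma eval_directionalDeriv [Fintype ι] (x y : ι → ℝ) (f : MvPolynomial ι ℝ) :
    eval x (directionalDeriv y f) = ∑ i, y i * eval x (pderiv i f) := by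
  classical
  have hsum (D : ι → Derivation ℝ (MvPolynomial ι ℝ) (MvPolynomial ι ℝ)) (g : MvPolynomial ι ℝ) :
      (∑ i, D i) g = ∑ i, D i g :=
    (congrFun (map_sum Derivation.coeFnAddMonoidHom D Finset.univ) g).trans (Finset.sum_apply _ _ _)
  have h : directionalDeriv y = ∑ i, (C (y i) : MvPolynomial ι ℝ) • pderiv i :=
    derivation_ext fun j => by simp [directionalDeriv, hsum, pderiv_X, Pi.single_apply]
  simp [h, hsum]

/-- The scaled logarithmic derivative `log (1 + (D_y f / (Λ f))²)` of `f` at `x` in direction `y`,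
for `p = (x, y)`. -/
noncomputable def logDirectionalDeriv (Λ : ℝ) (f : MvPolynomial ι ℝ) (p : (ι → ℝ) × (ι → ℝ)) :
    ENNReal :=
  ENNReal.ofReal (Real.log (1 + eval p.1 (directionalDeriv p.2 f) ^ 2 / (Λ * eval p.1 f) ^ 2))

lemma measurable_logDirectionalDeriv [Finite ι] (Λ : ℝ) (f : MvPolynomial ι ℝ) :
    Measurable (logDirectionalDeriv Λ f) := by
  cases nonempty_fintype ι
  unfold logDirectionalDeriv
  simp only [eval_directionalDeriv]
  have h (g : MvPolynomial ι ℝ) : Measurable fun p : (ι → ℝ) × (ι → ℝ) => eval p.1 g :=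
    (MvPolynomial.continuous_eval g).measurable.comp measurable_fst
  fun_prop

variable [Fintype ι]

lemma circleMap_mul_cos_sin (θ a b : ℝ) :
    circleMap 0 1 θ * ((Real.cos θ * a + Real.sin θ * b : ℝ) : ℂ) =
      a / 2 * (circleMap 0 1 θ ^ 2 + 1) + b / (2 * Complex.I) * (circleMap 0 1 θ ^ 2 - 1) := by
  have hz : circleMap 0 1 θ = Complex.cos θ + Complex.sin θ * Complex.I := by
    simp [circleMap, Complex.exp_mul_I]
  have hcs : Complex.cos θ ^ 2 + Complex.sin θ ^ 2 = 1 := Complex.cos_sq_add_sin_sq _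
  have hcos : circleMap 0 1 θ ^ 2 + 1 = 2 * (circleMap 0 1 θ * Complex.cos θ) := by
    rw [hz]
    linear_combination Complex.sin θ ^ 2 * Complex.I_sq - hcs
  have hsin : circleMap 0 1 θ ^ 2 - 1 = 2 * Complex.I * (circleMap 0 1 θ * Complex.sin θ) := by
    rw [hz]
    linear_combination -Complex.sin θ ^ 2 * Complex.I_sq + hcs
  rw [hcos, hsin]
  have : (2 * Complex.I : ℂ) ≠ 0 := by simp
  push_cast
  field_simp

/-- A monomial of total degree `|a|`, restricted to the circle spanned by `x` and `y` and multiplied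
by `z ^ m`, as a polynomial in `z = exp (i θ)`; see `circleMap_mul_cos_sin`. -/
noncomputable def circleMonomial (m : ℕ) (x y : ι → ℝ) (a : ι →₀ ℕ) : Polynomial ℂ :=
  .X ^ (m - ∑ i, a i) *
    ∏ i, (.C (x i / 2 : ℂ) * (.X ^ 2 + 1) + .C (y i / (2 * Complex.I)) * (.X ^ 2 - 1)) ^ a i

lemma natDegree_circleMonomial_le {m : ℕ} (x y : ι → ℝ) {a : ι →₀ ℕ} (ha : ∑ i, a i ≤ m) :
    (circleMonomial m x y a).natDegree ≤ 2 * m := by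
  have hfactor (i : ι) : (.C (x i / 2 : ℂ) * (.X ^ 2 + 1) +
      .C (y i / (2 * Complex.I)) * (.X ^ 2 - 1) : Polynomial ℂ).natDegree ≤ 2 := by
    compute_degree
  calc _ ≤ (m - ∑ i, a i) + ∑ i, a i * 2 :=
        Polynomial.natDegree_mul_le_of_le (Polynomial.natDegree_X_pow_le _)
          ((Polynomial.natDegree_prod_le _ _).trans
            (Finset.sum_le_sum fun i _ => Polynomial.natDegree_pow_le_of_le _ (hfactor i)))
    _ ≤ 2 * m := by rw [← Finset.sum_mul]; omega

lemma eval_circleMonomial {m : ℕ} (x y : ι → ℝ) {a : ι →₀ ℕ} (ha : ∑ i, a i ≤ m) (θ : ℝ) :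
    (circleMonomial m x y a).eval (circleMap 0 1 θ) =
      circleMap 0 1 θ ^ m * ∏ i, ((Real.cos θ * x i + Real.sin θ * y i : ℝ) : ℂ) ^ a i := by
  simp only [circleMonomial, Polynomial.eval_mul, Polynomial.eval_pow, Polynomial.eval_X,
    Polynomial.eval_prod, Polynomial.eval_add, Polynomial.eval_sub, Polynomial.eval_C,
    Polynomial.eval_one, ← circleMap_mul_cos_sin, mul_pow, Finset.prod_mul_distrib,
    Finset.prod_pow_eq_pow_sum]
  rw [← mul_assoc, pow_sub_mul_pow _ ha]

lemma exists_polynomial_norm_eval_circleMap {f : MvPolynomial ι ℝ} {m : ℕ} (hf : f.totalDegree ≤ m)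
    (p : (ι → ℝ) × (ι → ℝ)) : ∃ P : Polynomial ℂ, P.natDegree ≤ 2 * m ∧
      ∀ θ, ‖P.eval (circleMap 0 1 θ)‖ = |eval (ContinuousLinearMap.rotation θ p).1 f| := by
  have hdeg : ∀ a ∈ f.support, ∑ i, a i ≤ m := fun a ha => by
    have h := le_totalDegree ha
    rw [Finsupp.sum_fintype _ _ fun _ => rfl] at h
    exact h.trans hf
  refine ⟨∑ a ∈ f.support, .C ((f.coeff a : ℝ) : ℂ) * circleMonomial m p.1 p.2 a,
    ?_, fun θ => ?_⟩
  · exact Polynomial.natDegree_sum_le_of_forall_le _ _ fun a ha =>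
      (Polynomial.natDegree_C_mul_le _ _).trans (natDegree_circleMonomial_le _ _ (hdeg a ha))
  have heval : Polynomial.eval (circleMap 0 1 θ)
      (∑ a ∈ f.support, .C ((f.coeff a : ℝ) : ℂ) * circleMonomial m p.1 p.2 a) =
      circleMap 0 1 θ ^ m * (eval (ContinuousLinearMap.rotation θ p).1 f : ℝ) := by
    rw [eval_eq', Polynomial.eval_finsetSum, Complex.ofReal_sum, Finset.mul_sum]
    refine Finset.sum_congr rfl fun a ha => ?_
    rw [Polynomial.eval_mul, Polynomial.eval_C, eval_circleMonomial _ _ (hdeg a ha),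
      Complex.ofReal_mul, Complex.ofReal_prod]
    simp only [ContinuousLinearMap.rotation_apply, Pi.add_apply, Pi.smul_apply, smul_eq_mul,
      Complex.ofReal_pow]
    ring
  rw [heval, norm_mul, norm_pow, Complex.norm_real, Real.norm_eq_abs]
  simp

lemma lintegral_rotation_logDirectionalDeriv_le {m : ℕ} {Λ : ℝ} (hΛ : 0 < Λ)
    {f : MvPolynomial ι ℝ} (hf : f.totalDegree ≤ m) (p : (ι → ℝ) × (ι → ℝ)) :
    ∫⁻ θ in Set.Ioc 0 (2 * Real.pi), logDirectionalDeriv Λ f (ContinuousLinearMap.rotation θ p) ≤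
      ENNReal.ofReal (2 * Real.pi * (2 * m / Λ)) := by
  obtain ⟨P, hdeg, hP⟩ := exists_polynomial_norm_eval_circleMap hf p
  rcases eq_or_ne P 0 with rfl | h0
  · have hzero : ∀ θ, eval (ContinuousLinearMap.rotation θ p).1 f = 0 := fun θ => by
      simpa using (hP θ).symm
    simp [logDirectionalDeriv, hzero]
  · have hderiv (θ : ℝ) (i : ι) :
        HasDerivAt (fun θ => (ContinuousLinearMap.rotation θ p).1 i)
          ((ContinuousLinearMap.rotation θ p).2 i) θ :=
      ((Real.hasDerivAt_cos θ).mul_const _).add ((Real.hasDerivAt_sin θ).mul_const _)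
    simpa [logDirectionalDeriv] using lintegral_log_one_add_logDeriv_sq_le hΛ h0 hdeg hP
      fun θ => hasDerivAt_eval_mvPolynomial (hderiv θ) f

lemma lintegral_logDirectionalDeriv_le {m : ℕ} {Λ : ℝ} (hΛ : 0 < Λ) {f : MvPolynomial ι ℝ}
    (hf : f.totalDegree ≤ m) :
    ∫⁻ p, logDirectionalDeriv Λ f p ∂((gaussianPi ι).prod (gaussianPi ι)) ≤
      ENNReal.ofReal (2 * m / Λ) := by
  refine (lintegral_le_of_lintegral_rotation_le (measurable_logDirectionalDeriv Λ f)
    (measurable_const (a := ENNReal.ofReal (2 * m / Λ))) fun p => ?_).trans_eq (by simp)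
  rw [← ENNReal.ofReal_mul (by positivity)]
  exact lintegral_rotation_logDirectionalDeriv_le hΛ hf p

lemma lintegral_rotation_indicator_zero_le (f : MvPolynomial ι ℝ) (p : (ι → ℝ) × (ι → ℝ)) :
    ∫⁻ θ in Set.Ioc 0 (2 * Real.pi), {x | eval x f = 0}.indicator (1 : (ι → ℝ) → ENNReal)
      (ContinuousLinearMap.rotation θ p).1 ≤
    ENNReal.ofReal (2 * Real.pi) * ({x | eval x f = 0}.indicator 1 p.1 *
      {x | eval x f = 0}.indicator 1 p.2) := by
  obtain ⟨P, -, hP⟩ := exists_polynomial_norm_eval_circleMap (le_refl f.totalDegree) p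
  rcases eq_or_ne P 0 with rfl | h0
  · have hzero : ∀ θ, eval (ContinuousLinearMap.rotation θ p).1 f = 0 := fun θ => by
      simpa using (hP θ).symm
    have hfst := hzero 0
    have hsnd := hzero (Real.pi / 2)
    simp only [ContinuousLinearMap.rotation_apply] at hfst hsnd
    simp at hfst hsnd
    simp [hzero, hfst, hsnd]
  · have hae : ∀ᵐ θ : ℝ, eval (ContinuousLinearMap.rotation θ p).1 f ≠ 0 := by
      filter_upwards [ae_eval_circleMap_ne_zero h0] with θ hθ
      rwa [← abs_pos, ← hP, norm_pos_iff]
    rw [setLIntegral_congr_fun_ae (g := 0) measurableSet_Ioc (hae.mono fun θ hθ _ => by simp [hθ])]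
    simp

lemma ae_eval_ne_zero {f : MvPolynomial ι ℝ} (hf : f ≠ 0) : ∀ᵐ x ∂(gaussianPi ι), eval x f ≠ 0 := by
  classical
  set Z : Set (ι → ℝ) := {x | eval x f = 0}
  have hZ : MeasurableSet Z :=
    (MvPolynomial.continuous_eval f).measurable (measurableSet_singleton 0)
  have hind : Measurable (Z.indicator (1 : (ι → ℝ) → ENNReal)) := measurable_one.indicator hZ
  have hsq : gaussianPi ι Z ≤ gaussianPi ι Z * gaussianPi ι Z := by
    have h := lintegral_le_of_lintegral_rotation_le (hind.comp measurable_fst)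
      ((hind.comp measurable_fst).mul (hind.comp measurable_snd))
      (lintegral_rotation_indicator_zero_le f)
    rw [lintegral_prod _ (hind.comp measurable_fst).aemeasurable] at h
    simp only [Pi.mul_apply, Function.comp_apply] at h
    rw [lintegral_prod_mul hind.aemeasurable hind.aemeasurable] at h
    simpa [lintegral_indicator_one hZ] using h
  rw [ae_iff]
  simp only [not_not]
  by_contra hne
  have hone : gaussianPi ι Z = 1 := le_antisymm prob_le_one <|
    (ENNReal.mul_le_mul_iff_right hne (measure_ne_top _ _)).1 (by rwa [mul_one])
  have hzero : ∀ᵐ x ∂(gaussianPi ι), eval x f = 0 := (prob_compl_eq_zero_iff hZ).2 hone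
  refine hf ?_
  rw [eq_sum_mvHermite (le_refl f.totalDegree)]
  refine Finset.sum_eq_zero fun α _ => ?_
  rw [mvHermiteCoeff_apply, gaussianExp_apply,
    integral_eq_zero_of_ae (hzero.mono fun x hx => by simp [hx]), zero_smul]

end Directional

section LogGaussian

lemma gaussianReal_le_volume : gaussianReal 0 1 ≤ volume := by
  rw [gaussianReal_of_var_ne_zero _ one_ne_zero]
  refine (withDensity_mono (ae_of_all _ fun x => ?_)).trans_eq withDensity_one
  rw [gaussianPDF, Pi.one_apply, ENNReal.ofReal_le_one, gaussianPDFReal]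
  refine mul_le_one₀ (inv_le_one_of_one_le₀ ?_) (Real.exp_nonneg _) (Real.exp_le_one_iff.2 ?_)
  · rw [Real.one_le_sqrt, NNReal.coe_one]
    linarith [Real.pi_gt_three]
  · simp only [sub_zero, NNReal.coe_one, mul_one]
    linarith [sq_nonneg x]

lemma integrable_log_gaussianReal : Integrable Real.log (gaussianReal 0 1) := by
  have hin : IntegrableOn Real.log (Set.Ioc (-1) 1) (gaussianReal 0 1) :=
    (intervalIntegral.intervalIntegrable_log' (a := -1) (b := 1)).1.mono_measure
      gaussianReal_le_volume
  have hout : IntegrableOn Real.log (Set.Ioc (-1) 1)ᶜ (gaussianReal 0 1) := by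
    refine Integrable.mono' (integrable_pow_gaussianReal 1).norm.integrableOn
      Real.measurable_log.aestronglyMeasurable ?_
    filter_upwards [ae_restrict_mem measurableSet_Ioc.compl] with x hx
    have h1 : 1 ≤ |x| := not_lt.1 fun h => hx ⟨(abs_lt.1 h).1, (abs_lt.1 h).2.le⟩
    rw [pow_one, Real.norm_eq_abs, Real.norm_eq_abs, ← Real.log_abs,
      abs_of_nonneg (Real.log_nonneg h1)]
    linarith [Real.log_le_sub_one_of_pos (x := |x|) (by linarith)]
  simpa using hin.union hout

lemma integrable_log_sq_gaussianReal :
    Integrable (fun t => Real.log (t ^ 2)) (gaussianReal 0 1) := by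
  simpa only [Real.log_pow] using integrable_log_gaussianReal.const_mul _

/-- The mean of `log g²` for a standard Gaussian `g`. -/
noncomputable def gaussianLogMean : ℝ := ∫ t, Real.log (t ^ 2) ∂(gaussianReal 0 1)

lemma log_sq_sqrt_mul_ae_eq {s : ℝ} (hs : 0 < s) :
    (fun t => Real.log ((√s * t) ^ 2)) =ᵐ[gaussianReal 0 1]
      fun t => Real.log s + Real.log (t ^ 2) := by
  have hne : ∀ᵐ t ∂(gaussianReal 0 1), t ≠ 0 :=
    (gaussianReal_absolutelyContinuous 0 one_ne_zero).ae_le (Measure.ae_ne volume 0)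
  filter_upwards [hne] with t ht
  rw [mul_pow, Real.sq_sqrt hs.le, Real.log_mul hs.ne' (pow_ne_zero 2 ht)]

variable {ι : Type*} [Fintype ι]

lemma identDistrib_log_sq_dot (v : ι → ℝ) :
    IdentDistrib (fun ξ => Real.log ((∑ i, ξ i * v i) ^ 2))
      (fun t => Real.log ((√(∑ i, v i ^ 2) * t) ^ 2)) (gaussianPi ι) (gaussianReal 0 1) :=
  (identDistrib_dot_gaussianPi v).comp (Real.measurable_log.comp (measurable_id.pow_const 2))

lemma integrable_log_sq_dot (v : ι → ℝ) :
    Integrable (fun ξ => Real.log ((∑ i, ξ i * v i) ^ 2)) (gaussianPi ι) := by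
  rw [(identDistrib_log_sq_dot v).integrable_iff]
  rcases (Finset.sum_nonneg fun i _ => sq_nonneg (v i) : 0 ≤ ∑ i, v i ^ 2).eq_or_lt with h | h
  · simp [← h]
  · exact ((integrable_const _).add integrable_log_sq_gaussianReal).congr
      (log_sq_sqrt_mul_ae_eq h).symm

lemma integral_log_sq_dot {v : ι → ℝ} (hv : 0 < ∑ i, v i ^ 2) :
    ∫ ξ, Real.log ((∑ i, ξ i * v i) ^ 2) ∂(gaussianPi ι) =
      Real.log (∑ i, v i ^ 2) + gaussianLogMean := by
  rw [(identDistrib_log_sq_dot v).integral_eq, integral_congr_ae (log_sq_sqrt_mul_ae_eq hv),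
    integral_add (integrable_const _) integrable_log_sq_gaussianReal]
  simp [gaussianLogMean]

lemma ae_dot_ne_zero {v : ι → ℝ} (hv : 0 < ∑ i, v i ^ 2) :
    ∀ᵐ ξ ∂(gaussianPi ι), ∑ i, ξ i * v i ≠ 0 := by
  have hne : (∑ i, C (v i) * X i : MvPolynomial ι ℝ) ≠ 0 := fun h => by
    have heval := congrArg (eval v) h
    simp only [map_sum, map_mul, eval_C, eval_X, map_zero, ← sq] at heval
    exact hv.ne' heval
  filter_upwards [ae_eval_ne_zero hne] with ξ hξ
  simpa [mul_comm] using hξ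

lemma ofReal_integral_le_lintegral_ofReal {α : Type*} [MeasurableSpace α] {μ : Measure α}
    {h : α → ℝ} (hi : Integrable h μ) :
    ENNReal.ofReal (∫ a, h a ∂μ) ≤ ∫⁻ a, ENNReal.ofReal (h a) ∂μ := by
  rw [integral_eq_lintegral_pos_part_sub_lintegral_neg_part hi]
  exact (ENNReal.ofReal_le_ofReal (sub_le_self _ ENNReal.toReal_nonneg)).trans
    ENNReal.ofReal_toReal_le

lemma log_ratio_le_lintegral {Λ : ℝ} (hΛ : 0 < Λ) {u w : ι → ℝ} (hu : 0 < ∑ i, u i ^ 2)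
    (hw : 0 < ∑ i, w i ^ 2) :
    ENNReal.ofReal (Real.log (∑ i, w i ^ 2) - Real.log (∑ i, u i ^ 2) - 2 * Real.log Λ) ≤
      ∫⁻ ξ, ENNReal.ofReal (Real.log (1 + (∑ i, ξ i * w i) ^ 2 / (Λ * ∑ i, ξ i * u i) ^ 2))
        ∂(gaussianPi ι) := by
  have hdiff : Integrable (fun ξ : ι → ℝ => Real.log ((∑ i, ξ i * w i) ^ 2) -
      Real.log ((∑ i, ξ i * u i) ^ 2)) (gaussianPi ι) :=
    (integrable_log_sq_dot w).sub (integrable_log_sq_dot u)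
  have hint : ∫ ξ : ι → ℝ, (Real.log ((∑ i, ξ i * w i) ^ 2) - Real.log ((∑ i, ξ i * u i) ^ 2) -
      2 * Real.log Λ) ∂(gaussianPi ι) =
      Real.log (∑ i, w i ^ 2) - Real.log (∑ i, u i ^ 2) - 2 * Real.log Λ := by
    rw [integral_sub hdiff (integrable_const _), integral_sub (integrable_log_sq_dot w)
      (integrable_log_sq_dot u), integral_log_sq_dot hu, integral_log_sq_dot hw]
    simp
  rw [← hint]
  refine (ofReal_integral_le_lintegral_ofReal (hdiff.sub (integrable_const _))).trans
    (lintegral_mono_ae ?_)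
  filter_upwards [ae_dot_ne_zero hu, ae_dot_ne_zero hw] with ξ hu0 hw0
  refine ENNReal.ofReal_le_ofReal ?_
  calc Real.log ((∑ i, ξ i * w i) ^ 2) - Real.log ((∑ i, ξ i * u i) ^ 2) - 2 * Real.log Λ
      = Real.log ((∑ i, ξ i * w i) ^ 2 / (Λ * ∑ i, ξ i * u i) ^ 2) := by
        rw [Real.log_div (by positivity) (by positivity), mul_pow,
          Real.log_mul (by positivity) (by positivity), Real.log_pow Λ]
        push_cast
        ring
    _ ≤ _ := Real.log_le_log (by positivity) (by linarith)

lemma sum_mul_log_sub_log_le {A : Type*} [Fintype A] {m t : A → ℝ} (hm : ∀ a, 0 ≤ m a)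
    (ht : ∀ a, 0 ≤ t a) (hmt : ∀ a, 0 < m a → 0 < t a) (hM : 0 < ∑ a, m a) :
    ∑ a, m a / (∑ b, m b) * (Real.log (t a) - Real.log (m a)) + Real.log (∑ a, m a) ≤
      Real.log (∑ a, t a) := by
  set M := ∑ a, m a
  set T := ∑ a, t a
  have hT : 0 < T := by
    obtain ⟨a, ha, hma⟩ := Finset.exists_lt_of_sum_lt (s := Finset.univ) (f := 0) (g := m)
      (by simpa using hM)
    exact Finset.sum_pos' (fun a _ => ht a) ⟨a, ha, hmt a hma⟩
  have hterm (a : A) : m a / M * (Real.log (t a) - Real.log (m a) + Real.log M - Real.log T) ≤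
      t a / T - m a / M := by
    rcases (hm a).eq_or_lt with h | h
    · simp [← h, div_nonneg (ht a) hT.le]
    · have hta := hmt a h
      calc _ = m a / M * Real.log (t a / m a * (M / T)) := by
            rw [Real.log_mul (by positivity) (by positivity), Real.log_div hta.ne' h.ne',
              Real.log_div hM.ne' hT.ne']
            ring
        _ ≤ m a / M * (t a / m a * (M / T) - 1) := by
            gcongr
            exact Real.log_le_sub_one_of_pos (by positivity)
        _ = t a / T - m a / M := by field_simp
  have hsum := Finset.sum_le_sum fun a (_ : a ∈ Finset.univ) => hterm a
  simp only [mul_sub, mul_add, Finset.sum_sub_distrib, Finset.sum_add_distrib, ← Finset.sum_mul,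
    ← Finset.sum_div, div_self hM.ne', div_self hT.ne', M, T] at hsum ⊢
  linarith

lemma log_sum_sq_le_lintegral {A : Type*} [Fintype A] (M : A → ι → ℝ) (r : ℝ)
    (hM : 0 < ∑ a, ∑ i, M a i ^ 2) :
    ENNReal.ofReal (Real.log (∑ a, ∑ i, M a i ^ 2) + gaussianLogMean + r) ≤
      ∫⁻ y, ENNReal.ofReal (Real.log (∑ a, (∑ i, y i * M a i) ^ 2) + r) ∂(gaussianPi ι) := by
  set m : A → ℝ := fun a => ∑ i, M a i ^ 2
  have hm (a : A) : 0 ≤ m a := Finset.sum_nonneg fun i _ => sq_nonneg _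
  set ψ : A → (ι → ℝ) → ℝ := fun a y =>
    m a / (∑ b, m b) * (Real.log ((∑ i, y i * M a i) ^ 2) - Real.log (m a))
  have hψ (a : A) : Integrable (ψ a) (gaussianPi ι) :=
    ((integrable_log_sq_dot (M a)).sub (integrable_const _)).const_mul _
  have hψ_int (a : A) : ∫ y, ψ a y ∂(gaussianPi ι) = m a / (∑ b, m b) * gaussianLogMean := by
    rcases (hm a).eq_or_lt with h | h
    · simp [ψ, ← h]
    · rw [integral_const_mul, integral_sub (integrable_log_sq_dot (M a)) (integrable_const _),
        integral_log_sq_dot h]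
      simp [m]
  have hint : ∫ y, (∑ a, ψ a y + (Real.log (∑ a, m a) + r)) ∂(gaussianPi ι) =
      Real.log (∑ a, m a) + gaussianLogMean + r := by
    rw [integral_add (integrable_finsetSum _ fun a _ => hψ a) (integrable_const _),
      integral_finsetSum _ fun a _ => hψ a]
    simp only [hψ_int, ← Finset.sum_mul, ← Finset.sum_div, div_self hM.ne', m]
    simp
    ring
  rw [← hint]
  refine (ofReal_integral_le_lintegral_ofReal ((integrable_finsetSum _ fun a _ => hψ a).add
    (integrable_const _))).trans (lintegral_mono_ae ?_)
  have hne : ∀ᵐ y ∂(gaussianPi ι), ∀ a, 0 < m a → ∑ i, y i * M a i ≠ 0 :=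
    ae_all_iff.2 fun a => by
      by_cases h : 0 < m a
      · simpa [h] using ae_dot_ne_zero h
      · simp [h]
  filter_upwards [hne] with y hy
  refine ENNReal.ofReal_le_ofReal ?_
  simp only [Pi.add_apply]
  linarith [sum_mul_log_sub_log_le hm (fun a => sq_nonneg (∑ i, y i * M a i))
    (fun a ha => by have := hy a ha; positivity) hM]

end LogGaussian

section Chain

variable {ι : Type*}

lemma directionalDeriv_sum_smul {A : Type*} [Fintype A] (F : A → MvPolynomial ι ℝ) (ξ : A → ℝ)
    (y : ι → ℝ) :
    directionalDeriv y (∑ a, ξ a • F a) = ∑ a, ξ a • directionalDeriv y (F a) := by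
  simp only [map_sum, Derivation.map_smul]

/-- The partial derivatives `∂_{s 0} ⋯ ∂_{s (j - 1)} f`. -/
noncomputable def iterPderiv (f : MvPolynomial ι ℝ) : (j : ℕ) → (Fin j → ι) → MvPolynomial ι ℝ
  | 0, _ => f
  | j + 1, s => pderiv (s 0) (iterPderiv f j (Fin.tail s))

lemma totalDegree_pderiv_le (i : ι) (f : MvPolynomial ι ℝ) :
    (pderiv i f).totalDegree ≤ f.totalDegree := by
  rw [congrArg (pderiv i) f.as_sum, map_sum]
  refine totalDegree_finsetSum_le fun a ha => ?_
  rw [pderiv_monomial]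
  exact (totalDegree_monomial_le _ _).trans
    ((Finsupp.degree_mono tsub_le_self).trans (le_totalDegree ha))

lemma totalDegree_iterPderiv_le (f : MvPolynomial ι ℝ) (j : ℕ) (s : Fin j → ι) :
    (iterPderiv f j s).totalDegree ≤ f.totalDegree := by
  induction j with
  | zero => exact le_rfl
  | succ j ih => exact (totalDegree_pderiv_le _ _).trans (ih (Fin.tail s))

lemma exists_iterPderiv_ne_zero_of_le {f : MvPolynomial ι ℝ} {i j : ℕ} (hij : i ≤ j)
    (h : ∃ s, iterPderiv f j s ≠ 0) : ∃ s, iterPderiv f i s ≠ 0 := by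
  induction j, hij using Nat.le_induction with
  | base => exact h
  | succ j _ ih =>
    obtain ⟨s, hs⟩ := h
    exact ih ⟨Fin.tail s, fun h0 => hs (by rw [iterPderiv, h0, map_zero])⟩

lemma measurable_logDirectionalDeriv_sum_smul [Finite ι] {A : Type*} [Fintype A]
    (Λ : ℝ) (F : A → MvPolynomial ι ℝ) :
    Measurable fun p : ((ι → ℝ) × (ι → ℝ)) × (A → ℝ) =>
      logDirectionalDeriv Λ (∑ a, p.2 a • F a) p.1 := by
  cases nonempty_fintype ι
  have heval (f : MvPolynomial ι ℝ) : Continuous fun x => eval x f := f.continuous_eval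
  unfold logDirectionalDeriv
  simp only [directionalDeriv_sum_smul]
  simp only [map_sum, smul_eval, eval_directionalDeriv]
  refine (Real.measurable_log.comp ?_).ennreal_ofReal
  refine measurable_const.add (Measurable.div (Continuous.measurable ?_)
    (Continuous.measurable ?_)) <;> fun_prop

variable [Fintype ι]

/-- For a finite family `F`, the logarithmic derivative at `x` of the random combination
`∑ a, ξ a • F a`, averaged over the direction and over Gaussian coefficients `ξ`. -/
noncomputable def meanLogDeriv {A : Type*} [Fintype A] (Λ : ℝ) (F : A → MvPolynomial ι ℝ)
    (x : ι → ℝ) : ENNReal :=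
  ∫⁻ y, ∫⁻ ξ, logDirectionalDeriv Λ (∑ a, ξ a • F a) (x, y) ∂(gaussianPi A) ∂(gaussianPi ι)

lemma measurable_meanLogDeriv {A : Type*} [Fintype A] (Λ : ℝ) (F : A → MvPolynomial ι ℝ) :
    Measurable (meanLogDeriv Λ F) :=
  Measurable.lintegral_prod_right' (ν := gaussianPi ι)
    (measurable_logDirectionalDeriv_sum_smul Λ F).lintegral_prod_right'

lemma lintegral_meanLogDeriv_le {A : Type*} [Fintype A] {m : ℕ} {Λ : ℝ} (hΛ : 0 < Λ)
    {F : A → MvPolynomial ι ℝ} (hF : ∀ a, (F a).totalDegree ≤ m) :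
    ∫⁻ x, meanLogDeriv Λ F x ∂(gaussianPi ι) ≤ ENNReal.ofReal (2 * m / Λ) := by
  have hmeas := measurable_logDirectionalDeriv_sum_smul Λ F
  calc ∫⁻ x, meanLogDeriv Λ F x ∂(gaussianPi ι)
      = ∫⁻ p, ∫⁻ ξ, logDirectionalDeriv Λ (∑ a, ξ a • F a) p ∂(gaussianPi A)
          ∂((gaussianPi ι).prod (gaussianPi ι)) :=
        (lintegral_prod _ hmeas.lintegral_prod_right'.aemeasurable).symm
    _ = ∫⁻ ξ, ∫⁻ p, logDirectionalDeriv Λ (∑ a, ξ a • F a) p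
          ∂((gaussianPi ι).prod (gaussianPi ι)) ∂(gaussianPi A) :=
        lintegral_lintegral_swap hmeas.aemeasurable
    _ ≤ ∫⁻ _, ENNReal.ofReal (2 * m / Λ) ∂(gaussianPi A) :=
        lintegral_mono fun ξ => lintegral_logDirectionalDeriv_le hΛ
          (totalDegree_finsetSum_le fun a _ => (totalDegree_smul_le _ _).trans (hF a))
    _ = ENNReal.ofReal (2 * m / Λ) := by rw [lintegral_const, measure_univ, mul_one]

lemma le_meanLogDeriv {A : Type*} [Fintype A] {Λ : ℝ} (hΛ : 0 < Λ) {F : A → MvPolynomial ι ℝ}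
    {x : ι → ℝ} (hF : 0 < ∑ a, eval x (F a) ^ 2)
    (hF' : 0 < ∑ a, ∑ i, eval x (pderiv i (F a)) ^ 2) :
    ENNReal.ofReal (Real.log (∑ a, ∑ i, eval x (pderiv i (F a)) ^ 2) -
      Real.log (∑ a, eval x (F a) ^ 2) + (gaussianLogMean - 2 * Real.log Λ)) ≤
      meanLogDeriv Λ F x := by
  convert! (log_sum_sq_le_lintegral (fun a i => eval x (pderiv i (F a)))
    (-Real.log (∑ a, eval x (F a) ^ 2) - 2 * Real.log Λ) hF').trans (lintegral_mono_ae ?_) using 2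
  · ring
  obtain ⟨a, -, ha⟩ := Finset.exists_lt_of_sum_lt (s := Finset.univ) (f := fun _ => (0 : ℝ))
    (g := fun a => ∑ i, eval x (pderiv i (F a)) ^ 2) (by simpa using hF')
  filter_upwards [ae_dot_ne_zero ha] with y hy
  have hw : 0 < ∑ b, (∑ i, y i * eval x (pderiv i (F b))) ^ 2 :=
    Finset.sum_pos' (fun b _ => sq_nonneg _) ⟨a, Finset.mem_univ a, by positivity⟩
  simp only [logDirectionalDeriv, directionalDeriv_sum_smul]
  simp only [map_sum, smul_eval, eval_directionalDeriv]
  exact (congrArg ENNReal.ofReal (by ring)).trans_le (log_ratio_le_lintegral hΛ hF hw)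

lemma sum_iterPderiv_succ {M : Type*} [AddCommMonoid M] (f : MvPolynomial ι ℝ) (j : ℕ)
    (φ : MvPolynomial ι ℝ → M) :
    ∑ s, φ (iterPderiv f (j + 1) s) = ∑ s, ∑ i, φ (pderiv i (iterPderiv f j s)) := by
  rw [← (Fin.consEquiv fun _ => ι).sum_comp, Fintype.sum_prod_type_right]
  simp [iterPderiv, Fin.consEquiv]

/-- The squared Euclidean length of the tensor of `j`-th derivatives of `f` at `x`. -/
noncomputable def derivNormSq (f : MvPolynomial ι ℝ) (j : ℕ) (x : ι → ℝ) : ℝ :=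
  ∑ s, eval x (iterPderiv f j s) ^ 2

lemma derivNormSq_zero (f : MvPolynomial ι ℝ) (x : ι → ℝ) : derivNormSq f 0 x = eval x f ^ 2 := by
  simp [derivNormSq, iterPderiv]

lemma ae_derivNormSq_pos {f : MvPolynomial ι ℝ} {j : ℕ} (h : ∃ s, iterPderiv f j s ≠ 0) :
    ∀ᵐ x ∂(gaussianPi ι), ∀ i ≤ j, 0 < derivNormSq f i x := by
  refine ae_all_iff.2 fun i => Filter.eventually_imp_distrib_left.2 fun hi => ?_
  obtain ⟨s, hs⟩ := exists_iterPderiv_ne_zero_of_le hi h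
  filter_upwards [ae_eval_ne_zero hs] with x hx
  exact Finset.sum_pos' (fun t _ => sq_nonneg _) ⟨s, Finset.mem_univ s, by positivity⟩

lemma le_sum_meanLogDeriv {Λ : ℝ} (hΛ : 0 < Λ) {f : MvPolynomial ι ℝ} {j : ℕ} {x : ι → ℝ}
    (h : ∀ i ≤ j, 0 < derivNormSq f i x) :
    ENNReal.ofReal (Real.log (derivNormSq f j x) - Real.log (derivNormSq f 0 x) +
      j * (gaussianLogMean - 2 * Real.log Λ)) ≤
      ∑ i ∈ Finset.range j, meanLogDeriv Λ (iterPderiv f i) x := by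
  induction j with
  | zero => simp
  | succ j ih =>
    have hsucc : ∑ s, ∑ i, eval x (pderiv i (iterPderiv f j s)) ^ 2 = derivNormSq f (j + 1) x :=
      (sum_iterPderiv_succ f j fun g => eval x g ^ 2).symm
    have hstep := le_meanLogDeriv hΛ (h j j.le_succ) (hsucc ▸ h (j + 1) le_rfl)
    rw [Finset.sum_range_succ]
    refine le_trans ?_ (add_le_add (ih fun i hi => h i (hi.trans j.le_succ)) hstep)
    refine le_trans (le_of_eq ?_) ENNReal.ofReal_add_le
    rw [hsucc]
    simp only [derivNormSq]
    push_cast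
    ring_nf

/-- The constant lost each time the size of a polynomial is compared with that of its gradient. -/
noncomputable def derivConst : ℝ := min (Real.exp (gaussianLogMean - 1)) 1

lemma derivConst_pos : 0 < derivConst := lt_min (Real.exp_pos _) one_pos

lemma derivConst_le_one : derivConst ≤ 1 := min_le_right _ _

lemma log_derivConst_le : Real.log derivConst ≤ gaussianLogMean - 1 :=
  (Real.log_le_log derivConst_pos (min_le_left _ _)).trans_eq (Real.log_exp _)

lemma natCast_le_sum_meanLogDeriv {Λ : ℝ} (hΛ : 0 < Λ) {f : MvPolynomial ι ℝ} {j : ℕ} {x : ι → ℝ}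
    (hpos : ∀ i ≤ j, 0 < derivNormSq f i x)
    (hlt : eval x f ^ 2 < (derivConst / Λ ^ 2) ^ j * derivNormSq f j x) :
    (j : ENNReal) ≤ ∑ i ∈ Finset.range j, meanLogDeriv Λ (iterPderiv f i) x := by
  refine le_trans ?_ (le_sum_meanLogDeriv hΛ hpos)
  rw [← ENNReal.ofReal_natCast]
  refine ENNReal.ofReal_le_ofReal ?_
  have hc := derivConst_pos
  rw [← derivNormSq_zero] at hlt
  have hlog := Real.log_lt_log (hpos 0 (Nat.zero_le j)) hlt
  rw [Real.log_mul (by positivity) (hpos j le_rfl).ne', Real.log_pow,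
    Real.log_div hc.ne' (by positivity), Real.log_pow] at hlog
  push_cast at hlog
  linarith [mul_le_mul_of_nonneg_left log_derivConst_le (Nat.cast_nonneg (α := ℝ) j)]

lemma measure_eval_sq_lt_derivNormSq {m : ℕ} {Λ : ℝ} (hΛ : 0 < Λ) {f : MvPolynomial ι ℝ}
    (hf : f.totalDegree ≤ m) (j : ℕ) :
    gaussianPi ι {x | eval x f ^ 2 < (derivConst / Λ ^ 2) ^ j * derivNormSq f j x} ≤
      ENNReal.ofReal (2 * m / Λ) := by
  rcases eq_or_ne j 0 with rfl | hj
  · simp [derivNormSq_zero]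
  by_cases h : ∃ s, iterPderiv f j s ≠ 0
  · have hmeas : Measurable fun x => ∑ i ∈ Finset.range j, meanLogDeriv Λ (iterPderiv f i) x :=
      Finset.measurable_sum _ fun i _ => measurable_meanLogDeriv Λ _
    refine (ENNReal.mul_le_mul_iff_right (a := (j : ENNReal)) (by simpa) (by simp)).1 ?_
    calc (j : ENNReal) *
          gaussianPi ι {x | eval x f ^ 2 < (derivConst / Λ ^ 2) ^ j * derivNormSq f j x}
        ≤ j * gaussianPi ι
            {x | (j : ENNReal) ≤ ∑ i ∈ Finset.range j, meanLogDeriv Λ (iterPderiv f i) x} := by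
          gcongr 1
          refine measure_mono_ae ?_
          filter_upwards [ae_derivNormSq_pos h] with x hx hlt
          exact natCast_le_sum_meanLogDeriv hΛ hx hlt
      _ ≤ ∫⁻ x, ∑ i ∈ Finset.range j, meanLogDeriv Λ (iterPderiv f i) x ∂(gaussianPi ι) :=
          mul_meas_ge_le_lintegral hmeas _
      _ ≤ ∑ i ∈ Finset.range j, ENNReal.ofReal (2 * m / Λ) := by
          rw [lintegral_finsetSum _ fun i _ => measurable_meanLogDeriv Λ _]
          exact Finset.sum_le_sum fun i _ => lintegral_meanLogDeriv_le hΛ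
            fun s => (totalDegree_iterPderiv_le f i s).trans hf
      _ = j * ENNReal.ofReal (2 * m / Λ) := by simp
  · push Not at h
    simp [derivNormSq, h, (sq_nonneg _).not_gt]

end Chain

/-! ### Anticoncentration -/

section HermiteWeight

variable {ι : Type*} [Fintype ι]

/-- The Hermite weight of `f` at level `l`: the squared `L²` norm of its degree-`l` homogeneous
part in the Hermite basis. -/
noncomputable def hermiteWeight [DecidableEq ι] (f : MvPolynomial ι ℝ) (l : ℕ) : ℝ :=
  ∑ α ∈ Finset.univ.piAntidiag l, mvHermiteCoeff α f ^ 2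

variable [DecidableEq ι]

lemma mem_univ_piAntidiag {l : ℕ} {α : ι → ℕ} :
    α ∈ Finset.univ.piAntidiag l ↔ ∑ i, α i = l := by
  simp

lemma hermiteWeight_nonneg (f : MvPolynomial ι ℝ) (l : ℕ) : 0 ≤ hermiteWeight f l :=
  Finset.sum_nonneg fun _ _ => sq_nonneg _

lemma hermiteWeight_zero (f : MvPolynomial ι ℝ) : hermiteWeight f 0 = gaussianExp f ^ 2 := by
  simp [hermiteWeight, mvHermiteCoeff_apply, mvHermite_zero]

lemma hermiteWeight_eq_zero {l : ℕ} {f : MvPolynomial ι ℝ} (hl : f.totalDegree < l) :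
    hermiteWeight f l = 0 :=
  Finset.sum_eq_zero fun α hα => by
    rw [mvHermiteCoeff_eq_zero_of_totalDegree_lt (by rwa [mem_univ_piAntidiag.1 hα]),
      zero_pow two_ne_zero]

lemma sum_multiIndicesLE_mul_sq (D : ℕ) (f : MvPolynomial ι ℝ) (φ : ℕ → ℝ) :
    ∑ α ∈ multiIndicesLE ι D, φ (∑ i, α i) * mvHermiteCoeff α f ^ 2 =
      ∑ l ∈ Finset.range (D + 1), φ l * hermiteWeight f l := by
  rw [← Finset.sum_fiberwise_of_maps_to (s := multiIndicesLE ι D) (g := fun α => ∑ i, α i)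
    fun α hα => Finset.mem_range.2 (Nat.lt_succ_of_le (mem_multiIndicesLE.1 hα))]
  refine Finset.sum_congr rfl fun l hl => ?_
  have hfilter : {α ∈ multiIndicesLE ι D | ∑ i, α i = l} = Finset.univ.piAntidiag l := by
    ext α
    have := Finset.mem_range.1 hl
    rw [Finset.mem_filter, mem_multiIndicesLE, mem_univ_piAntidiag]
    omega
  rw [hfilter, hermiteWeight, Finset.mul_sum]
  exact Finset.sum_congr rfl fun α hα => by rw [mem_univ_piAntidiag.1 hα]

lemma gaussianExp_sq_eq_sum_hermiteWeight {D : ℕ} {f : MvPolynomial ι ℝ}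
    (hf : f.totalDegree ≤ D) :
    gaussianExp (f ^ 2) = ∑ l ∈ Finset.range (D + 1), hermiteWeight f l := by
  rw [gaussianExp_sq_eq_sum hf]
  simpa using sum_multiIndicesLE_mul_sq D f fun _ => 1

lemma hermiteWeight_pderiv (f : MvPolynomial ι ℝ) (i : ι) (l : ℕ) :
    hermiteWeight (pderiv i f) l =
      ∑ β ∈ Finset.univ.piAntidiag (l + 1), (β i : ℝ) * mvHermiteCoeff β f ^ 2 := by
  refine Finset.sum_of_injOn (fun α => α + Pi.single i 1) (fun _ _ _ _ => add_right_cancel)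
    (fun α hα => ?_) (fun β hβ hβ' => ?_) fun α _ => ?_
  · simpa [Finset.sum_add_distrib] using hα
  · have hβi : β i = 0 := by
      by_contra hne
      obtain ⟨γ, rfl⟩ := exists_eq_add_single_one hne
      exact hβ' ⟨γ, by simpa [Finset.sum_add_distrib] using hβ, rfl⟩
    simp [hβi]
  · rw [mvHermiteCoeff_pderiv, mul_pow, Real.sq_sqrt (by positivity)]
    simp

lemma sum_hermiteWeight_pderiv (f : MvPolynomial ι ℝ) (l : ℕ) :
    ∑ i, hermiteWeight (pderiv i f) l = (l + 1) * hermiteWeight f (l + 1) := by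
  simp_rw [hermiteWeight_pderiv]
  rw [Finset.sum_comm, hermiteWeight, Finset.mul_sum]
  refine Finset.sum_congr rfl fun β hβ => ?_
  rw [← Finset.sum_mul, ← Nat.cast_sum, mem_univ_piAntidiag.1 hβ, Nat.cast_succ]

lemma factorial_mul_sum_hermiteWeight_iterPderiv (f : MvPolynomial ι ℝ) (j l : ℕ) :
    (l.factorial : ℝ) * ∑ s, hermiteWeight (iterPderiv f j s) l =
      (l + j).factorial * hermiteWeight f (l + j) := by
  induction j generalizing l with
  | zero => simp [iterPderiv]
  | succ j ih =>
    have hstep := ih (l + 1)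
    rw [Nat.factorial_succ, Nat.cast_mul, Nat.cast_succ] at hstep
    rw [sum_iterPderiv_succ f j fun g => hermiteWeight g l, ← add_assoc, add_right_comm, ← hstep]
    simp_rw [sum_hermiteWeight_pderiv, ← Finset.mul_sum]
    ring

lemma sum_gaussianExp_iterPderiv_sq (f : MvPolynomial ι ℝ) (j : ℕ) :
    ∑ s, gaussianExp (iterPderiv f j s) ^ 2 = j.factorial * hermiteWeight f j := by
  simpa [hermiteWeight_zero] using factorial_mul_sum_hermiteWeight_iterPderiv f j 0

end HermiteWeight

section FamilyConcentration

variable {ι : Type*} [Fintype ι]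

lemma measure_le_eval_le {p : MvPolynomial ι ℝ} (hp : ∀ x, 0 ≤ eval x p) {t b : ℝ} (ht : 0 < t)
    (hb : gaussianExp p ≤ b * t) : gaussianPi ι {x | t ≤ eval x p} ≤ ENNReal.ofReal b := by
  have hmarkov := mul_meas_ge_le_integral_of_nonneg (μ := gaussianPi ι) (.of_forall hp)
    (integrable_eval_gaussianPi p) t
  rw [← gaussianExp_apply] at hmarkov
  rw [← ofReal_measureReal (measure_ne_top _ _)]
  exact ENNReal.ofReal_le_ofReal (le_of_mul_le_mul_left (by linarith) ht)

variable {A : Type*} [Fintype A]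

/-- The polynomial `⟨F - E F, E F⟩`: the fluctuation of a family `F` along its mean. -/
noncomputable def meanFluctuation (F : A → MvPolynomial ι ℝ) : MvPolynomial ι ℝ :=
  ∑ a, gaussianExp (F a) • F a - C (∑ a, gaussianExp (F a) ^ 2)

lemma eval_meanFluctuation (F : A → MvPolynomial ι ℝ) (x : ι → ℝ) :
    eval x (meanFluctuation F) =
      ∑ a, gaussianExp (F a) * eval x (F a) - ∑ a, gaussianExp (F a) ^ 2 := by
  simp [meanFluctuation, smul_eval]

lemma totalDegree_meanFluctuation_le {D : ℕ} {F : A → MvPolynomial ι ℝ}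
    (hF : ∀ a, (F a).totalDegree ≤ D) : (meanFluctuation F).totalDegree ≤ D :=
  (totalDegree_sub _ _).trans (max_le (totalDegree_finsetSum_le fun a _ =>
    (totalDegree_smul_le _ _).trans (hF a)) (by rw [totalDegree_C]; exact Nat.zero_le D))

lemma sq_div_four_le_eval_meanFluctuation_sq {F : A → MvPolynomial ι ℝ} {x : ι → ℝ}
    (hx : ∑ a, eval x (F a) ^ 2 < (∑ a, gaussianExp (F a) ^ 2) / 4) :
    (∑ a, gaussianExp (F a) ^ 2) ^ 2 / 4 ≤ eval x (meanFluctuation F) ^ 2 := by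
  have hM : 0 ≤ ∑ a, gaussianExp (F a) ^ 2 := Finset.sum_nonneg fun _ _ => sq_nonneg _
  have hcauchy := Finset.sum_mul_sq_le_sq_mul_sq Finset.univ (fun a => gaussianExp (F a))
    fun a => eval x (F a)
  rw [eval_meanFluctuation]
  set M := ∑ a, gaussianExp (F a) ^ 2
  have hproj := le_of_abs_le (abs_le_of_sq_le_sq (b := M / 2) (hcauchy.trans (by nlinarith))
    (by positivity))
  nlinarith

lemma mvHermiteCoeff_meanFluctuation (F : A → MvPolynomial ι ℝ) (α : ι → ℕ) :
    mvHermiteCoeff α (meanFluctuation F) = ∑ a, gaussianExp (F a) * mvHermiteCoeff α (F a) -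
      if α = 0 then ∑ a, gaussianExp (F a) ^ 2 else 0 := by
  have hC (c : ℝ) : (C c : MvPolynomial ι ℝ) = c • mvHermite 0 := by
    rw [mvHermite_zero, smul_eq_C_mul, mul_one]
  rw [meanFluctuation, hC]
  simp [map_sum, mvHermiteCoeff_mvHermite, eq_comm]

lemma gaussianExp_meanFluctuation (F : A → MvPolynomial ι ℝ) :
    gaussianExp (meanFluctuation F) = 0 := by
  have hcoeff (f : MvPolynomial ι ℝ) : mvHermiteCoeff 0 f = gaussianExp f := by
    rw [mvHermiteCoeff_apply, mvHermite_zero, mul_one]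
  have h := mvHermiteCoeff_meanFluctuation F 0
  simp only [hcoeff, ← sq, if_true, sub_self] at h
  exact h

lemma hermiteWeight_meanFluctuation_le [DecidableEq ι] (F : A → MvPolynomial ι ℝ)
    {l : ℕ} (hl : l ≠ 0) :
    hermiteWeight (meanFluctuation F) l ≤
      (∑ a, gaussianExp (F a) ^ 2) * ∑ a, hermiteWeight (F a) l := by
  simp only [hermiteWeight]
  rw [Finset.sum_comm, Finset.mul_sum]
  refine Finset.sum_le_sum fun α hα => ?_
  have hα0 : α ≠ 0 := by
    rintro rfl
    exact hl (by simpa using (mem_univ_piAntidiag.1 hα).symm)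
  rw [mvHermiteCoeff_meanFluctuation, if_neg hα0, sub_zero]
  exact Finset.sum_mul_sq_le_sq_mul_sq _ _ _

lemma gaussianExp_meanFluctuation_pow_le [DecidableEq ι] {D : ℕ} {F : A → MvPolynomial ι ℝ}
    (hF : ∀ a, (F a).totalDegree ≤ D) (s : ℕ) :
    gaussianExp (meanFluctuation F ^ (2 * 2 ^ s)) ≤ ((∑ a, gaussianExp (F a) ^ 2) *
      ∑ l ∈ Finset.Ico 1 (D + 1), (2 ^ (s + 1)) ^ l * ∑ a, hermiteWeight (F a) l) ^ 2 ^ s := by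
  refine (gaussianExp_pow_le (totalDegree_meanFluctuation_le hF) s).trans
    (pow_le_pow_left₀ (Finset.sum_nonneg fun _ _ => by positivity) ?_ _)
  rw [sum_multiIndicesLE_mul_sq D _ fun l => (2 ^ (s + 1) : ℝ) ^ l, Finset.range_eq_Ico,
    Finset.sum_eq_sum_Ico_succ_bot D.succ_pos, hermiteWeight_zero, gaussianExp_meanFluctuation,
    zero_pow two_ne_zero, mul_zero, zero_add, Finset.mul_sum]
  refine Finset.sum_le_sum fun l hl => ?_
  rw [mul_left_comm]
  gcongr
  exact hermiteWeight_meanFluctuation_le F (by have := (Finset.mem_Ico.1 hl).1; omega)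

lemma measure_sum_sq_lt_le [DecidableEq ι] {D : ℕ} {F : A → MvPolynomial ι ℝ}
    (hF : ∀ a, (F a).totalDegree ≤ D)
    (s : ℕ) (hpos : 0 < ∑ a, gaussianExp (F a) ^ 2)
    (hvar : ∑ l ∈ Finset.Ico 1 (D + 1), (2 ^ (s + 1)) ^ l * ∑ a, hermiteWeight (F a) l ≤
      (∑ a, gaussianExp (F a) ^ 2) / 16) :
    gaussianPi ι {x | ∑ a, eval x (F a) ^ 2 < (∑ a, gaussianExp (F a) ^ 2) / 4} ≤
      ENNReal.ofReal ((1 / 4) ^ 2 ^ s) := by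
  have hmoment := gaussianExp_meanFluctuation_pow_le hF s
  set M := ∑ a, gaussianExp (F a) ^ 2
  have hnonneg (x : ι → ℝ) : 0 ≤ eval x (meanFluctuation F ^ (2 * 2 ^ s)) := by
    rw [map_pow, pow_mul]
    positivity
  refine (measure_mono fun x hx => ?_).trans (measure_le_eval_le hnonneg
    (t := (M ^ 2 / 4) ^ 2 ^ s) (by positivity) (hmoment.trans ?_))
  · change (M ^ 2 / 4) ^ 2 ^ s ≤ _
    rw [map_pow, pow_mul]
    exact pow_le_pow_left₀ (by positivity) (sq_div_four_le_eval_meanFluctuation_sq hx) _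
  · rw [← mul_pow]
    refine pow_le_pow_left₀ (mul_nonneg hpos.le (Finset.sum_nonneg fun l _ => mul_nonneg
      (by positivity) (Finset.sum_nonneg fun a _ => hermiteWeight_nonneg _ _))) ?_ _
    nlinarith

end FamilyConcentration

section DominantLevel

variable {ι : Type*} [Fintype ι] [DecidableEq ι]

/-- A level `j` maximizing `l! * B ^ l` times the Hermite weight. Beyond such a level the Hermite
expansion of the tensor of `j`-th derivatives decays geometrically. -/
def IsDominantLevel (B : ℝ) (f : MvPolynomial ι ℝ) (j : ℕ) : Prop :=
  ∀ l, l.factorial * hermiteWeight f l * B ^ l ≤ j.factorial * hermiteWeight f j * B ^ j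

lemma exists_isDominantLevel {D : ℕ} {f : MvPolynomial ι ℝ} (hf : f.totalDegree ≤ D) {B : ℝ}
    (hB : 0 ≤ B) : ∃ j ≤ D, IsDominantLevel B f j := by
  obtain ⟨j, hjD, hj⟩ := Finset.exists_max_image (Finset.range (D + 1))
    (fun l => l.factorial * hermiteWeight f l * B ^ l) ⟨0, by simp⟩
  refine ⟨j, Nat.lt_succ_iff.1 (Finset.mem_range.1 hjD), fun l => ?_⟩
  rcases le_or_gt l D with hl | hl
  · exact hj l (Finset.mem_range.2 (Nat.lt_succ_of_le hl))
  · rw [hermiteWeight_eq_zero (hf.trans_lt hl), mul_zero, zero_mul]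
    exact mul_nonneg (mul_nonneg (Nat.cast_nonneg _) (hermiteWeight_nonneg f j)) (by positivity)

lemma sum_geometric_le_two {q : ℝ} (h0 : 0 ≤ q) (h1 : q ≤ 1 / 2) (D : ℕ) :
    ∑ l ∈ Finset.range D, q ^ l ≤ 2 :=
  (Finset.sum_le_sum fun l _ => pow_le_pow_left₀ h0 h1 l).trans (sum_geometric_two_le D)

variable {f : MvPolynomial ι ℝ} {B : ℝ} {j : ℕ}

lemma IsDominantLevel.hermiteWeight_le (h : IsDominantLevel B f j) (hB : 0 < B) (l : ℕ) :
    hermiteWeight f l ≤ (1 / B) ^ l * (B ^ j * (j.factorial * hermiteWeight f j)) := by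
  rw [one_div, inv_pow, ← div_eq_inv_mul, le_div_iff₀ (by positivity), mul_comm (B ^ j)]
  refine (mul_le_mul_of_nonneg_right ?_ (by positivity)).trans (h l)
  exact le_mul_of_one_le_left (hermiteWeight_nonneg f l) (by exact_mod_cast l.factorial_pos)

lemma IsDominantLevel.gaussianExp_sq_le (h : IsDominantLevel B f j) (hB : 2 ≤ B) :
    gaussianExp (f ^ 2) ≤ 2 * (B ^ j * (j.factorial * hermiteWeight f j)) := by
  rw [gaussianExp_sq_eq_sum_hermiteWeight le_rfl]
  refine (Finset.sum_le_sum fun l _ => h.hermiteWeight_le (by linarith) l).trans ?_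
  rw [← Finset.sum_mul]
  exact mul_le_mul_of_nonneg_right (sum_geometric_le_two (by positivity)
    (one_div_le_one_div_of_le two_pos hB) _) (mul_nonneg (by positivity)
    (mul_nonneg (by positivity) (hermiteWeight_nonneg f j)))

lemma IsDominantLevel.sum_hermiteWeight_iterPderiv_le (h : IsDominantLevel B f j) (hB : 0 < B)
    (l : ℕ) :
    ∑ s, hermiteWeight (iterPderiv f j s) l ≤ j.factorial * hermiteWeight f j * (1 / B) ^ l := by
  rw [one_div, inv_pow, ← div_eq_mul_inv, le_div_iff₀ (by positivity)]
  refine le_of_mul_le_mul_right ?_ (pow_pos hB j)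
  calc (∑ s, hermiteWeight (iterPderiv f j s) l) * B ^ l * B ^ j
      ≤ (l.factorial * ∑ s, hermiteWeight (iterPderiv f j s) l) * B ^ l * B ^ j := by
        gcongr
        exact le_mul_of_one_le_left (Finset.sum_nonneg fun s _ => hermiteWeight_nonneg _ _)
          (by exact_mod_cast l.factorial_pos)
    _ = (l + j).factorial * hermiteWeight f (l + j) * B ^ (l + j) := by
        rw [factorial_mul_sum_hermiteWeight_iterPderiv, pow_add, mul_assoc _ (B ^ l)]
    _ ≤ _ := h (l + j)

lemma IsDominantLevel.measure_derivNormSq_lt_le {s : ℕ} (h : IsDominantLevel (64 * 2 ^ s) f j)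
    (hpos : 0 < hermiteWeight f j) :
    gaussianPi ι {x | derivNormSq f j x < j.factorial * hermiteWeight f j / 4} ≤
      ENNReal.ofReal ((1 / 4) ^ 2 ^ s) := by
  have hmean := sum_gaussianExp_iterPderiv_sq f j
  rw [← hmean]
  refine measure_sum_sq_lt_le (totalDegree_iterPderiv_le f j) s (by rw [hmean]; positivity) ?_
  rw [hmean]
  set M : ℝ := j.factorial * hermiteWeight f j
  calc ∑ l ∈ Finset.Ico 1 (f.totalDegree + 1),
        (2 ^ (s + 1) : ℝ) ^ l * ∑ a, hermiteWeight (iterPderiv f j a) l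
      ≤ ∑ l ∈ Finset.Ico 1 (f.totalDegree + 1), M * (1 / 32) ^ l := by
        refine Finset.sum_le_sum fun l _ => ?_
        have hratio : (2 : ℝ) ^ (s + 1) * (1 / (64 * 2 ^ s)) = 1 / 32 := by
          rw [pow_succ]
          field_simp
          norm_num
        rw [← hratio, mul_pow, mul_left_comm]
        gcongr
        exact h.sum_hermiteWeight_iterPderiv_le (by positivity) l
    _ = M / 32 * ∑ l ∈ Finset.range f.totalDegree, (1 / 32) ^ l := by
        rw [Finset.sum_Ico_eq_sum_range, Finset.mul_sum]
        exact Finset.sum_congr (by simp) fun l _ => by ring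
    _ ≤ M / 32 * 2 := by
        gcongr
        exact sum_geometric_le_two (by norm_num) (by norm_num) _
    _ = M / 16 := by ring

lemma one_lt_log_three_div {β : ℝ} (h0 : 0 < β) (h1 : β < 1) : 1 < Real.log (3 / β) := by
  rw [Real.lt_log_iff_exp_lt (by positivity), lt_div_iff₀ h0]
  nlinarith [Real.exp_one_lt_d9, Real.exp_pos 1]

lemma exists_pow_two_between {L : ℝ} (hL : 1 ≤ L) : ∃ s : ℕ, L ≤ 2 ^ s ∧ (2 : ℝ) ^ s ≤ 2 * L := by
  obtain ⟨n, hn, hn'⟩ := exists_nat_pow_near hL one_lt_two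
  exact ⟨n + 1, hn'.le, by rw [pow_succ]; linarith⟩

lemma one_fourth_pow_two_pow_le {β : ℝ} (hβ : 0 < β) {s : ℕ} (hs : Real.log (3 / β) ≤ 2 ^ s) :
    (1 / 4 : ℝ) ^ 2 ^ s ≤ β / 3 :=
  calc (1 / 4 : ℝ) ^ 2 ^ s ≤ Real.exp (-1) ^ 2 ^ s := by
        gcongr
        rw [Real.exp_neg, ← one_div]
        exact one_div_le_one_div_of_le (Real.exp_pos _) (by linarith [Real.exp_one_lt_d9])
    _ = Real.exp (-2 ^ s) := by
        rw [← Real.exp_nat_mul]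
        push_cast
        ring_nf
    _ ≤ Real.exp (-Real.log (3 / β)) := Real.exp_le_exp.2 (by linarith)
    _ = β / 3 := by rw [Real.exp_neg, Real.exp_log (by positivity), inv_div]

lemma IsDominantLevel.le_derivNormSq {D : ℕ} {q : ℝ} {x : ι → ℝ} (h : IsDominantLevel B f j)
    (hB : 2 ≤ B) (hjD : j ≤ D) (hq : 0 ≤ q) (hq1 : q ≤ 1)
    (hx : j.factorial * hermiteWeight f j / 4 ≤ derivNormSq f j x) :
    q ^ D / 8 * gaussianExp (f ^ 2) ≤ (q * B) ^ j * derivNormSq f j x := by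
  have : 0 < B := by linarith
  calc q ^ D / 8 * gaussianExp (f ^ 2)
      ≤ q ^ j / 8 * (2 * (B ^ j * (j.factorial * hermiteWeight f j))) := by
        refine mul_le_mul ?_ (h.gaussianExp_sq_le hB) ?_ (by positivity)
        · linarith [pow_le_pow_of_le_one hq hq1 hjD]
        · exact gaussianExp_nonneg fun x => by rw [map_pow]; positivity
    _ = (q * B) ^ j * (j.factorial * hermiteWeight f j / 4) := by
        rw [mul_pow q B]
        ring
    _ ≤ _ := by gcongr

end DominantLevel

section Anticoncentration

/-- The factor lost per degree in `measure_eval_sq_lt_le`. -/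
noncomputable def smallBallRatio (D : ℕ) (β : ℝ) : ℝ :=
  derivConst * β ^ 2 / (2048 * D ^ 2 * Real.log (3 / β))

variable {D : ℕ} {β : ℝ}

lemma smallBallRatio_nonneg (hβ0 : 0 < β) (hβ1 : β < 1) : 0 ≤ smallBallRatio D β := by
  have := derivConst_pos
  have := one_lt_log_three_div hβ0 hβ1
  unfold smallBallRatio
  positivity

lemma smallBallRatio_le_one (hD : 1 ≤ D) (hβ0 : 0 < β) (hβ1 : β < 1) : smallBallRatio D β ≤ 1 := by
  have hL := one_lt_log_three_div hβ0 hβ1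
  have hDR : (1 : ℝ) ≤ D ^ 2 := one_le_pow₀ (by exact_mod_cast hD)
  refine (div_le_one₀ (by positivity)).2 ?_
  calc derivConst * β ^ 2 ≤ 1 * 1 :=
        mul_le_mul derivConst_le_one (pow_le_one₀ hβ0.le hβ1.le) (by positivity) zero_le_one
    _ ≤ 2048 * D ^ 2 * Real.log (3 / β) := by nlinarith

lemma smallBallRatio_mul_le (hD : 1 ≤ D) (hβ0 : 0 < β) (hβ1 : β < 1) {s : ℕ}
    (hs : (2 : ℝ) ^ s ≤ 2 * Real.log (3 / β)) :
    smallBallRatio D β * (64 * 2 ^ s) ≤ derivConst / (4 * D / β) ^ 2 := by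
  have hL := one_lt_log_three_div hβ0 hβ1
  have heq : derivConst / (4 * D / β) ^ 2 = smallBallRatio D β * (128 * Real.log (3 / β)) := by
    unfold smallBallRatio
    field_simp
    ring
  rw [heq]
  exact mul_le_mul_of_nonneg_left (by linarith) (smallBallRatio_nonneg hβ0 hβ1)

/-- Anticoncentration of polynomials under the Gaussian measure. Differentiating `f` up to a
dominant level yields a tensor that is close to its mean, and each of the differentiations only
costs a factor. -/
theorem measure_eval_sq_lt_le {ι : Type*} [Fintype ι] {f : MvPolynomial ι ℝ} (hD : 1 ≤ D)
    (hf : f.totalDegree ≤ D) (hβ0 : 0 < β) (hβ1 : β < 1) :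
    gaussianPi ι {x | eval x f ^ 2 < smallBallRatio D β ^ D / 8 * gaussianExp (f ^ 2)} ≤
      ENNReal.ofReal β := by
  classical
  obtain ⟨s, hs, hs'⟩ := exists_pow_two_between (one_lt_log_three_div hβ0 hβ1).le
  have hB : (2 : ℝ) ≤ 64 * 2 ^ s := by linarith [one_le_pow₀ (one_le_two (α := ℝ)) (n := s)]
  obtain ⟨j, hjD, hj⟩ := exists_isDominantLevel hf (B := 64 * 2 ^ s) (by positivity)
  rcases (hermiteWeight_nonneg f j).eq_or_lt with hzero | hpos
  · have hf0 : gaussianExp (f ^ 2) ≤ 0 := by simpa [← hzero] using hj.gaussianExp_sq_le hB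
    have hempty (x : ι → ℝ) :
        ¬ eval x f ^ 2 < smallBallRatio D β ^ D / 8 * gaussianExp (f ^ 2) :=
      not_lt.2 <| (mul_nonpos_of_nonneg_of_nonpos
        (by have := smallBallRatio_nonneg (D := D) hβ0 hβ1; positivity) hf0).trans (sq_nonneg _)
    simp [hempty]
  have hΛ : 0 < 4 * D / β := by positivity
  have hsub : {x | eval x f ^ 2 < smallBallRatio D β ^ D / 8 * gaussianExp (f ^ 2)} ⊆
      {x | derivNormSq f j x < j.factorial * hermiteWeight f j / 4} ∪
      {x | eval x f ^ 2 < (derivConst / (4 * D / β) ^ 2) ^ j * derivNormSq f j x} := by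
    intro x (hx : eval x f ^ 2 < _)
    refine or_iff_not_imp_left.2 fun hlarge => hx.trans_le ?_
    have hq := smallBallRatio_nonneg (D := D) hβ0 hβ1
    refine (hj.le_derivNormSq hB hjD hq (smallBallRatio_le_one hD hβ0 hβ1)
      (not_lt.1 hlarge)).trans (mul_le_mul_of_nonneg_right (pow_le_pow_left₀ (by positivity)
        (smallBallRatio_mul_le hD hβ0 hβ1 hs') j) (Finset.sum_nonneg fun _ _ => sq_nonneg _))
  refine (measure_mono hsub).trans ((measure_union_le _ _).trans ((add_le_add
    (hj.measure_derivNormSq_lt_le hpos) (measure_eval_sq_lt_derivNormSq hΛ hf j)).trans ?_))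
  rw [← ENNReal.ofReal_add (by positivity) (by positivity)]
  refine ENNReal.ofReal_le_ofReal ?_
  have hprob : 2 * D / (4 * D / β) = β / 2 := by field_simp; norm_num
  linarith [one_fourth_pow_two_pow_le hβ0 hs]

end Anticoncentration

/-! ### Zooms of Hermite expansions -/

section Mehler

section RaisingOperator

variable {R A : Type*} [CommRing R] [CommRing A] [Algebra R A]

/-- The operator `z - δ` on a commutative algebra. For `δ = d / dz` it raises the degree of the
Hermite polynomials. -/
def hermiteRaise (z : A) (δ : Derivation R A A) : Module.End R A :=
  LinearMap.mulLeft R z - (δ : A →ₗ[R] A)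

lemma hermiteRaise_apply (z : A) (δ : Derivation R A A) (f : A) :
    hermiteRaise z δ f = z * f - δ f := rfl

lemma hermiteRaise_pow_apply {z g : A} {δ : Derivation R A A} (hz : δ z = 1) (hg : δ g = 0)
    (m : ℕ) :
    (hermiteRaise z δ ^ m) g =
      Polynomial.aeval z ((Polynomial.hermite m).map (Int.castRingHom R)) * g := by
  induction m with
  | zero => simp
  | succ m ih =>
    rw [pow_succ', Module.End.mul_apply, ih, hermiteRaise_apply, Derivation.leibniz,
      Derivation.map_aeval, hz, hg, Polynomial.hermite_succ, Polynomial.map_sub,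
      Polynomial.map_mul, Polynomial.map_X, Polynomial.derivative_map]
    simp
    ring

end RaisingOperator

lemma pderiv_comm {σ : Type*} (i j : σ) (f : MvPolynomial σ ℝ) :
    pderiv i (pderiv j f) = pderiv j (pderiv i f) := by
  classical
  have h : ⁅pderiv (R := ℝ) i, pderiv j⁆ = 0 :=
    derivation_ext fun k => by
      rw [Derivation.commutator_apply, pderiv_X, pderiv_X, Pi.single_apply, Pi.single_apply]
      split_ifs <;> simp
  exact sub_eq_zero.1 (by rw [← Derivation.commutator_apply, h, Derivation.zero_apply])

lemma commute_hermiteRaise_X {σ : Type*} {i j : σ} (h : i ≠ j) :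
    Commute (hermiteRaise (X i) (pderiv (R := ℝ) i)) (hermiteRaise (X j) (pderiv j)) := by
  refine LinearMap.ext fun f => ?_
  simp only [Module.End.mul_apply, hermiteRaise_apply, map_sub, Derivation.leibniz,
    pderiv_X_of_ne h, pderiv_X_of_ne h.symm, smul_eq_mul, pderiv_comm i j]
  ring

lemma hermiteRaise_X_pow_pow_one {σ : Type*} {i j : σ} (h : i ≠ j) (p q : ℕ) :
    (hermiteRaise (X i) (pderiv (R := ℝ) i) ^ p) ((hermiteRaise (X j) (pderiv j) ^ q) 1) =
      Polynomial.aeval (X i) ((Polynomial.hermite p).map (Int.castRingHom ℝ)) *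
        Polynomial.aeval (X j) ((Polynomial.hermite q).map (Int.castRingHom ℝ)) := by
  rw [hermiteRaise_pow_apply (pderiv_X_self j) (pderiv_one (R := ℝ) (i := j)), mul_one,
    hermiteRaise_pow_apply (pderiv_X_self i) (pderiv_polynomial_aeval_X_of_ne h.symm _)]

lemma eval_hermite_rotate {a b : ℝ} (hab : a ^ 2 + b ^ 2 = 1) (s t : ℝ) (m : ℕ) :
    ((Polynomial.hermite m).map (Int.castRingHom ℝ)).eval (a * s + b * t) =
      ∑ q ∈ Finset.range (m + 1), (m.choose q : ℝ) *
        (a ^ (m - q) * ((Polynomial.hermite (m - q)).map (Int.castRingHom ℝ)).eval s *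
          (b ^ q * ((Polynomial.hermite q).map (Int.castRingHom ℝ)).eval t)) := by
  let A (i : Fin 2) := hermiteRaise (X i) (pderiv (R := ℝ) i)
  let z : MvPolynomial (Fin 2) ℝ := a • X 0 + b • X 1
  let δ : Derivation ℝ (MvPolynomial (Fin 2) ℝ) (MvPolynomial (Fin 2) ℝ) :=
    a • pderiv 0 + b • pderiv 1
  have hA : hermiteRaise z δ = b • A 1 + a • A 0 := by
    refine LinearMap.ext fun f => ?_
    simp only [z, δ, A, hermiteRaise_apply, Derivation.add_apply, Derivation.smul_apply,
      LinearMap.add_apply, LinearMap.smul_apply, smul_eq_C_mul]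
    ring
  have hz : δ z = 1 := by simp [z, δ, ← add_smul, smul_smul, ← sq, hab]
  have hcomm : Commute (b • A 1) (a • A 0) :=
    ((commute_hermiteRaise_X (by decide)).smul_left b).smul_right a
  have hpow := hermiteRaise_pow_apply hz (Derivation.map_one_eq_zero δ) m
  rw [hA, hcomm.add_pow, LinearMap.sum_apply, mul_one] at hpow
  have heval := congrArg (eval ![s, t]) hpow.symm
  rw [map_sum] at heval
  convert! heval using 1
  · simp [z, eval_polynomial_aeval]
  · refine Finset.sum_congr rfl fun q _ => ?_
    rw [← nsmul_eq_mul', smul_pow, smul_pow, smul_mul_smul_comm, LinearMap.smul_apply,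
      LinearMap.smul_apply, Module.End.mul_apply, hermiteRaise_X_pow_pow_one (by decide)]
    simp [eval_polynomial_aeval, smul_eval]
    ring

lemma sqrt_factorial_eq_of_le {m q : ℕ} (hq : q ≤ m) :
    √(m.factorial : ℝ) = √(m.choose q) * √(q.factorial) * √((m - q).factorial) := by
  rw [← Real.sqrt_mul (by positivity), ← Real.sqrt_mul (by positivity)]
  exact_mod_cast congrArg (fun k : ℕ => √(k : ℝ)) (Nat.choose_mul_factorial_mul_factorial hq).symm

lemma hermiteFn_rotate {a b : ℝ} (hab : a ^ 2 + b ^ 2 = 1) (s t : ℝ) (m : ℕ) :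
    hermiteFn m (a * s + b * t) = ∑ q ∈ Finset.range (m + 1),
      (√(m.choose q : ℝ) * a ^ (m - q) * b ^ q) * hermiteFn (m - q) s * hermiteFn q t := by
  rw [hermiteFn, eval_hermite_rotate hab, Finset.sum_div]
  refine Finset.sum_congr rfl fun q hq => ?_
  have hqm : q ≤ m := Nat.lt_succ_iff.1 (Finset.mem_range.1 hq)
  have hchoose : (0 : ℝ) < m.choose q := by exact_mod_cast Nat.choose_pos hqm
  rw [hermiteFn, hermiteFn, sqrt_factorial_eq_of_le hqm]
  field_simp
  rw [Real.sq_sqrt hchoose.le]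
  ring

end Mehler

section ZoomExpansion

lemma natDegree_hermitePoly_le (k : ℕ) : (hermitePoly k).natDegree ≤ k :=
  (Polynomial.natDegree_smul_le _ _).trans
    (Polynomial.natDegree_map_le.trans_eq Polynomial.natDegree_hermite)

lemma totalDegree_polynomial_aeval_X_le {ι : Type*} (i : ι) (p : Polynomial ℝ) :
    (Polynomial.aeval (X i : MvPolynomial ι ℝ) p).totalDegree ≤ p.natDegree := by
  rw [Polynomial.aeval_eq_sum_range]
  refine totalDegree_finsetSum_le fun j hj => (totalDegree_smul_le _ _).trans ?_
  rw [totalDegree_X_pow]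
  exact Nat.lt_succ_iff.1 (Finset.mem_range.1 hj)

lemma totalDegree_mvHermite_le {ι : Type*} [Fintype ι] (α : ι → ℕ) :
    (mvHermite α).totalDegree ≤ ∑ i, α i :=
  (totalDegree_finsetProd _ _).trans <| Finset.sum_le_sum fun i _ =>
    (totalDegree_polynomial_aeval_X_le i _).trans (natDegree_hermitePoly_le (α i))

lemma Iic_eq_piFinset_range {ι : Type*} [Fintype ι] [DecidableEq ι] (α : ι → ℕ) :
    Finset.Iic α = Fintype.piFinset fun i => Finset.range (α i + 1) := by
  ext β
  simp [Pi.le_def]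

/-- The coefficient of `h_γ(x) h_β(y)` in `h_{β+γ}(a x + b y)`. -/
noncomputable def zoomCoeff {ι : Type*} [Fintype ι] (a b : ℝ) (β γ : ι → ℕ) : ℝ :=
  ∏ i, (√((β i + γ i).choose (β i) : ℝ) * a ^ γ i * b ^ β i)

variable {n : ℕ} {lam : ℝ}

lemma eval_zoom (g : MvPolynomial (Fin n) ℝ) (lam : ℝ) (x y : Fin n → ℝ) :
    eval y (zoom g lam x) = eval (fun i => √(1 - lam) * x i + √lam * y i) g := by
  rw [zoom, aeval_def, eval₂_eq', eval_eq' _ g]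
  simp

lemma zoom_mvHermite (h0 : 0 ≤ lam) (h1 : lam ≤ 1) (x : Fin n → ℝ) (α : Fin n → ℕ) :
    zoom (mvHermite α) lam x = ∑ β ∈ Finset.Iic α,
      (zoomCoeff √(1 - lam) √lam β (α - β) * eval x (mvHermite (α - β))) • mvHermite β := by
  have hab : √(1 - lam) ^ 2 + √lam ^ 2 = 1 := by
    rw [Real.sq_sqrt h0, Real.sq_sqrt (by linarith)]
    ring
  refine MvPolynomial.funext fun y => ?_
  rw [eval_zoom, eval_mvHermite, Iic_eq_piFinset_range]
  simp_rw [hermiteFn_rotate hab]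
  rw [Finset.prod_univ_sum, map_sum]
  refine Finset.sum_congr rfl fun β hβ => ?_
  rw [smul_eval, eval_mvHermite, eval_mvHermite, zoomCoeff, ← Finset.prod_mul_distrib,
    ← Finset.prod_mul_distrib]
  refine Finset.prod_congr rfl fun i _ => ?_
  have hle : β i ≤ α i := Nat.lt_succ_iff.1 (Finset.mem_range.1 (Fintype.mem_piFinset.1 hβ i))
  rw [Pi.sub_apply, Nat.add_sub_cancel' hle]

lemma totalDegree_zoom_le (g : MvPolynomial (Fin n) ℝ) (lam : ℝ) (x : Fin n → ℝ) :
    (zoom g lam x).totalDegree ≤ g.totalDegree := by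
  rw [zoom, aeval_def, eval₂_eq']
  refine totalDegree_finsetSum_le fun m hm => (totalDegree_mul _ _).trans ?_
  rw [algebraMap_eq, totalDegree_C, zero_add]
  refine (totalDegree_finsetProd _ _).trans (le_trans ?_ (le_totalDegree hm))
  rw [Finsupp.sum_fintype _ _ fun _ => rfl]
  refine Finset.sum_le_sum fun i _ => (totalDegree_pow _ _).trans ?_
  refine mul_le_of_le_one_right (Nat.zero_le _) ((totalDegree_add _ _).trans (max_le ?_ ?_))
  · rw [totalDegree_C]
    exact zero_le_one
  · refine (totalDegree_mul _ _).trans ?_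
    rw [totalDegree_C, totalDegree_X, zero_add]

lemma mvHermiteCoeff_zoom_mvHermite (h0 : 0 ≤ lam) (h1 : lam ≤ 1) (x : Fin n → ℝ)
    (α β : Fin n → ℕ) :
    mvHermiteCoeff β (zoom (mvHermite α) lam x) = if β ∈ Finset.Iic α then
      eval x (mvHermite (α - β)) * zoomCoeff √(1 - lam) √lam β (α - β) else 0 := by
  rw [zoom_mvHermite h0 h1, map_sum]
  simp [mvHermiteCoeff_mvHermite, mul_comm]

lemma mvHermiteCoeff_zoom_eq_sum {D : ℕ} {f : MvPolynomial (Fin n) ℝ} (hf : f.totalDegree ≤ D)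
    (h0 : 0 ≤ lam) (h1 : lam ≤ 1) (x : Fin n → ℝ) (β : Fin n → ℕ) :
    mvHermiteCoeff β (zoom f lam x) = ∑ γ ∈ multiIndicesLE (Fin n) D,
      eval x (mvHermite γ) * (zoomCoeff √(1 - lam) √lam β γ * mvHermiteCoeff (β + γ) f) := by
  have hzoom : zoom f lam x =
      ∑ α ∈ multiIndicesLE (Fin n) D, mvHermiteCoeff α f • zoom (mvHermite α) lam x := by
    conv_lhs => rw [eq_sum_mvHermite hf]
    simp only [zoom, map_sum, map_smul]
  calc mvHermiteCoeff β (zoom f lam x)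
      = ∑ α ∈ multiIndicesLE (Fin n) D with β ∈ Finset.Iic α, mvHermiteCoeff α f *
          (eval x (mvHermite (α - β)) * zoomCoeff √(1 - lam) √lam β (α - β)) := by
        rw [hzoom, map_sum, Finset.sum_filter]
        refine Finset.sum_congr rfl fun α _ => ?_
        rw [map_smul, mvHermiteCoeff_zoom_mvHermite h0 h1, smul_eq_mul, mul_ite, mul_zero]
    _ = ∑ γ ∈ multiIndicesLE (Fin n) D with ∑ i, (β + γ) i ≤ D,
          eval x (mvHermite γ) * (zoomCoeff √(1 - lam) √lam β γ * mvHermiteCoeff (β + γ) f) := by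
        refine Finset.sum_nbij' (fun α => α - β) (fun γ => β + γ) ?_ ?_ ?_ ?_ ?_
        all_goals simp only [Finset.mem_filter, mem_multiIndicesLE, Finset.mem_Iic]
        · exact fun α ⟨hα, hβα⟩ => ⟨(Finset.sum_le_sum fun i _ => Nat.sub_le _ _).trans hα,
            by rwa [add_tsub_cancel_of_le hβα]⟩
        · exact fun γ ⟨_, hγ⟩ => ⟨hγ, le_self_add⟩
        · exact fun α ⟨_, hβα⟩ => add_tsub_cancel_of_le hβα
        · exact fun γ _ => add_tsub_cancel_left _ _
        · intro α ⟨_, hβα⟩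
          rw [add_tsub_cancel_of_le hβα]
          ring
    _ = _ := by
        refine Finset.sum_filter_of_ne fun γ _ hne => ?_
        by_contra! hlt
        rw [mvHermiteCoeff_eq_zero_of_totalDegree_lt (hf.trans_lt hlt)] at hne
        simp at hne

end ZoomExpansion

section MeanSquare

variable {ι Ω : Type*} [Fintype ι] [MeasurableSpace Ω] {μ : Measure Ω} {e : (ι → ℕ) → Ω → ℝ}

/-- The polynomial `x ↦ ∫ (∑ γ ∈ s, e_γ(υ) h_γ(x))² dμ(υ)`; under this reading the `e_γ` must be
square integrable. -/
noncomputable def meanSq (μ : Measure Ω) (s : Finset (ι → ℕ)) (e : (ι → ℕ) → Ω → ℝ) :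
    MvPolynomial ι ℝ :=
  ∑ γ ∈ s, ∑ γ' ∈ s, (∫ υ, e γ υ * e γ' υ ∂μ) • (mvHermite γ * mvHermite γ')

lemma memLp_sum_mvHermite_mul (he : ∀ γ, MemLp (e γ) 2 μ) (s : Finset (ι → ℕ)) (x : ι → ℝ) :
    MemLp (fun υ => ∑ γ ∈ s, eval x (mvHermite γ) * e γ υ) 2 μ :=
  memLp_finsetSum s fun γ _ => (he γ).const_mul _

lemma eval_meanSq (he : ∀ γ, MemLp (e γ) 2 μ) (s : Finset (ι → ℕ)) (x : ι → ℝ) :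
    eval x (meanSq μ s e) = ∫ υ, (∑ γ ∈ s, eval x (mvHermite γ) * e γ υ) ^ 2 ∂μ := by
  have hint (γ γ' : ι → ℕ) : Integrable (fun υ =>
      eval x (mvHermite γ) * eval x (mvHermite γ') * (e γ υ * e γ' υ)) μ :=
    ((he γ).integrable_mul (he γ')).const_mul _
  simp_rw [sq, Finset.sum_mul_sum]
  simp only [mul_mul_mul_comm _ (e _ _)]
  rw [integral_finsetSum _ fun γ _ => integrable_finsetSum _ fun γ' _ => hint γ γ']
  simp_rw [fun γ => integral_finsetSum s fun γ' _ => hint γ γ', integral_const_mul, meanSq,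
    map_sum, smul_eval, map_mul, mul_comm]

lemma eval_meanSq_nonneg (he : ∀ γ, MemLp (e γ) 2 μ) (s : Finset (ι → ℕ)) (x : ι → ℝ) :
    0 ≤ eval x (meanSq μ s e) := by
  rw [eval_meanSq he]
  positivity

lemma totalDegree_meanSq_le {k : ℕ} {s : Finset (ι → ℕ)} (hs : ∀ γ ∈ s, ∑ i, γ i ≤ k) :
    (meanSq μ s e).totalDegree ≤ 2 * k := by
  refine totalDegree_finsetSum_le fun γ hγ => totalDegree_finsetSum_le fun γ' hγ' => ?_
  refine (totalDegree_smul_le _ _).trans ((totalDegree_mul _ _).trans ?_)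
  rw [two_mul]
  exact add_le_add ((totalDegree_mvHermite_le γ).trans (hs γ hγ))
    ((totalDegree_mvHermite_le γ').trans (hs γ' hγ'))

lemma half_eval_meanSq_sub_le [DecidableEq (ι → ℕ)] (he : ∀ γ, MemLp (e γ) 2 μ)
    {s t : Finset (ι → ℕ)} (hst : s ⊆ t) (x : ι → ℝ) :
    eval x (meanSq μ s e) / 2 - eval x (meanSq μ (t \ s) e) ≤ eval x (meanSq μ t e) := by
  have hint (u : Finset (ι → ℕ)) := (memLp_sum_mvHermite_mul he u x).integrable_sq
  simp only [eval_meanSq he]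
  rw [← integral_div, ← integral_sub ((hint s).div_const 2) (hint (t \ s))]
  refine integral_mono (((hint s).div_const 2).sub (hint (t \ s))) (hint t) fun υ => ?_
  dsimp only
  rw [← Finset.sum_sdiff hst]
  set p := ∑ γ ∈ s, eval x (mvHermite γ) * e γ υ
  set q := ∑ γ ∈ t \ s, eval x (mvHermite γ) * e γ υ
  linarith [sq_nonneg (p + 2 * q)]

lemma gaussianExp_meanSq (s : Finset (ι → ℕ)) (e : (ι → ℕ) → Ω → ℝ) :
    gaussianExp (meanSq μ s e) = ∑ γ ∈ s, ∫ υ, e γ υ ^ 2 ∂μ := by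
  simp only [meanSq, map_sum, map_smul, ← mvHermiteCoeff_apply, mvHermiteCoeff_mvHermite,
    smul_eq_mul, mul_ite, mul_one, mul_zero]
  refine Finset.sum_congr rfl fun γ hγ => ?_
  simp_rw [Finset.sum_ite_eq, if_pos hγ, sq]

end MeanSquare

section PolynomialFamilies

lemma support_subset_multiIndicesLE {ι : Type*} [Fintype ι] [DecidableEq ι] {D : ℕ}
    {f : MvPolynomial ι ℝ} (hf : f.totalDegree ≤ D) :
    f.support ⊆ (multiIndicesLE ι D).map Finsupp.equivFunOnFinite.symm.toEmbedding := by
  intro m hm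
  refine Finset.mem_map.2 ⟨m, mem_multiIndicesLE.2 ?_, by simp⟩
  have hle := (le_totalDegree hm).trans hf
  rwa [Finsupp.sum_fintype _ _ fun _ => rfl] at hle

variable {Ω : Type*} [MeasurableSpace Ω] {μ : Measure Ω} {n d : ℕ}
  {g : Ω → MvPolynomial (Fin n) ℝ}

lemma memLp_mvHermiteCoeff (hg : ∀ υ, (g υ).totalDegree ≤ d)
    (hcoeff : ∀ m, MemLp (fun υ => coeff m (g υ)) 2 μ) (α : Fin n → ℕ) :
    MemLp (fun υ => mvHermiteCoeff α (g υ)) 2 μ := by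
  let T := (multiIndicesLE (Fin n) d).map Finsupp.equivFunOnFinite.symm.toEmbedding
  have hsum (υ : Ω) : mvHermiteCoeff α (g υ) =
      ∑ m ∈ T, coeff m (g υ) * mvHermiteCoeff α (monomial m 1) := by
    conv_lhs => rw [(g υ).as_sum, map_sum]
    rw [Finset.sum_subset (support_subset_multiIndicesLE (hg υ)) fun m _ hm => by
      rw [notMem_support_iff.1 hm, map_zero, map_zero]]
    refine Finset.sum_congr rfl fun m _ => ?_
    rw [← smul_eq_mul, ← map_smul, smul_monomial, smul_eq_mul, mul_one]
  simp_rw [hsum]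
  exact memLp_finsetSum T fun m _ => (hcoeff m).mul_const _

/-- The mean square `∫ ĝ_υ(α)² dμ(υ)` of the Hermite coefficients of a family of polynomials. -/
noncomputable def hermiteEnergy (μ : Measure Ω) (g : Ω → MvPolynomial (Fin n) ℝ)
    (α : Fin n → ℕ) : ℝ :=
  ∫ υ, mvHermiteCoeff α (g υ) ^ 2 ∂μ

lemma hermiteEnergy_nonneg (α : Fin n → ℕ) : 0 ≤ hermiteEnergy μ g α := by
  unfold hermiteEnergy
  positivity

lemma hermiteEnergy_eq_zero (hg : ∀ υ, (g υ).totalDegree ≤ d) {α : Fin n → ℕ}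
    (hα : α ∉ multiIndicesLE (Fin n) d) : hermiteEnergy μ g α = 0 := by
  rw [mem_multiIndicesLE, not_le] at hα
  simp [hermiteEnergy, fun υ => mvHermiteCoeff_eq_zero_of_totalDegree_lt ((hg υ).trans_lt hα)]

lemma integral_hyperVarGE_eq_sum (hg : ∀ υ, (g υ).totalDegree ≤ d)
    (hL2 : ∀ α, MemLp (fun υ => mvHermiteCoeff α (g υ)) 2 μ) (R : ℝ) (m : ℕ) :
    ∫ υ, hyperVarGE R m (g υ) ∂μ = ∑ α ∈ multiIndicesLE (Fin n) d with m ≤ ∑ i, α i,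
      R ^ (2 * ∑ i, α i) * hermiteEnergy μ g α := by
  simp_rw [fun υ => hyperVarGE_eq_sum R m (hg υ), ← Finset.sum_filter]
  rw [integral_finsetSum _ fun α _ => (hL2 α).integrable_sq.const_mul _]
  simp_rw [integral_const_mul, hermiteEnergy]

lemma integral_norm2sq_eq_sum (hg : ∀ υ, (g υ).totalDegree ≤ d)
    (hL2 : ∀ α, MemLp (fun υ => mvHermiteCoeff α (g υ)) 2 μ) :
    ∫ υ, norm2sq (g υ) ∂μ = ∑ α ∈ multiIndicesLE (Fin n) d, hermiteEnergy μ g α := by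
  simp_rw [norm2sq_eq_gaussianExp, fun υ => gaussianExp_sq_eq_sum (hg υ)]
  exact integral_finsetSum _ fun α _ => (hL2 α).integrable_sq

/-- The coefficient of `h_γ(x) h_β(y)` in `(g_υ)_{λ|x}(y)`, as a function of `υ`. -/
noncomputable def zoomFamilyCoeff (g : Ω → MvPolynomial (Fin n) ℝ) (lam : ℝ) (β γ : Fin n → ℕ)
    (υ : Ω) : ℝ :=
  zoomCoeff √(1 - lam) √lam β γ * mvHermiteCoeff (β + γ) (g υ)

variable {lam : ℝ}

lemma memLp_zoomFamilyCoeff (hL2 : ∀ α, MemLp (fun υ => mvHermiteCoeff α (g υ)) 2 μ)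
    (β γ : Fin n → ℕ) : MemLp (zoomFamilyCoeff g lam β γ) 2 μ :=
  (hL2 (β + γ)).const_mul _

lemma memLp_mvHermiteCoeff_zoom (hg : ∀ υ, (g υ).totalDegree ≤ d)
    (hL2 : ∀ α, MemLp (fun υ => mvHermiteCoeff α (g υ)) 2 μ) (h0 : 0 ≤ lam) (h1 : lam ≤ 1)
    (x : Fin n → ℝ) (β : Fin n → ℕ) :
    MemLp (fun υ => mvHermiteCoeff β (zoom (g υ) lam x)) 2 μ := by
  simp_rw [fun υ => mvHermiteCoeff_zoom_eq_sum (hg υ) h0 h1 x β]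
  exact memLp_sum_mvHermite_mul (memLp_zoomFamilyCoeff hL2 β) _ x

lemma hermiteEnergy_zoom (hg : ∀ υ, (g υ).totalDegree ≤ d)
    (hL2 : ∀ α, MemLp (fun υ => mvHermiteCoeff α (g υ)) 2 μ) (h0 : 0 ≤ lam) (h1 : lam ≤ 1)
    (x : Fin n → ℝ) (β : Fin n → ℕ) :
    hermiteEnergy μ (fun υ => zoom (g υ) lam x) β =
      eval x (meanSq μ (multiIndicesLE (Fin n) d) (zoomFamilyCoeff g lam β)) := by
  simp_rw [hermiteEnergy, eval_meanSq (memLp_zoomFamilyCoeff hL2 β), zoomFamilyCoeff,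
    fun υ => mvHermiteCoeff_zoom_eq_sum (hg υ) h0 h1 x β]

/-- The polynomial `x ↦ ∫ HyperVar_R[((g_υ)_{λ|x})^{≥m}] dμ(υ)`, for square-integrable `g_υ` of
degree at most `d`. -/
noncomputable def hyperVarZoom (μ : Measure Ω) (g : Ω → MvPolynomial (Fin n) ℝ) (d : ℕ)
    (lam R : ℝ) (m : ℕ) : MvPolynomial (Fin n) ℝ :=
  ∑ β ∈ multiIndicesLE (Fin n) d with m ≤ ∑ i, β i,
    R ^ (2 * ∑ i, β i) • meanSq μ (multiIndicesLE (Fin n) d) (zoomFamilyCoeff g lam β)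

lemma integral_hyperVarGE_zoom (hg : ∀ υ, (g υ).totalDegree ≤ d)
    (hL2 : ∀ α, MemLp (fun υ => mvHermiteCoeff α (g υ)) 2 μ) (h0 : 0 ≤ lam) (h1 : lam ≤ 1)
    (x : Fin n → ℝ) (R : ℝ) (m : ℕ) :
    ∫ υ, hyperVarGE R m (zoom (g υ) lam x) ∂μ = eval x (hyperVarZoom μ g d lam R m) := by
  rw [integral_hyperVarGE_eq_sum (fun υ => (totalDegree_zoom_le _ _ x).trans (hg υ))
    (memLp_mvHermiteCoeff_zoom hg hL2 h0 h1 x), hyperVarZoom, map_sum]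
  simp_rw [smul_eval, hermiteEnergy_zoom hg hL2 h0 h1]

lemma eval_hyperVarZoom_nonneg (hL2 : ∀ α, MemLp (fun υ => mvHermiteCoeff α (g υ)) 2 μ)
    (R : ℝ) (m : ℕ) (x : Fin n → ℝ) : 0 ≤ eval x (hyperVarZoom μ g d lam R m) := by
  rw [hyperVarZoom, map_sum]
  refine Finset.sum_nonneg fun β _ => ?_
  rw [smul_eval, pow_mul]
  exact mul_nonneg (by positivity) (eval_meanSq_nonneg (memLp_zoomFamilyCoeff hL2 β) _ x)

lemma eval_meanSq_le_integral_norm2sq_zoom (hg : ∀ υ, (g υ).totalDegree ≤ d)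
    (hL2 : ∀ α, MemLp (fun υ => mvHermiteCoeff α (g υ)) 2 μ) (h0 : 0 ≤ lam) (h1 : lam ≤ 1)
    (x : Fin n → ℝ) :
    eval x (meanSq μ (multiIndicesLE (Fin n) d) (zoomFamilyCoeff g lam 0)) ≤
      ∫ υ, norm2sq (zoom (g υ) lam x) ∂μ := by
  rw [integral_norm2sq_eq_sum (fun υ => (totalDegree_zoom_le _ _ x).trans (hg υ))
    (memLp_mvHermiteCoeff_zoom hg hL2 h0 h1 x), ← hermiteEnergy_zoom hg hL2 h0 h1]
  exact Finset.single_le_sum (fun β _ => hermiteEnergy_nonneg β) (mem_multiIndicesLE.2 (by simp))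

end PolynomialFamilies

lemma memLp_two_eval_gaussianN {I : ℕ} (p : MvPolynomial (Fin I) ℝ) :
    MemLp (fun υ => eval υ p) 2 (gaussianN I) := by
  refine (memLp_two_iff_integrable_sq p.continuous_eval.aestronglyMeasurable).2 ?_
  simp_rw [← map_pow]
  exact integrable_eval_gaussianPi (p ^ 2)

section ZoomMoments

variable {ι : Type*} [Fintype ι]

/-- The part of the binomial expansion of `(1 + r) ^ |α|` of order at least `m` in `r`. -/
noncomputable def binomTail [DecidableEq ι] (r : ℝ) (m : ℕ) (α : ι → ℕ) : ℝ :=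
  ∑ β ∈ Finset.Iic α with m ≤ ∑ i, β i, (∏ i, ((α i).choose (β i) : ℝ)) * r ^ ∑ i, β i

lemma zoomCoeff_sq {lam : ℝ} (h0 : 0 ≤ lam) (h1 : lam ≤ 1) (β γ : ι → ℕ) :
    zoomCoeff √(1 - lam) √lam β γ ^ 2 =
      (1 - lam) ^ (∑ i, γ i) * ((∏ i, ((β + γ) i).choose (β i) : ℝ) * lam ^ ∑ i, β i) := by
  rw [zoomCoeff, ← Finset.prod_pow, ← Finset.prod_pow_eq_pow_sum, ← Finset.prod_pow_eq_pow_sum,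
    ← Finset.prod_mul_distrib, ← Finset.prod_mul_distrib]
  refine Finset.prod_congr rfl fun i _ => ?_
  rw [mul_pow, mul_pow, pow_right_comm, pow_right_comm √lam, Real.sq_sqrt (by positivity),
    Real.sq_sqrt (by linarith), Real.sq_sqrt h0, Pi.add_apply]
  ring

lemma zoomCoeff_sq_le {lam : ℝ} (h0 : 0 ≤ lam) (h1 : lam ≤ 1) (β γ : ι → ℕ) :
    zoomCoeff √(1 - lam) √lam β γ ^ 2 ≤
      (∏ i, ((β + γ) i).choose (β i) : ℝ) * lam ^ ∑ i, β i := by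
  rw [zoomCoeff_sq h0 h1]
  exact mul_le_of_le_one_left (by positivity) (pow_le_one₀ (by linarith) (by linarith))

variable [DecidableEq ι] {r : ℝ}

lemma sum_Iic_prod_choose (r : ℝ) (α : ι → ℕ) :
    ∑ β ∈ Finset.Iic α, (∏ i, ((α i).choose (β i) : ℝ)) * r ^ (∑ i, β i) =
      (1 + r) ^ (∑ i, α i) := by
  simp_rw [Iic_eq_piFinset_range, ← Finset.prod_pow_eq_pow_sum, ← Finset.prod_mul_distrib,
    add_comm 1 r, add_pow, Finset.prod_univ_sum, one_pow, mul_one, mul_comm]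

lemma binomTail_le_pow (h0 : 0 ≤ r) (h1 : r ≤ 1) (m : ℕ) (α : ι → ℕ) :
    binomTail r m α ≤ 2 ^ (∑ i, α i) * r ^ m := by
  rw [← one_add_one_eq_two, ← sum_Iic_prod_choose, Finset.sum_mul]
  refine (Finset.sum_le_sum fun β hβ => ?_).trans (Finset.sum_le_sum_of_subset_of_nonneg
    (Finset.filter_subset _ _) fun _ _ _ => by positivity)
  rw [one_pow, mul_one]
  exact mul_le_mul_of_nonneg_left (pow_le_pow_of_le_one h0 h1 (Finset.mem_filter.1 hβ).2)
    (by positivity)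

lemma binomTail_le_sub_one (h0 : 0 ≤ r) {m : ℕ} (hm : 1 ≤ m) (α : ι → ℕ) :
    binomTail r m α ≤ (1 + r) ^ (∑ i, α i) - 1 := by
  have hzero : (0 : ι → ℕ) ∈ Finset.Iic α := by simp
  rw [← sum_Iic_prod_choose, ← Finset.sum_erase_add _ _ hzero]
  simp only [Pi.zero_apply, Nat.choose_zero_right, Nat.cast_one, Finset.prod_const_one,
    Finset.sum_const_zero, pow_zero, mul_one, add_sub_cancel_right]
  refine Finset.sum_le_sum_of_subset_of_nonneg (fun β hβ => ?_) fun β _ _ => by positivity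
  obtain ⟨hβα, hmβ⟩ := Finset.mem_filter.1 hβ
  refine Finset.mem_erase.2 ⟨?_, hβα⟩
  rintro rfl
  simp at hmβ
  lia

lemma sum_add_le_sum_filter {s : Finset (ι → ℕ)} {f : (ι → ℕ) → ℝ} (hf : ∀ α, 0 ≤ f α)
    (hfs : ∀ α ∉ s, f α = 0) (β : ι → ℕ) :
    ∑ γ ∈ s, f (β + γ) ≤ ∑ α ∈ s with β ∈ Finset.Iic α, f α := by
  have hinj : Function.Injective (β + ·) := add_right_injective β
  calc ∑ γ ∈ s, f (β + γ) = ∑ γ ∈ s with β + γ ∈ s, f (β + γ) :=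
        (Finset.sum_filter_of_ne fun γ _ hne => by_contra fun h => hne (hfs _ h)).symm
    _ = ∑ α ∈ {γ ∈ s | β + γ ∈ s}.image (β + ·), f α := (Finset.sum_image hinj.injOn).symm
    _ ≤ ∑ α ∈ s with β ∈ Finset.Iic α, f α := by
        refine Finset.sum_le_sum_of_subset_of_nonneg ?_ fun α _ _ => hf α
        refine Finset.image_subset_iff.2 fun γ hγ => Finset.mem_filter.2
          ⟨?_, Finset.mem_Iic.2 le_self_add⟩
        exact (Finset.mem_filter.1 hγ).2

lemma sum_sum_add_le {s : Finset (ι → ℕ)} {w : (ι → ℕ) → ℝ} (hw : ∀ α, 0 ≤ w α)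
    (hws : ∀ α ∉ s, w α = 0) (h0 : 0 ≤ r) (m : ℕ) :
    ∑ β ∈ s with m ≤ ∑ i, β i, ∑ γ ∈ s,
      (∏ i, (((β + γ) i).choose (β i) : ℝ)) * r ^ (∑ i, β i) * w (β + γ) ≤
      ∑ α ∈ s, binomTail r m α * w α := by
  have hF (α β : ι → ℕ) : 0 ≤ (∏ i, ((α i).choose (β i) : ℝ)) * r ^ (∑ i, β i) * w α :=
    mul_nonneg (by positivity) (hw α)
  calc _ ≤ ∑ β ∈ s with m ≤ ∑ i, β i, ∑ α ∈ s with β ∈ Finset.Iic α,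
        (∏ i, ((α i).choose (β i) : ℝ)) * r ^ (∑ i, β i) * w α :=
        Finset.sum_le_sum fun β _ => sum_add_le_sum_filter (hF · β)
          (fun α hα => by rw [hws α hα, mul_zero]) β
    _ = ∑ α ∈ s, ∑ β ∈ s with m ≤ ∑ i, β i ∧ β ∈ Finset.Iic α,
        (∏ i, ((α i).choose (β i) : ℝ)) * r ^ (∑ i, β i) * w α := by
        refine Finset.sum_comm' fun β α => ?_
        simp only [Finset.mem_filter]
        tauto
    _ ≤ _ := by
        refine Finset.sum_le_sum fun α _ => ?_
        rw [binomTail, Finset.sum_mul]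
        refine Finset.sum_le_sum_of_subset_of_nonneg (fun β hβ => ?_) fun β _ _ => hF α β
        obtain ⟨-, hmβ, hβα⟩ := Finset.mem_filter.1 hβ
        exact Finset.mem_filter.2 ⟨hβα, hmβ⟩

end ZoomMoments

lemma sq_gaussianExp_le {ι : Type*} [Fintype ι] (p : MvPolynomial ι ℝ) :
    gaussianExp p ^ 2 ≤ gaussianExp (p ^ 2) := by
  have hvar : 0 ≤ gaussianExp (p ^ 2 - (2 * gaussianExp p) • p + C (gaussianExp p ^ 2)) :=
    gaussianExp_nonneg fun x => by
      simp only [map_add, map_sub, map_pow, smul_eval, eval_C]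
      nlinarith [sq_nonneg (eval x p - gaussianExp p)]
  have hconst : gaussianExp (C (gaussianExp p ^ 2) : MvPolynomial ι ℝ) = gaussianExp p ^ 2 := by
    simp [gaussianExp_apply]
  rw [map_add, map_sub, map_smul, smul_eq_mul, hconst] at hvar
  linarith

/-! ### Choice of parameters -/

section Parameters

lemma one_add_pow_sub_one_le {r : ℝ} (h0 : 0 ≤ r) {d j : ℕ} (hj : j ≤ d) (hd : d * r ≤ 1) :
    (1 + r) ^ j - 1 ≤ 2 * d * r := by
  have hjd : (j : ℝ) * r ≤ d * r := by gcongr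
  have habs : |j * r| = j * r := abs_of_nonneg (by positivity)
  have hexp : (1 + r) ^ j ≤ Real.exp (j * r) := by
    rw [Real.exp_nat_mul]
    exact pow_le_pow_left₀ (by linarith) (by linarith [Real.add_one_le_exp r]) _
  have hlin := (le_abs_self _).trans (Real.abs_exp_sub_one_le (habs.trans_le (hjd.trans hd)))
  rw [habs] at hlin
  linarith

lemma log_three_div_div_four_le {β : ℝ} (h0 : 0 < β) (h1 : β < 1) :
    Real.log (3 / (β / 4)) ≤ 3 * Real.log (3 / β) := by
  have hL := one_lt_log_three_div h0 h1
  have heq : (3 : ℝ) / (β / 4) = 2 ^ 2 * (3 / β) := by ring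
  rw [heq, Real.log_mul (by norm_num) (by positivity), Real.log_pow]
  push_cast
  linarith [Real.log_two_lt_d9]

lemma mul_log_three_div_sq_le {b : ℝ} (h0 : 0 < b) : b * Real.log (3 / b ^ 2) ≤ 2 := by
  rw [Real.log_div (by norm_num) (by positivity), Real.log_pow]
  have hlog3 := Real.log_le_sub_one_of_pos (show (0 : ℝ) < 3 by norm_num)
  have hlogb : b * (1 - b⁻¹) ≤ b * Real.log b := by
    gcongr
    exact Real.one_sub_inv_le_log_of_pos h0
  rw [mul_sub, mul_inv_cancel₀ h0.ne'] at hlogb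
  push_cast
  nlinarith

/-- The small-ball ratio of a mean square of degree `2k` at failure probability `β / 4`. -/
noncomputable def meanSqBallRatio (k : ℕ) (β : ℝ) : ℝ :=
  smallBallRatio (2 * k) (β / 4)

/-- The absolute constant in the lower bound `meanSqBallRatio k β ≥ c β² / (k² log (3 / β))`. -/
noncomputable def meanSqBallConst : ℝ :=
  derivConst / 393216

lemma meanSqBallConst_pos : 0 < meanSqBallConst :=
  div_pos derivConst_pos (by norm_num)

/-- The square root of the constant of the local hyperconcentration theorem. -/
noncomputable def zoomConst : ℝ :=
  384 + 8 / meanSqBallConst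

lemma le_zoomConst : 384 ≤ zoomConst :=
  le_add_of_nonneg_right (div_nonneg (by norm_num) meanSqBallConst_pos.le)

lemma one_le_zoomConst_sq : 1 ≤ zoomConst ^ 2 :=
  one_le_pow₀ (by linarith [le_zoomConst])

lemma le_meanSqBallConst_mul_zoomConst : 8 ≤ meanSqBallConst * zoomConst := by
  have hc := meanSqBallConst_pos
  rw [zoomConst, mul_add, mul_div_cancel₀ _ hc.ne']
  linarith

variable {β : ℝ} {k : ℕ}

lemma div_le_meanSqBallRatio (hk : 1 ≤ k) (h0 : 0 < β) (h1 : β < 1) :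
    meanSqBallConst * β ^ 2 / (k ^ 2 * Real.log (3 / β)) ≤ meanSqBallRatio k β := by
  have hL := one_lt_log_three_div h0 h1
  have hL4 := one_lt_log_three_div (β := β / 4) (by linarith) (by linarith)
  have : (0 : ℝ) < k := by exact_mod_cast hk
  have hc := derivConst_pos
  rw [meanSqBallRatio, smallBallRatio, meanSqBallConst,
    div_le_div_iff₀ (by positivity) (by positivity)]
  push_cast
  calc derivConst / 393216 * β ^ 2 * (2048 * (2 * k : ℝ) ^ 2 * Real.log (3 / (β / 4)))
      ≤ derivConst / 393216 * β ^ 2 * (2048 * (2 * k : ℝ) ^ 2 * (3 * Real.log (3 / β))) := by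
        gcongr
        exact log_three_div_div_four_le h0 h1
    _ = derivConst * (β / 4) ^ 2 * (k ^ 2 * Real.log (3 / β)) := by ring

lemma meanSqBallRatio_pos (hk : 1 ≤ k) (h0 : 0 < β) (h1 : β < 1) : 0 < meanSqBallRatio k β := by
  have hL := one_lt_log_three_div h0 h1
  have : (0 : ℝ) < k := by exact_mod_cast hk
  have hc := meanSqBallConst_pos
  exact lt_of_lt_of_le (by positivity) (div_le_meanSqBallRatio hk h0 h1)

lemma meanSqBallRatio_le_one (hk : 1 ≤ k) (h0 : 0 < β) (h1 : β < 1) : meanSqBallRatio k β ≤ 1 :=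
  smallBallRatio_le_one (by lia) (by linarith) (by linarith)

section Attenuation

variable {S : ℝ}

lemma one_le_of_attenuation_bound (hk : 1 ≤ k) (h0 : 0 < β) (h1 : β < 1)
    (hS : zoomConst ^ 2 * k * Real.log (3 / β) / β ≤ S) : 1 ≤ S := by
  have hL := one_lt_log_three_div h0 h1
  have hk1 : (1 : ℝ) ≤ k := by exact_mod_cast hk
  refine le_trans ?_ hS
  rw [le_div_iff₀ h0, one_mul]
  exact h1.le.trans (one_le_mul_of_one_le_of_one_le
    (one_le_mul_of_one_le_of_one_le one_le_zoomConst_sq hk1) hL.le)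

lemma one_le_meanSqBallRatio_mul_sq (hk : 1 ≤ k) (h0 : 0 < β) (h1 : β < 1)
    (hS : zoomConst ^ 2 * k * Real.log (3 / β) / β ≤ S) : 1 ≤ meanSqBallRatio k β * S ^ 2 := by
  have hL := one_lt_log_three_div h0 h1
  have : (0 : ℝ) < k := by exact_mod_cast hk
  have hA := le_zoomConst
  have hcA := le_meanSqBallConst_mul_zoomConst
  have hAL : 1 ≤ zoomConst ^ 3 * Real.log (3 / β) :=
    one_le_mul_of_one_le_of_one_le (one_le_pow₀ (by linarith)) hL.le
  calc (1 : ℝ) ≤ meanSqBallConst * zoomConst * (zoomConst ^ 3 * Real.log (3 / β)) := by nlinarith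
    _ = meanSqBallConst * β ^ 2 / (k ^ 2 * Real.log (3 / β)) *
          (zoomConst ^ 2 * k * Real.log (3 / β) / β) ^ 2 := by field_simp
    _ ≤ meanSqBallRatio k β * S ^ 2 := by
        gcongr
        · exact (meanSqBallRatio_pos hk h0 h1).le
        · exact div_le_meanSqBallRatio hk h0 h1

lemma le_mul_sq_of_attenuation_bound (hk : 1 ≤ k) (h0 : 0 < β) (h1 : β < 1)
    (hS : zoomConst ^ 2 * k * Real.log (3 / β) / β ≤ S) : 192 ≤ β * S ^ 2 := by
  have hL := one_lt_log_three_div h0 h1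
  have hk1 : (1 : ℝ) ≤ k := by exact_mod_cast hk
  have hkL : 1 ≤ (k * Real.log (3 / β)) ^ 2 :=
    one_le_pow₀ (one_le_mul_of_one_le_of_one_le hk1 hL.le)
  have hA : 192 ≤ zoomConst ^ 4 :=
    le_trans (by norm_num) (pow_le_pow_left₀ (by norm_num) le_zoomConst 4)
  calc (192 : ℝ) ≤ zoomConst ^ 4 * (k * Real.log (3 / β)) ^ 2 := by nlinarith
    _ ≤ zoomConst ^ 4 * (k * Real.log (3 / β)) ^ 2 / β := le_div_self (by positivity) h0 h1.le
    _ = β * (zoomConst ^ 2 * k * Real.log (3 / β) / β) ^ 2 := by field_simp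
    _ ≤ β * S ^ 2 := by gcongr

lemma le_mul_meanSqBallRatio_pow_mul_pow (hk : 1 ≤ k) (h0 : 0 < β) (h1 : β < 1)
    (hS : zoomConst ^ 2 * k * Real.log (3 / β) / β ≤ S) :
    192 ≤ β * meanSqBallRatio k β ^ k * S ^ (2 * (k + 1)) := by
  have hone := one_le_pow₀ (one_le_meanSqBallRatio_mul_sq hk h0 h1 hS) (n := k)
  calc (192 : ℝ) ≤ (meanSqBallRatio k β * S ^ 2) ^ k * (β * S ^ 2) := by
        nlinarith [le_mul_sq_of_attenuation_bound hk h0 h1 hS]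
    _ = β * meanSqBallRatio k β ^ k * S ^ (2 * (k + 1)) := by
        rw [mul_pow (meanSqBallRatio k β), ← pow_mul]
        ring

end Attenuation

section ZoomRate

variable {ε r : ℝ}

lemma two_pow_mul_pow_half_le {t : ℝ} (hε0 : 0 ≤ ε) (hε1 : ε ≤ 1) (ht0 : 0 ≤ t) (ht1 : t ≤ 1)
    (hr0 : 0 ≤ r) (hr : r ≤ ε * t ^ 2) (k : ℕ) :
    2 ^ k * r ^ (k / 2 + 1) ≤ ε * (2 * t) ^ k * t := by
  have hε : ε ^ (k / 2 + 1) ≤ ε := pow_le_of_le_one hε0 hε1 (by lia)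
  have ht : t ^ (2 * (k / 2 + 1)) ≤ t ^ (k + 1) := pow_le_pow_of_le_one ht0 ht1 (by lia)
  calc 2 ^ k * r ^ (k / 2 + 1) ≤ 2 ^ k * (ε * t ^ 2) ^ (k / 2 + 1) := by gcongr
    _ = 2 ^ k * (ε ^ (k / 2 + 1) * t ^ (2 * (k / 2 + 1))) := by rw [mul_pow, ← pow_mul]
    _ ≤ 2 ^ k * (ε * t ^ (k + 1)) := by gcongr
    _ = ε * (2 * t) ^ k * t := by rw [mul_pow 2 t k]; ring

lemma exists_sq_eq_pow_five_div (hk : 1 ≤ k) (h0 : 0 < β) (h1 : β < 1) :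
    ∃ t : ℝ, 0 < t ∧ t ^ 2 = β ^ 5 / (zoomConst ^ 2 * k ^ 4) ∧ t ≤ β / 384 ∧
      2 * t ≤ meanSqBallRatio k β := by
  have hL := one_lt_log_three_div h0 h1
  have hkR : (1 : ℝ) ≤ k := by exact_mod_cast hk
  have hA := le_zoomConst
  have hcA := le_meanSqBallConst_mul_zoomConst
  have hq := div_le_meanSqBallRatio hk h0 h1
  obtain ⟨b, hb0, rfl⟩ : ∃ b : ℝ, 0 < b ∧ β = b ^ 2 :=
    ⟨√β, Real.sqrt_pos.2 h0, (Real.sq_sqrt h0.le).symm⟩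
  have hb1 : b ≤ 1 := (sq_le_one_iff₀ hb0.le).1 h1.le
  have hbL := mul_log_three_div_sq_le hb0
  refine ⟨b ^ 5 / (zoomConst * k ^ 2), by positivity, by field_simp, ?_, le_trans ?_ hq⟩
  · refine div_le_div₀ (by positivity) (pow_le_pow_of_le_one hb0.le hb1 (by norm_num))
      (by norm_num) ?_
    nlinarith [one_le_pow₀ hkR (n := 2)]
  · rw [← mul_div_assoc, div_le_div_iff₀ (by positivity) (by positivity)]
    calc 2 * b ^ 5 * (k ^ 2 * Real.log (3 / b ^ 2))
        = 2 * (b * Real.log (3 / b ^ 2)) * (b ^ 4 * k ^ 2) := by ring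
      _ ≤ meanSqBallConst * zoomConst * (b ^ 4 * k ^ 2) := by
          gcongr ?_ * _
          linarith
      _ = meanSqBallConst * (b ^ 2) ^ 2 * (zoomConst * k ^ 2) := by ring

lemma two_pow_mul_pow_half_le_meanSqBallRatio_pow (hk : 1 ≤ k) (h0 : 0 < β) (h1 : β < 1)
    (hε0 : 0 ≤ ε) (hε1 : ε ≤ 1) (hr0 : 0 ≤ r) (hr : r ≤ ε * β ^ 5 / (zoomConst ^ 2 * k ^ 4)) :
    2 ^ k * r ^ (k / 2 + 1) ≤ ε * β * meanSqBallRatio k β ^ k / 384 := by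
  obtain ⟨t, ht0, htsq, htβ, htq⟩ := exists_sq_eq_pow_five_div hk h0 h1
  rw [mul_div_assoc, ← htsq] at hr
  calc 2 ^ k * r ^ (k / 2 + 1) ≤ ε * (2 * t) ^ k * t :=
        two_pow_mul_pow_half_le hε0 hε1 ht0.le (by linarith) hr0 hr k
    _ ≤ ε * meanSqBallRatio k β ^ k * (β / 384) := by
        have hq := meanSqBallRatio_pos hk h0 h1
        gcongr
    _ = ε * β * meanSqBallRatio k β ^ k / 384 := by ring

variable {d : ℕ} {R lam : ℝ}

lemma natCast_mul_le_of_zoom_bound (hk : 1 ≤ k) (hkd : k ≤ d) (hR : 1 ≤ R)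
    (hlam : lam ≤ ε * β ^ 5 / (zoomConst ^ 2 * R ^ 2 * k ^ 3 * d)) :
    d * (lam * R ^ 2) ≤ ε * β ^ 5 / (zoomConst ^ 2 * k ^ 3) := by
  have : (0 : ℝ) < k := by exact_mod_cast hk
  have hd : (0 : ℝ) < d := by exact_mod_cast hk.trans hkd
  have hA := le_zoomConst
  calc d * (lam * R ^ 2)
      ≤ d * (ε * β ^ 5 / (zoomConst ^ 2 * R ^ 2 * k ^ 3 * d) * R ^ 2) := by gcongr
    _ = ε * β ^ 5 / (zoomConst ^ 2 * k ^ 3) := by field_simp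

lemma natCast_mul_le_div_four (hk : 1 ≤ k) (hkd : k ≤ d) (h0 : 0 < β) (h1 : β < 1)
    (hε0 : 0 ≤ ε) (hR : 1 ≤ R)
    (hlam : lam ≤ ε * β ^ 5 / (zoomConst ^ 2 * R ^ 2 * k ^ 3 * d)) :
    d * (lam * R ^ 2) ≤ ε / 4 := by
  have hk1 : (1 : ℝ) ≤ k := by exact_mod_cast hk
  have hA : 4 ≤ zoomConst ^ 2 := by nlinarith [le_zoomConst]
  refine (natCast_mul_le_of_zoom_bound hk hkd hR hlam).trans (div_le_div₀ hε0
    (mul_le_of_le_one_right hε0 (pow_le_one₀ h0.le h1.le)) (by norm_num) ?_)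
  nlinarith [one_le_pow₀ hk1 (n := 3)]

lemma mul_sq_le_div_of_zoom_bound (hk : 1 ≤ k) (hkd : k ≤ d) (hR : 1 ≤ R) (hlam0 : 0 ≤ lam)
    (hlam : lam ≤ ε * β ^ 5 / (zoomConst ^ 2 * R ^ 2 * k ^ 3 * d)) :
    lam * R ^ 2 ≤ ε * β ^ 5 / (zoomConst ^ 2 * k ^ 4) := by
  have : (0 : ℝ) < k := by exact_mod_cast hk
  have hkd' : (k : ℝ) ≤ d := by exact_mod_cast hkd
  have hA := le_zoomConst
  have hd := natCast_mul_le_of_zoom_bound hk hkd hR hlam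
  rw [le_div_iff₀ (by positivity)] at hd ⊢
  calc lam * R ^ 2 * (zoomConst ^ 2 * k ^ 4)
      = k * (lam * R ^ 2) * (zoomConst ^ 2 * k ^ 3) := by ring
    _ ≤ d * (lam * R ^ 2) * (zoomConst ^ 2 * k ^ 3) := by gcongr
    _ ≤ ε * β ^ 5 := hd

lemma natCast_mul_le_one_div_four (hk : 1 ≤ k) (hkd : k ≤ d) (h0 : 0 < β) (h1 : β < 1)
    (hε0 : 0 ≤ ε) (hε1 : ε ≤ 1) (hR : 1 ≤ R) (hlam0 : 0 ≤ lam)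
    (hlam : lam ≤ ε * β ^ 5 / (zoomConst ^ 2 * R ^ 2 * k ^ 3 * d)) : k * lam ≤ 1 / 4 :=
  calc k * lam ≤ d * (lam * R ^ 2) := by
        gcongr
        exact le_mul_of_one_le_right hlam0 (one_le_pow₀ hR)
    _ ≤ 1 / 4 := by linarith [natCast_mul_le_div_four hk hkd h0 h1 hε0 hR hlam]

lemma le_one_of_zoom_bound (hk : 1 ≤ k) (hkd : k ≤ d) (h0 : 0 < β) (h1 : β < 1)
    (hε0 : 0 ≤ ε) (hε1 : ε ≤ 1) (hR : 1 ≤ R) (hlam0 : 0 ≤ lam)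
    (hlam : lam ≤ ε * β ^ 5 / (zoomConst ^ 2 * R ^ 2 * k ^ 3 * d)) : lam ≤ 1 := by
  have hk1 : (1 : ℝ) ≤ k := by exact_mod_cast hk
  linarith [natCast_mul_le_one_div_four hk hkd h0 h1 hε0 hε1 hR hlam0 hlam,
    le_mul_of_one_le_left hlam0 hk1]

end ZoomRate

end Parameters

section LevelWeights

variable {ι : Type*} [Fintype ι] [DecidableEq ι]

lemma multiIndicesLE_mono : Monotone (multiIndicesLE ι) := fun _ _ h _ hα =>
  mem_multiIndicesLE.2 ((mem_multiIndicesLE.1 hα).trans h)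

/-- The total of the weights `w α` over the levels `|α| ≤ d`. -/
def totalWeight (w : (ι → ℕ) → ℝ) (d : ℕ) : ℝ :=
  ∑ α ∈ multiIndicesLE ι d, w α

/-- The total of the weights `w α` over the levels `k < |α| ≤ d`. -/
def highWeight (w : (ι → ℕ) → ℝ) (k d : ℕ) : ℝ :=
  ∑ α ∈ multiIndicesLE ι d \ multiIndicesLE ι k, w α

variable {w : (ι → ℕ) → ℝ} {k d : ℕ}

lemma totalWeight_nonneg (hw : ∀ α, 0 ≤ w α) : 0 ≤ totalWeight w d :=
  Finset.sum_nonneg fun α _ => hw α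

lemma highWeight_nonneg (hw : ∀ α, 0 ≤ w α) : 0 ≤ highWeight w k d :=
  Finset.sum_nonneg fun α _ => hw α

lemma totalWeight_mono (hw : ∀ α, 0 ≤ w α) : Monotone (totalWeight w) := fun _ _ h =>
  Finset.sum_le_sum_of_subset_of_nonneg (multiIndicesLE_mono h) fun α _ _ => hw α

lemma highWeight_add_totalWeight (hkd : k ≤ d) :
    highWeight w k d + totalWeight w k = totalWeight w d :=
  Finset.sum_sdiff (multiIndicesLE_mono hkd)

lemma highWeight_mul_pow_le (hw : ∀ α, 0 ≤ w α) {S : ℝ} (hS : 1 ≤ S) :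
    highWeight w k d * S ^ (2 * (k + 1)) ≤
      ∑ α ∈ multiIndicesLE ι d with k + 1 ≤ ∑ i, α i, S ^ (2 * ∑ i, α i) * w α := by
  have hsdiff : multiIndicesLE ι d \ multiIndicesLE ι k =
      {α ∈ multiIndicesLE ι d | k + 1 ≤ ∑ i, α i} := by
    ext α
    simp only [Finset.mem_sdiff, Finset.mem_filter, mem_multiIndicesLE]
    lia
  rw [highWeight, hsdiff, Finset.sum_mul]
  refine Finset.sum_le_sum fun α hα => ?_
  rw [mul_comm]
  exact mul_le_mul_of_nonneg_right
    (pow_le_pow_right₀ hS (Nat.mul_le_mul_left 2 (Finset.mem_filter.1 hα).2)) (hw α)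

lemma sum_binomTail_mul_le (hw : ∀ α, 0 ≤ w α) (hkd : k ≤ d) {r : ℝ} (h0 : 0 ≤ r) (h1 : r ≤ 1)
    (hd : d * r ≤ 1) {m : ℕ} (hm : 1 ≤ m) :
    ∑ α ∈ multiIndicesLE ι d, binomTail r m α * w α ≤
      2 ^ k * r ^ m * totalWeight w d + 2 * d * r * highWeight w k d := by
  rw [← Finset.sum_sdiff (multiIndicesLE_mono hkd), add_comm]
  refine add_le_add ?_ ?_
  · refine le_trans ?_ (mul_le_mul_of_nonneg_left (totalWeight_mono hw hkd) (by positivity))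
    rw [totalWeight, Finset.mul_sum]
    refine Finset.sum_le_sum fun α hα => mul_le_mul_of_nonneg_right ?_ (hw α)
    refine (binomTail_le_pow h0 h1 m α).trans ?_
    gcongr
    · exact one_le_two
    · exact mem_multiIndicesLE.1 hα
  · rw [highWeight, Finset.mul_sum]
    refine Finset.sum_le_sum fun α hα => mul_le_mul_of_nonneg_right ?_ (hw α)
    exact (binomTail_le_sub_one h0 hm α).trans
      (one_add_pow_sub_one_le h0 (mem_multiIndicesLE.1 (Finset.mem_sdiff.1 hα).1) hd)

end LevelWeights

section ZoomMeans

variable {Ω : Type*} [MeasurableSpace Ω] {μ : Measure Ω} {n d k : ℕ}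
  {g : Ω → MvPolynomial (Fin n) ℝ} {lam : ℝ}

lemma integral_zoomFamilyCoeff_sq (β γ : Fin n → ℕ) :
    ∫ υ, zoomFamilyCoeff g lam β γ υ ^ 2 ∂μ =
      zoomCoeff √(1 - lam) √lam β γ ^ 2 * hermiteEnergy μ g (β + γ) := by
  simp_rw [zoomFamilyCoeff, mul_pow, integral_const_mul, hermiteEnergy]

lemma gaussianExp_hyperVarZoom_le (hg : ∀ υ, (g υ).totalDegree ≤ d) (h0 : 0 ≤ lam) (h1 : lam ≤ 1)
    (R : ℝ) (m : ℕ) : gaussianExp (hyperVarZoom μ g d lam R m) ≤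
      ∑ α ∈ multiIndicesLE (Fin n) d, binomTail (lam * R ^ 2) m α * hermiteEnergy μ g α := by
  refine le_trans ?_ (sum_sum_add_le hermiteEnergy_nonneg
    (fun α hα => hermiteEnergy_eq_zero hg hα) (by positivity) m)
  rw [hyperVarZoom, map_sum]
  refine Finset.sum_le_sum fun β _ => ?_
  rw [map_smul, smul_eq_mul, gaussianExp_meanSq, Finset.mul_sum]
  refine Finset.sum_le_sum fun γ _ => ?_
  rw [integral_zoomFamilyCoeff_sq, ← mul_assoc]
  refine mul_le_mul_of_nonneg_right ?_ (hermiteEnergy_nonneg _)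
  calc R ^ (2 * ∑ i, β i) * zoomCoeff √(1 - lam) √lam β γ ^ 2
      ≤ R ^ (2 * ∑ i, β i) * ((∏ i, (((β + γ) i).choose (β i) : ℝ)) * lam ^ (∑ i, β i)) :=
        mul_le_mul_of_nonneg_left (zoomCoeff_sq_le h0 h1 β γ) (by rw [pow_mul]; positivity)
    _ = (∏ i, (((β + γ) i).choose (β i) : ℝ)) * (lam * R ^ 2) ^ (∑ i, β i) := by
        rw [mul_pow lam, pow_mul]
        ring

lemma gaussianExp_meanSq_zoomFamilyCoeff_zero (h0 : 0 ≤ lam) (h1 : lam ≤ 1)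
    (s : Finset (Fin n → ℕ)) : gaussianExp (meanSq μ s (zoomFamilyCoeff g lam 0)) =
      ∑ γ ∈ s, (1 - lam) ^ (∑ i, γ i) * hermiteEnergy μ g γ := by
  rw [gaussianExp_meanSq]
  refine Finset.sum_congr rfl fun γ _ => ?_
  rw [integral_zoomFamilyCoeff_sq, zoomCoeff_sq h0 h1]
  simp

lemma gaussianExp_meanSq_high_le (h0 : 0 ≤ lam) (h1 : lam ≤ 1) :
    gaussianExp (meanSq μ (multiIndicesLE (Fin n) d \ multiIndicesLE (Fin n) k)
      (zoomFamilyCoeff g lam 0)) ≤ highWeight (hermiteEnergy μ g) k d := by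
  rw [gaussianExp_meanSq_zoomFamilyCoeff_zero h0 h1]
  exact Finset.sum_le_sum fun γ _ => mul_le_of_le_one_left (hermiteEnergy_nonneg γ)
    (pow_le_one₀ (by linarith) (by linarith))

lemma le_gaussianExp_meanSq_low (h0 : 0 ≤ lam) (h1 : lam ≤ 1) :
    (1 - lam) ^ k * totalWeight (hermiteEnergy μ g) k ≤
      gaussianExp (meanSq μ (multiIndicesLE (Fin n) k) (zoomFamilyCoeff g lam 0)) := by
  rw [gaussianExp_meanSq_zoomFamilyCoeff_zero h0 h1, totalWeight, Finset.mul_sum]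
  exact Finset.sum_le_sum fun γ hγ => mul_le_mul_of_nonneg_right
    (pow_le_pow_of_le_one (by linarith) (by linarith) (mem_multiIndicesLE.1 hγ))
    (hermiteEnergy_nonneg γ)

lemma div_four_le_gaussianExp_meanSq_low (hkd : k ≤ d) (h0 : 0 ≤ lam) (h1 : lam ≤ 1)
    (hk : k * lam ≤ 1 / 2)
    (hhigh : highWeight (hermiteEnergy μ g) k d ≤ totalWeight (hermiteEnergy μ g) d / 2) :
    totalWeight (hermiteEnergy μ g) d / 4 ≤
      gaussianExp (meanSq μ (multiIndicesLE (Fin n) k) (zoomFamilyCoeff g lam 0)) := by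
  have hbernoulli : 1 / 2 ≤ (1 - lam) ^ k := by
    have hle := one_add_mul_le_pow (show (-2 : ℝ) ≤ -lam by linarith) k
    rw [← sub_eq_add_neg] at hle
    linarith
  refine le_trans ?_ (le_gaussianExp_meanSq_low h0 h1)
  have hlow := highWeight_add_totalWeight (w := hermiteEnergy μ g) hkd
  nlinarith [totalWeight_nonneg (hermiteEnergy_nonneg (μ := μ) (g := g)) (d := k)]

lemma measure_meanSq_lt_le {β N : ℝ} (hk : 1 ≤ k) (hβ0 : 0 < β) (hβ1 : β < 1)
    {e : (Fin n → ℕ) → Ω → ℝ} (he : ∀ γ, MemLp (e γ) 2 μ) (hN : 0 ≤ N)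
    (hmean : N / 4 ≤ gaussianExp (meanSq μ (multiIndicesLE (Fin n) k) e)) :
    gaussianPi (Fin n) {x | eval x (meanSq μ (multiIndicesLE (Fin n) k) e) <
      meanSqBallRatio k β ^ k / 12 * N} ≤ ENNReal.ofReal (β / 4) := by
  set f := meanSq μ (multiIndicesLE (Fin n) k) e
  have hq := meanSqBallRatio_pos hk hβ0 hβ1
  have hsq : N ^ 2 / 16 ≤ gaussianExp (f ^ 2) :=
    calc N ^ 2 / 16 = (N / 4) ^ 2 := by ring
      _ ≤ gaussianExp f ^ 2 := by gcongr
      _ ≤ gaussianExp (f ^ 2) := sq_gaussianExp_le f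
  have hdeg : f.totalDegree ≤ 2 * k := totalDegree_meanSq_le fun γ hγ => mem_multiIndicesLE.1 hγ
  refine le_trans (measure_mono fun x (hx : eval x f < _) => ?_)
    (measure_eval_sq_lt_le (by lia) hdeg (by linarith) (by linarith))
  calc eval x f ^ 2 < (meanSqBallRatio k β ^ k / 12 * N) ^ 2 :=
        pow_lt_pow_left₀ hx (eval_meanSq_nonneg he _ x) two_ne_zero
    _ = meanSqBallRatio k β ^ (2 * k) / 9 * (N ^ 2 / 16) := by ring
    _ ≤ meanSqBallRatio k β ^ (2 * k) / 8 * gaussianExp (f ^ 2) := by gcongr; norm_num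

end ZoomMeans

/-! ### Local hyperconcentration -/

section BadEvents

variable {ι : Type*} [Fintype ι] {num : MvPolynomial ι ℝ} {φ : (ι → ℝ) → ℝ} {ε : ℝ}

lemma measure_not_eval_le_eq_zero (hnum : ∀ x, 0 ≤ eval x num) (hexp : gaussianExp num ≤ 0)
    (hε : 0 ≤ ε) (hφ : ∀ x, 0 ≤ φ x) : gaussianPi ι {x | ¬ eval x num ≤ ε * φ x} = 0 := by
  have hzero : (fun x => eval x num) =ᵐ[gaussianPi ι] 0 :=
    (integral_eq_zero_iff_of_nonneg hnum (integrable_eval_gaussianPi num)).1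
      (le_antisymm (by rwa [← gaussianExp_apply]) (integral_nonneg hnum))
  refine ae_iff.1 (hzero.mono fun x hx => ?_)
  exact hx.trans_le (mul_nonneg hε (hφ x))

lemma measure_not_eval_le_le {low high : MvPolynomial ι ℝ} {β t : ℝ}
    (hnum : ∀ x, 0 ≤ eval x num) (hhigh : ∀ x, 0 ≤ eval x high)
    (hφ : ∀ x, eval x low / 2 - eval x high ≤ φ x) (hβ : 0 ≤ β) (hε : 0 < ε) (ht : 0 < t)
    (hlow : gaussianPi ι {x | eval x low < 4 * t} ≤ ENNReal.ofReal (β / 4))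
    (hhighExp : gaussianExp high ≤ β / 4 * t) (hnumExp : gaussianExp num ≤ β / 4 * (ε * t)) :
    gaussianPi ι {x | ¬ eval x num ≤ ε * φ x} ≤ ENNReal.ofReal β := by
  have hsub : {x | ¬ eval x num ≤ ε * φ x} ⊆
      {x | eval x low < 4 * t} ∪ ({x | t ≤ eval x high} ∪ {x | ε * t ≤ eval x num}) := by
    intro x (hx : ¬ eval x num ≤ ε * φ x)
    change eval x low < 4 * t ∨ t ≤ eval x high ∨ ε * t ≤ eval x num
    contrapose! hx
    obtain ⟨hxlow, hxhigh, hxnum⟩ := hx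
    exact hxnum.le.trans (mul_le_mul_of_nonneg_left (by linarith [hφ x]) hε.le)
  refine (measure_mono hsub).trans ((measure_union_le _ _).trans
    ((add_le_add hlow ((measure_union_le _ _).trans (add_le_add
      (measure_le_eval_le hhigh ht hhighExp)
      (measure_le_eval_le hnum (mul_pos hε ht) hnumExp)))).trans ?_))
  rw [← ENNReal.ofReal_add (by positivity) (by positivity),
    ← ENNReal.ofReal_add (by positivity) (by positivity)]
  exact ENNReal.ofReal_le_ofReal (by linarith)

end BadEvents

section LocalHyperconcentration

variable {Ω : Type*} [MeasurableSpace Ω] {μ : Measure Ω} {n d k : ℕ}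
  {g : Ω → MvPolynomial (Fin n) ℝ} {S R β ε lam : ℝ}

lemma highWeight_le_of_attenuation {ι : Type*} [Fintype ι] [DecidableEq ι] {w : (ι → ℕ) → ℝ}
    (hk : 1 ≤ k) (hw : ∀ α, 0 ≤ w α) (h0 : 0 < β) (h1 : β < 1)
    (hS : zoomConst ^ 2 * k * Real.log (3 / β) / β ≤ S)
    (hatt : highWeight w k d * S ^ (2 * (k + 1)) ≤ totalWeight w d) :
    highWeight w k d ≤ β * meanSqBallRatio k β ^ k * totalWeight w d / 192 := by
  have hq := meanSqBallRatio_pos hk h0 h1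
  have hW := highWeight_nonneg (k := k) (d := d) hw
  rw [le_div_iff₀ (by norm_num)]
  calc highWeight w k d * 192
      ≤ highWeight w k d * (β * meanSqBallRatio k β ^ k * S ^ (2 * (k + 1))) := by
        gcongr
        exact le_mul_meanSqBallRatio_pow_mul_pow hk h0 h1 hS
    _ = β * meanSqBallRatio k β ^ k * (highWeight w k d * S ^ (2 * (k + 1))) := by ring
    _ ≤ β * meanSqBallRatio k β ^ k * totalWeight w d := by gcongr

lemma mul_totalWeight_div_le_half {ι : Type*} [Fintype ι] [DecidableEq ι] {w : (ι → ℕ) → ℝ}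
    (hk : 1 ≤ k) (hw : ∀ α, 0 ≤ w α) (h0 : 0 < β) (h1 : β < 1) :
    β * meanSqBallRatio k β ^ k * totalWeight w d / 192 ≤ totalWeight w d / 2 := by
  have hq := meanSqBallRatio_pos hk h0 h1
  have hqk := pow_le_one₀ hq.le (meanSqBallRatio_le_one hk h0 h1) (n := k)
  have hN := totalWeight_nonneg (d := d) hw
  have hle := mul_le_of_le_one_left hN (mul_le_one₀ h1.le (by positivity) hqk)
  linarith

lemma gaussianExp_hyperVarZoom_le_of_attenuation (hk : 1 ≤ k) (hkd : k ≤ d)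
    (hg : ∀ υ, (g υ).totalDegree ≤ d) (hR : 1 ≤ R) (h0 : 0 < β) (h1 : β < 1) (hε0 : 0 < ε)
    (hε1 : ε ≤ 1) (hlam0 : 0 ≤ lam)
    (hlam : lam ≤ ε * β ^ 5 / (zoomConst ^ 2 * R ^ 2 * k ^ 3 * d))
    (hhigh : highWeight (hermiteEnergy μ g) k d ≤
      β * meanSqBallRatio k β ^ k * totalWeight (hermiteEnergy μ g) d / 192) :
    gaussianExp (hyperVarZoom μ g d lam R (k / 2 + 1)) ≤
      ε * (β * meanSqBallRatio k β ^ k * totalWeight (hermiteEnergy μ g) d / 192) := by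
  have hlam1 := le_one_of_zoom_bound hk hkd h0 h1 hε0.le hε1 hR hlam0 hlam
  have hr0 : 0 ≤ lam * R ^ 2 := by positivity
  have hdr := natCast_mul_le_div_four hk hkd h0 h1 hε0.le hR hlam
  have hd : (1 : ℝ) ≤ d := by exact_mod_cast hk.trans hkd
  have hlow := two_pow_mul_pow_half_le_meanSqBallRatio_pow hk h0 h1 hε0.le hε1 hr0
    (mul_sq_le_div_of_zoom_bound hk hkd hR hlam0 hlam)
  have hN := totalWeight_nonneg (d := d) (hermiteEnergy_nonneg (μ := μ) (g := g))
  have hW := highWeight_nonneg (k := k) (d := d) (hermiteEnergy_nonneg (μ := μ) (g := g))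
  refine (gaussianExp_hyperVarZoom_le hg hlam0 hlam1 R _).trans
    ((sum_binomTail_mul_le hermiteEnergy_nonneg hkd hr0 (by nlinarith) (by linarith)
      (by lia)).trans ?_)
  nlinarith [mul_le_mul_of_nonneg_right hlow hN, mul_le_mul_of_nonneg_right hdr hW]

lemma measure_not_attenuated_le (hk : 1 ≤ k) (hkd : k ≤ d) (hg : ∀ υ, (g υ).totalDegree ≤ d)
    (hL2 : ∀ α, MemLp (fun υ => mvHermiteCoeff α (g υ)) 2 μ) (hR : 1 ≤ R) (h0 : 0 < β)
    (h1 : β < 1) (hε0 : 0 < ε) (hε1 : ε ≤ 1) (hlam0 : 0 ≤ lam)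
    (hlam : lam ≤ ε * β ^ 5 / (zoomConst ^ 2 * R ^ 2 * k ^ 3 * d))
    (hhigh : highWeight (hermiteEnergy μ g) k d ≤
      β * meanSqBallRatio k β ^ k * totalWeight (hermiteEnergy μ g) d / 192) :
    gaussianPi (Fin n) {x | ¬ eval x (hyperVarZoom μ g d lam R (k / 2 + 1)) ≤
      ε * ∫ υ, norm2sq (zoom (g υ) lam x) ∂μ} ≤ ENNReal.ofReal β := by
  have hw : ∀ α, 0 ≤ hermiteEnergy μ g α := hermiteEnergy_nonneg
  have hklam := natCast_mul_le_one_div_four hk hkd h0 h1 hε0.le hε1 hR hlam0 hlam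
  have hlam1 := le_one_of_zoom_bound hk hkd h0 h1 hε0.le hε1 hR hlam0 hlam
  have hnum := gaussianExp_hyperVarZoom_le_of_attenuation hk hkd hg hR h0 h1 hε0 hε1 hlam0 hlam
    hhigh
  have he := memLp_zoomFamilyCoeff (lam := lam) hL2 0
  have hq := meanSqBallRatio_pos hk h0 h1
  rcases (totalWeight_nonneg (d := d) hw).eq_or_lt with hN | hN
  · rw [← hN, mul_zero, zero_div, mul_zero] at hnum
    rw [measure_not_eval_le_eq_zero (eval_hyperVarZoom_nonneg hL2 R _) hnum hε0.le fun x =>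
      (eval_meanSq_nonneg he _ x).trans (eval_meanSq_le_integral_norm2sq_zoom hg hL2 hlam0 hlam1 x)]
    exact zero_le
  · refine measure_not_eval_le_le (eval_hyperVarZoom_nonneg hL2 R _) (eval_meanSq_nonneg he _)
      (fun x => (half_eval_meanSq_sub_le he (multiIndicesLE_mono hkd) x).trans
        (eval_meanSq_le_integral_norm2sq_zoom hg hL2 hlam0 hlam1 x)) h0.le hε0
      (t := meanSqBallRatio k β ^ k * totalWeight (hermiteEnergy μ g) d / 48) (by positivity) ?_
      ((gaussianExp_meanSq_high_le hlam0 hlam1).trans (by linarith)) (by linarith)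
    have hlow := measure_meanSq_lt_le hk h0 h1 he hN.le (div_four_le_gaussianExp_meanSq_low hkd
      hlam0 hlam1 (by linarith) (hhigh.trans (mul_totalWeight_div_le_half hk hw h0 h1)))
    exact (measure_mono fun x (hx : eval x _ < 4 * _) => hx.trans_eq (by ring)).trans hlow

end LocalHyperconcentration

theorem one_stage_local_hyperconcentration_general :
    ∃ C : ℝ, 1 ≤ C ∧ ∀ {Ω : Type*} [MeasurableSpace Ω] (μ : Measure Ω) (n d k : ℕ),
      1 ≤ k → k ≤ d → ∀ g : Ω → MvPolynomial (Fin n) ℝ, (∀ υ, (g υ).totalDegree ≤ d) →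
      (∀ m, MemLp (fun υ => coeff m (g υ)) 2 μ) →
      ∀ S R β ε lam : ℝ, 1 ≤ R → 0 < β → β < 1 → 0 < ε → ε ≤ 1 →
      ∫ υ, hyperVarGE S (k + 1) (g υ) ∂μ ≤ ∫ υ, norm2sq (g υ) ∂μ →
      C * k * Real.log (3 / β) / β ≤ S →
      0 ≤ lam → lam ≤ ε * β ^ 5 / (C * R ^ 2 * k ^ 3 * d) →
      gaussianN n {x | ¬ ∫ υ, hyperVarGE R (k / 2 + 1) (zoom (g υ) lam x) ∂μ ≤
        ε * ∫ υ, norm2sq (zoom (g υ) lam x) ∂μ} ≤ ENNReal.ofReal β := by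
  refine ⟨zoomConst ^ 2, one_le_zoomConst_sq, ?_⟩
  intro Ω _ μ n d k hk hkd g hg hcoeff S R β ε lam hR h0 h1 hε0 hε1 hatt hS hlam0 hlam
  have hL2 := memLp_mvHermiteCoeff hg hcoeff
  rw [integral_hyperVarGE_eq_sum hg hL2, integral_norm2sq_eq_sum hg hL2] at hatt
  have hhigh := highWeight_le_of_attenuation hk hermiteEnergy_nonneg h0 h1 hS
    ((highWeight_mul_pow_le hermiteEnergy_nonneg
      (one_le_of_attenuation_bound hk h0 h1 hS)).trans hatt)
  have hlam1 := le_one_of_zoom_bound hk hkd h0 h1 hε0.le hε1 hR hlam0 hlam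
  simp_rw [fun x => integral_hyperVarGE_zoom hg hL2 hlam0 hlam1 x]
  exact measure_not_attenuated_le hk hkd hg hL2 hR h0 h1 hε0 hε1 hlam0 hlam hhigh

/-- One-stage local hyperconcentration theorem: there is a universal constant `C` such
that if a nice distribution `(g_υ)` of degree-`d` polynomials is `(k,S,1)`-attenuated
on average for some `1 ≤ k ≤ d`, then for `R' ≥ 1`, `0 < β' < 1`, `0 < ε' ≤ 1`,
`S ≥ C·k·log(3/β')/β'` and `0 ≤ λ ≤ ε'·β'⁵/(C·R'²·k³·d)`, for `x ∼ N(0,1)^n`, except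
with probability at most `β'`, the family `((g_υ)_{λ|x})_υ` is
`(⌊k/2⌋, R', ε')`-attenuated on average.  Here `HyperVar_R[g^{>k}]` is encoded as
`hyperVarGE R (k+1) g` (the Hermite sum over levels `|α| > k`). -/
theorem one_stage_local_hyperconcentration :
    ∃ C : ℝ, 1 ≤ C ∧
      ∀ (n I d k : ℕ), 1 ≤ k → k ≤ d →
      ∀ g : (Fin I → ℝ) → MvPolynomial (Fin n) ℝ, NiceFamily n I d g →
      ∀ S R' β' ε' lam : ℝ, 1 ≤ R' → 0 < β' → β' < 1 → 0 < ε' → ε' ≤ 1 →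
      (∫ υ, hyperVarGE S (k + 1) (g υ) ∂(gaussianN I)) ≤
          (∫ υ, norm2sq (g υ) ∂(gaussianN I)) →
      C * k * Real.log (3 / β') / β' ≤ S →
      0 ≤ lam → lam ≤ ε' * β' ^ 5 / (C * R' ^ 2 * k ^ 3 * d) →
      gaussianN n {x | ¬ ((∫ υ, hyperVarGE R' (k / 2 + 1) (zoom (g υ) lam x) ∂(gaussianN I)) ≤
          ε' * ∫ υ, norm2sq (zoom (g υ) lam x) ∂(gaussianN I))} ≤ ENNReal.ofReal β' := by
  obtain ⟨C, hC, h⟩ := one_stage_local_hyperconcentration_general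
  refine ⟨C, hC, fun n I d k hk hkd g hg => h (gaussianN I) n d k hk hkd g hg.1 fun m => ?_⟩
  obtain ⟨P, -, hP⟩ := hg.2 m
  simpa only [hP] using memLp_two_eval_gaussianN P
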